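/- arXiv:1307.1956 — 2 statements merged into one kernel-verified Lean document; each statement's English description precedes it below -/
import Mathlib

section
/- Let F be a pseudo-algebraically closed field and f ∈ F[X] a non-constant polynomial that is square-free over the algebraic closure of F. Then every nonzero element of F is a product of two values of f: F = f(F)·f(F) ∪ {0}. -/
/-- A field `F` is pseudo-algebraically closed (PAC) if every absolutely irreducible
affine variety over `F` has an `F`-rational point: for every prime ideal `I` of
`F[X₁,…,Xₙ]` whose extension to the algebraic closure of `F` is still prime
(i.e. the variety is absolutely irreducible), there is a common zero of `I` in `Fⁿ`. -/
def IsPAC (F : Type*) [Field F] : Prop :=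
  ∀ (n : ℕ) (I : Ideal (MvPolynomial (Fin n) F)), I.IsPrime →
    (I.map (MvPolynomial.map (algebraMap F (AlgebraicClosure F)))).IsPrime →
    ∃ x : Fin n → F, ∀ g ∈ I, MvPolynomial.eval x g = 0

open Polynomial in
theorem aux_unit_rev {R : Type*} [CommRing R] [IsDomain R] (a : R[X]) (h0 : a.coeff 0 ≠ 0)
    (h : IsUnit a.reverse) : IsUnit a := by
  have h1 := natDegree_eq_zero_of_isUnit h
  rw [reverse_natDegree, natTrailingDegree_eq_zero.2 (Or.inr h0)] at h1
  have h2 : a.natDegree = 0 := by omega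
  rw [eq_C_of_natDegree_eq_zero h2] at h ⊢
  simpa using h

open Polynomial in
theorem aux_irred {K R : Type*} [Field K] [CommRing R] [IsDomain R] [Algebra K R]
    (u p : R) (hp : Prime p) (hu : p ∣ u) (hu2 : ¬ p ^ 2 ∣ u) (f : K[X]) (hf : 0 < f.natDegree)
    (c : K) (hc : c ≠ 0) :
    Irreducible (C u * f.map (algebraMap K R) - C (algebraMap K R c)) := by
  have hcu : IsUnit (algebraMap K R c) := (IsUnit.mk0 c hc).map _
  set P := C u * f.map (algebraMap K R) - C (algebraMap K R c) with hP
  have c0 : P.coeff 0 = u * algebraMap K R (f.coeff 0) - algebraMap K R c := by simp [hP]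
  have ci : ∀ i, 0 < i → P.coeff i = u * algebraMap K R (f.coeff i) := by
    intro i hi
    simp [hP, coeff_C, hi.ne']
  have hu0 : u ≠ 0 := by rintro rfl; simp at hu2
  have hlu : IsUnit (algebraMap K R (f.coeff f.natDegree)) := by
    refine (IsUnit.mk0 _ ?_).map _
    rw [coeff_natDegree, leadingCoeff_ne_zero]
    rintro rfl; simp at hf
  have hdeg : P.natDegree = f.natDegree := by
    apply natDegree_eq_of_le_of_coeff_ne_zero
    · rw [natDegree_le_iff_coeff_eq_zero]
      intro N hN
      rw [ci N (by omega), coeff_eq_zero_of_natDegree_lt hN]; simp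
    · rw [ci _ hf]
      exact mul_ne_zero hu0 hlu.ne_zero
  have c0p : ¬ p ∣ P.coeff 0 := by
    rw [c0]
    intro h
    have : p ∣ algebraMap K R c := (dvd_sub_right (hu.mul_right _)).1 h
    exact hp.not_isUnit (isUnit_of_dvd_unit this hcu)
  have c00 : P.coeff 0 ≠ 0 := fun h => c0p (h ▸ dvd_zero p)
  have htr : P.natTrailingDegree = 0 := natTrailingDegree_eq_zero.2 (Or.inr c00)
  have hrd : P.reverse.natDegree = f.natDegree := by
    rw [reverse_natDegree, htr, hdeg]; rfl
  have hrl : P.reverse.leadingCoeff = P.coeff 0 := by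
    rw [reverse_leadingCoeff, trailingCoeff, htr]
  have hr0 : P.reverse.coeff 0 = u * algebraMap K R (f.coeff f.natDegree) := by
    rw [coeff_zero_reverse, leadingCoeff, hdeg, ci _ hf]
  have hE : P.reverse.IsEisensteinAt (Ideal.span {p}) := by
    refine ⟨?_, ?_, ?_⟩
    · rwa [hrl, Ideal.mem_span_singleton]
    · intro n hn
      rw [hrd] at hn
      rw [Ideal.mem_span_singleton, coeff_reverse, hdeg, revAt_le hn.le, ci _ (by omega)]
      exact hu.mul_right _
    · rw [Ideal.span_singleton_pow, Ideal.mem_span_singleton, hr0, hlu.dvd_mul_right]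
      exact hu2
  have hprim : P.reverse.IsPrimitive := by
    intro r hr
    rw [C_dvd_iff_dvd_coeff] at hr
    have h1 := hr 0
    rw [hr0, hlu.dvd_mul_right] at h1
    have h2 := hr P.reverse.natDegree
    rw [coeff_natDegree, hrl, c0, dvd_sub_right (h1.mul_right _)] at h2
    exact isUnit_of_dvd_unit h2 hcu
  have hirr := hE.irreducible ((Ideal.span_singleton_prime hp.ne_zero).2 hp) hprim (by omega)
  refine ⟨fun h => ?_, fun a b hab => ?_⟩
  · have := natDegree_eq_zero_of_isUnit h
    omega
  · have h0 : a.coeff 0 * b.coeff 0 ≠ 0 := by rwa [← mul_coeff_zero, ← hab]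
    have := hirr.isUnit_or_isUnit (show P.reverse = a.reverse * b.reverse by
      rw [hab, reverse_mul_of_domain])
    exact this.imp (aux_unit_rev a (left_ne_zero_of_mul h0))
      (aux_unit_rev b (right_ne_zero_of_mul h0))

open Polynomial in
theorem aux_mv {K : Type*} [Field K] [IsAlgClosed K] (f : K[X]) (hf : 0 < f.degree)
    (hsf : Squarefree f) (c : K) (hc : c ≠ 0) :
    Prime (aeval (MvPolynomial.X 0 : MvPolynomial (Fin 2) K) f *
      aeval (MvPolynomial.X 1 : MvPolynomial (Fin 2) K) f - MvPolynomial.C c) := by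
  obtain ⟨α, hα⟩ := IsAlgClosed.exists_root f hf.ne'
  let e := MvPolynomial.uniqueAlgEquiv K (Fin 1)
  have heX : e (MvPolynomial.X 0) = X := by simp [e]
  have hef : e (aeval (MvPolynomial.X 0) f) = f := by
    rw [← AlgEquiv.coe_toAlgHom, ← aeval_algHom_apply, AlgEquiv.coe_toAlgHom, heX]; simp
  have hes : e.symm f = aeval (MvPolynomial.X 0) f := by
    rw [AlgEquiv.symm_apply_eq, hef]
  have hp : Prime (e.symm (X - C α)) := (MulEquiv.prime_iff e.symm.toMulEquiv).2 (prime_X_sub_C α)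
  have hirr := aux_irred (K := K) (e.symm f) (e.symm (X - C α)) hp
    (map_dvd e.symm (dvd_iff_isRoot.2 hα))
    (by
      intro h
      have h := map_dvd e h
      simp only [map_pow, AlgEquiv.apply_symm_apply] at h
      rw [pow_two] at h
      exact not_isUnit_X_sub_C α (hsf _ h)) f (natDegree_pos_iff_degree_pos.2 hf) c hc
  rw [← irreducible_iff_prime]
  refine (MulEquiv.irreducible_iff (MvPolynomial.finSuccEquiv K 1).toMulEquiv).1 ?_
  convert hirr using 1
  change MvPolynomial.finSuccEquiv K 1 _ = _
  rw [map_sub, map_mul, ← AlgEquiv.coe_toAlgHom, ← aeval_algHom_apply, ← aeval_algHom_apply,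
    AlgEquiv.coe_toAlgHom, MvPolynomial.finSuccEquiv_X_zero, show (1 : Fin 2) = Fin.succ 0 from rfl,
    MvPolynomial.finSuccEquiv_X_succ, hes, mul_comm]
  congr 1
  · congr 1
    · exact aeval_algHom_apply (Algebra.ofId (MvPolynomial (Fin 1) K)
        (MvPolynomial (Fin 1) K)[X] |>.restrictScalars K) (MvPolynomial.X 0) f
  · exact (MvPolynomial.finSuccEquiv K 1).commutes c

/-- If `F` is PAC and `f ∈ F[X]` is non-constant and square-free over the
algebraic closure, then every nonzero `c ∈ F` is a product of two values of `f`. -/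
theorem statement10 (F : Type*) [Field F] (hF : IsPAC F)
    (f : Polynomial F) (hdeg : 0 < f.degree)
    (hsf : Squarefree (f.map (algebraMap F (AlgebraicClosure F)))) :
    ∀ c : F, c ≠ 0 → ∃ x y : F, Polynomial.eval x f * Polynomial.eval y f = c := by
  intro c hc
  set φ := algebraMap F (AlgebraicClosure F) with hφ
  have hpr := aux_mv (f.map φ) (by simpa using hdeg) hsf (φ c) (by simpa using hc)
  let g : MvPolynomial (Fin 2) F := Polynomial.aeval (MvPolynomial.X 0) f *
    Polynomial.aeval (MvPolynomial.X 1) f - MvPolynomial.C c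
  have key : ∀ i : Fin 2, MvPolynomial.map φ (Polynomial.aeval (MvPolynomial.X i) f) =
      Polynomial.aeval (MvPolynomial.X i) (f.map φ) := by
    intro i
    rw [Polynomial.aeval_def, Polynomial.hom_eval₂, Polynomial.aeval_def, Polynomial.eval₂_map,
      MvPolynomial.map_X]
    congr 1
    ext a
    simp [MvPolynomial.algebraMap_eq]
  have hg : MvPolynomial.map φ g = Polynomial.aeval (MvPolynomial.X 0) (f.map φ) *
      Polynomial.aeval (MvPolynomial.X 1) (f.map φ) - MvPolynomial.C (φ c) := by
    simp only [g, map_sub, map_mul, key, MvPolynomial.map_C]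
  rw [← hg] at hpr
  have hJ : (Ideal.span {MvPolynomial.map φ g}).IsPrime :=
    (Ideal.span_singleton_prime hpr.ne_zero).2 hpr
  have hgI : g ∈ (Ideal.span {MvPolynomial.map φ g}).comap (MvPolynomial.map φ) :=
    Ideal.mem_comap.2 (Ideal.mem_span_singleton_self _)
  have hmap : ((Ideal.span {MvPolynomial.map φ g}).comap (MvPolynomial.map φ)).map
      (MvPolynomial.map φ) = Ideal.span {MvPolynomial.map φ g} := by
    apply le_antisymm Ideal.map_comap_le
    rw [Ideal.span_singleton_le_iff_mem]
    exact Ideal.mem_map_of_mem _ hgI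
  obtain ⟨x, hx⟩ := hF 2 ((Ideal.span {MvPolynomial.map φ g}).comap (MvPolynomial.map φ))
    (Ideal.comap_isPrime _ _) (hmap.symm ▸ hJ)
  have hx := hx g hgI
  have ev : ∀ i : Fin 2, MvPolynomial.eval x (Polynomial.aeval (MvPolynomial.X i) f) =
      Polynomial.eval (x i) f := by
    intro i
    rw [Polynomial.aeval_def, Polynomial.hom_eval₂, MvPolynomial.eval_X, Polynomial.eval]
    congr 1
    ext a
    simp [MvPolynomial.algebraMap_eq]
  refine ⟨x 0, x 1, ?_⟩
  simp only [g, map_sub, map_mul, ev, MvPolynomial.eval_C] at hx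
  exact sub_eq_zero.1 hx
end

section
/- Let F be a finite field with |F| > (2d−1)^4 and let f ∈ F[X] be non-constant of degree d and square-free over the algebraic closure. Then every nonzero c ∈ F can be written as c = f(x)f(y) for some x, y ∈ F. -/
namespace HW
open Polynomial Filter Topology

/-- roots of a polynomial with controlled logarithmic derivative -/
lemma root_bound (s : ℝ) (hs : 0 < s) (P : ℂ[X]) (e : ℕ → ℂ) (C : ℝ)
    (h0 : P.coeff 0 = 1)
    (hrec : ∀ n : ℕ, ((n + 1 : ℕ) : ℂ) * P.coeff (n + 1) =
      ∑ ij ∈ Finset.HasAntidiagonal.antidiagonal n, P.coeff ij.1 * e ij.2)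
    (he : ∀ j, ‖e j‖ ≤ C * s ^ j) (z : ℂ) (hz : P.IsRoot z) : 1 ≤ ‖z‖ * s := by
  by_contra! hlt
  have hP0 : P ≠ 0 := by
    rintro rfl
    simp at h0
  have hC : 0 ≤ C := by
    have := (norm_nonneg _).trans (he 0)
    simpa using this
  obtain ⟨ρ, hρ1, hρ2⟩ : ∃ ρ, ‖z‖ < ρ ∧ ρ * s < 1 := by
    obtain ⟨ρ, h1, h2⟩ := exists_between ((lt_div_iff₀ hs).mpr hlt)
    exact ⟨ρ, h1, (lt_div_iff₀ hs).mp h2⟩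
  have hρ0 : 0 < ρ := (norm_nonneg _).trans_lt hρ1
  set K : ℝ := ∑' j : ℕ, C * (ρ * s) ^ j with hK
  have hgeo : Summable (fun j : ℕ => C * (ρ * s) ^ j) :=
    (summable_geometric_of_lt_one (by positivity) hρ2).mul_left C
  have hbd : ∀ T : ℂ, ‖T‖ ≤ ρ → ∀ j, ‖e j * T ^ j‖ ≤ C * (ρ * s) ^ j := by
    intro T hT j
    rw [norm_mul, norm_pow, mul_pow]
    calc ‖e j‖ * ‖T‖ ^ j ≤ (C * s ^ j) * ρ ^ j := by
          gcongr
          exact he j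
      _ = _ := by ring
  have hsum : ∀ T : ℂ, ‖T‖ ≤ ρ → Summable (fun j => ‖e j * T ^ j‖) := fun T hT =>
    Summable.of_nonneg_of_le (fun _ => norm_nonneg _) (hbd T hT) hgeo
  have hSb : ∀ T : ℂ, ‖T‖ ≤ ρ → ‖∑' j, e j * T ^ j‖ ≤ K := fun T hT =>
    (norm_tsum_le_tsum_norm (hsum T hT)).trans ((hsum T hT).tsum_le_tsum (hbd T hT) hgeo)
  have hPs : ∀ (Q : ℂ[X]) (T : ℂ), HasSum (fun n => Q.coeff n * T ^ n) (Q.eval T) := by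
    intro Q T
    rw [eval_eq_sum_range]
    apply hasSum_sum_of_ne_finset_zero
    intro n hn
    rw [coeff_eq_zero_of_natDegree_lt (by simpa using hn), zero_mul]
  have hPn : ∀ (Q : ℂ[X]) (T : ℂ), Summable (fun n => ‖Q.coeff n * T ^ n‖) := by
    intro Q T
    apply summable_of_ne_finset_zero (s := Finset.range (Q.natDegree + 1))
    intro n hn
    rw [coeff_eq_zero_of_natDegree_lt (by simpa using hn), zero_mul, norm_zero]
  have hde : ∀ T : ℂ, ‖T‖ ≤ ρ → P.derivative.eval T = P.eval T * ∑' j, e j * T ^ j := by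
    intro T hT
    rw [← (hPs P T).tsum_eq, tsum_mul_tsum_eq_tsum_sum_antidiagonal_of_summable_norm
      (hPn P T) (hsum T hT), ← (hPs _ T).tsum_eq]
    congr 1
    ext n
    rw [coeff_derivative, mul_comm (P.coeff (n+1))]
    have := hrec n
    push_cast at this
    rw [this, Finset.sum_mul]
    apply Finset.sum_congr rfl
    rintro ⟨i, j⟩ hij
    rw [Finset.HasAntidiagonal.mem_antidiagonal] at hij
    simp only at hij ⊢
    rw [← hij, pow_add]
    ring
  set m := P.rootMultiplicity z with hm
  have hm0 : 0 < m := (rootMultiplicity_pos hP0).mpr hz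
  obtain ⟨Q, hQ, hQz⟩ := exists_eq_pow_rootMultiplicity_mul_and_not_dvd P hP0 z
  rw [← hm] at hQ
  obtain ⟨m', hm'⟩ : ∃ m', m = m' + 1 := ⟨m - 1, by omega⟩
  have hkey : ∀ T : ℂ, ‖T‖ ≤ ρ → T ≠ z →
      ‖(m : ℂ) * Q.eval T + (T - z) * Q.derivative.eval T‖ ≤ ‖T - z‖ * ‖Q.eval T‖ * K := by
    intro T hT hTz
    have h1 := hde T hT
    rw [hQ, hm'] at h1
    simp only [derivative_mul, derivative_pow, eval_add, eval_mul, eval_pow, eval_sub, eval_X,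
      eval_C, derivative_sub, derivative_X, derivative_C] at h1
    have hne : (T - z) ^ m' ≠ 0 := pow_ne_zero _ (sub_ne_zero.mpr hTz)
    have h2 : (m : ℂ) * Q.eval T + (T - z) * Q.derivative.eval T =
        (T - z) * Q.eval T * ∑' j, e j * T ^ j := by
      apply mul_left_cancel₀ hne
      rw [hm']
      simp only [Nat.add_sub_cancel] at h1
      simp at h1
      push_cast
      linear_combination h1
    rw [h2, norm_mul, norm_mul]
    exact mul_le_mul_of_nonneg_left (hSb T hT) (by positivity)
  have hc1 : Tendsto (fun T => ‖(m : ℂ) * Q.eval T + (T - z) * Q.derivative.eval T‖) (𝓝[≠] z)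
      (𝓝 ‖(m : ℂ) * Q.eval z + (z - z) * Q.derivative.eval z‖) := by
    apply Tendsto.mono_left _ nhdsWithin_le_nhds
    apply Continuous.tendsto
    fun_prop
  have hc2 : Tendsto (fun T => ‖T - z‖ * ‖Q.eval T‖ * K) (𝓝[≠] z)
      (𝓝 (‖z - z‖ * ‖Q.eval z‖ * K)) := by
    apply Tendsto.mono_left _ nhdsWithin_le_nhds
    apply Continuous.tendsto (f := fun T => ‖T - z‖ * ‖Q.eval T‖ * K)
    fun_prop
  have hle := le_of_tendsto_of_tendsto hc1 hc2 (by
    have : ∀ᶠ T in 𝓝[≠] z, ‖T‖ ≤ ρ := by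
      apply Filter.Eventually.filter_mono nhdsWithin_le_nhds
      have : ∀ᶠ T in 𝓝 z, ‖T‖ < ρ := (continuous_norm.tendsto z).eventually (gt_mem_nhds hρ1)
      exact this.mono fun _ h => h.le
    filter_upwards [this, self_mem_nhdsWithin] with T h1 h2
    exact hkey T h1 h2)
  simp only [sub_self, zero_mul, add_zero, norm_zero, norm_mul] at hle
  have hQe : Q.eval z ≠ 0 := fun h => hQz (dvd_iff_isRoot.mpr h)
  have h1 : 0 < ‖(m : ℂ)‖ := norm_pos_iff.mpr (by exact_mod_cast hm0.ne')
  have h2 : 0 < ‖Q.eval z‖ := norm_pos_iff.mpr hQe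
  exact absurd hle (not_le.mpr (mul_pos h1 h2))

lemma coeff_one_bound (s : ℝ) (hs : 0 < s) (P : ℂ[X]) (B : ℕ) (hB : P.natDegree ≤ B)
    (h0 : P.coeff 0 = 1) (hr : ∀ z, P.IsRoot z → 1 ≤ ‖z‖ * s) : ‖P.coeff 1‖ ≤ B * s := by
  have hP0 : P ≠ 0 := by
    rintro rfl
    simp at h0
  set R := P.reverse with hR
  have hdeg : R.natDegree = P.natDegree := by
    rw [hR, reverse_natDegree, natTrailingDegree_eq_zero.mpr (Or.inr (by rw [h0]; simp)),
      Nat.sub_zero]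
  have hmon : R.Monic := by
    rw [Monic, leadingCoeff, hdeg, hR, coeff_reverse, revAt_le le_rfl, Nat.sub_self, h0]
  have hsp : R.Splits := IsAlgClosed.splits R
  by_cases hd : P.natDegree = 0
  · rw [coeff_eq_zero_of_natDegree_lt (by omega), norm_zero]
    positivity
  have hn : R.nextCoeff = P.coeff 1 := by
    rw [nextCoeff_of_natDegree_pos (by omega), hdeg, hR, coeff_reverse, revAt_le (by omega)]
    congr 1
    omega
  have hsum := hsp.nextCoeff_eq_neg_sum_roots_of_monic hmon
  rw [← hn, hsum, norm_neg]
  have hroots : ∀ a ∈ R.roots, ‖a‖ ≤ s := by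
    intro a ha
    have ha' := isRoot_of_mem_roots ha
    by_cases ha0 : a = 0
    · rw [ha0, norm_zero]
      exact hs.le
    have h1 : P.IsRoot a⁻¹ := by
      let _ : Invertible a⁻¹ := invertibleOfNonzero (inv_ne_zero ha0)
      have := eval₂_reverse_eq_zero_iff (RingHom.id ℂ) a⁻¹ P
      simp only [invOf_eq_inv, inv_inv] at this
      have h2 := this.mp (by simpa [eval₂_id, IsRoot] using ha')
      simpa [eval₂_id, IsRoot] using h2
    have := hr _ h1
    rw [norm_inv] at this
    have hpos : 0 < ‖a‖ := norm_pos_iff.mpr ha0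
    rw [inv_mul_eq_div, le_div_iff₀ hpos, one_mul] at this
    exact this
  have h3 : ‖R.roots.sum‖ ≤ (R.roots.map (fun a => ‖a‖)).sum := by
    simpa using norm_multiset_sum_le R.roots
  have h4 : (R.roots.map (fun a => ‖a‖)).sum ≤ (Multiset.card (R.roots.map (fun a => ‖a‖))) • s := by
    apply Multiset.sum_le_card_nsmul
    intro x hx
    obtain ⟨a, ha, rfl⟩ := Multiset.mem_map.mp hx
    exact hroots a ha
  have h5 : (Multiset.card (R.roots.map (fun a => ‖a‖))) ≤ B := by
    rw [Multiset.card_map]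
    exact (card_roots' R).trans (hdeg.le.trans hB)
  rw [nsmul_eq_mul] at h4
  refine h3.trans (h4.trans ?_)
  gcongr

lemma growth (s ρ : ℝ) (hs : 0 < s) (hρ : s < ρ) (g e : ℕ → ℝ) (C : ℝ)
    (hrec : ∀ n : ℕ, ((n + 1 : ℕ) : ℝ) * g (n + 1) =
      ∑ ij ∈ Finset.HasAntidiagonal.antidiagonal n, g ij.1 * e ij.2)
    (he : ∀ j, |e j| ≤ C * s ^ j) : ∃ K : ℝ, 0 < K ∧ ∀ n, |g n| ≤ K * ρ ^ n := by
  have hρ0 : 0 < ρ := hs.trans hρ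
  have hC : 0 ≤ C := by
    have := (abs_nonneg _).trans (he 0)
    simpa using this
  set r := s / ρ with hr
  have hr0 : 0 ≤ r := by positivity
  have hr1 : r < 1 := (div_lt_one hρ0).mpr hρ
  obtain ⟨n0, hn0⟩ := exists_nat_ge (C / ρ * (1 - r)⁻¹)
  refine ⟨(∑ i ∈ Finset.range (n0 + 1), |g i| / ρ ^ i) + 1, by positivity, ?_⟩
  set K := (∑ i ∈ Finset.range (n0 + 1), |g i| / ρ ^ i) + 1 with hK
  have hK0 : 0 < K := by positivity
  intro n
  induction n using Nat.strong_induction_on with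
  | _ n ih =>
    by_cases hn : n ≤ n0
    · have : |g n| / ρ ^ n ≤ K := by
        have := Finset.single_le_sum (f := fun i => |g i| / ρ ^ i) (s := Finset.range (n0 + 1))
          (fun i _ => by positivity) (Finset.mem_range.mpr (by omega : n < n0 + 1))
        linarith
      rwa [div_le_iff₀ (by positivity)] at this
    · obtain ⟨m, rfl⟩ : ∃ m, n = m + 1 := ⟨n - 1, by omega⟩
      have h1 : ((m + 1 : ℕ) : ℝ) * |g (m + 1)| ≤ K * ρ ^ (m+1) * (C / ρ * (1 - r)⁻¹) := by
        rw [← abs_of_nonneg (Nat.cast_nonneg (α := ℝ) (m+1)), ← abs_mul, hrec]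
        refine (Finset.abs_sum_le_sum_abs _ _).trans ?_
        have : ∀ ij ∈ Finset.HasAntidiagonal.antidiagonal m, |g ij.1 * e ij.2| ≤ K * ρ ^ m * C * r ^ ij.2 := by
          rintro ⟨i, j⟩ hij
          rw [Finset.HasAntidiagonal.mem_antidiagonal] at hij
          simp only at hij ⊢
          rw [abs_mul]
          calc |g i| * |e j| ≤ (K * ρ ^ i) * (C * s ^ j) :=
                mul_le_mul (ih i (by omega)) (he j) (abs_nonneg _) (by positivity)
            _ = _ := by
              rw [hr, div_pow, ← hij, pow_add]
              field_simp
        refine (Finset.sum_le_sum this).trans ?_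
        rw [Finset.Nat.sum_antidiagonal_eq_sum_range_succ_mk, ← Finset.mul_sum]
        have hg : ∑ i ∈ Finset.range (m+1), r ^ (m - i) ≤ (1 - r)⁻¹ := by
          rw [← tsum_geometric_of_lt_one hr0 hr1]
          have := Finset.sum_range_reflect (fun i => r ^ i) (m+1)
          simp only [Nat.add_sub_cancel] at this
          rw [show ∑ i ∈ Finset.range (m+1), r ^ (m - i) = ∑ i ∈ Finset.range (m+1), r ^ i by
            rw [← this]]
          exact (summable_geometric_of_lt_one hr0 hr1).sum_le_tsum _ (fun i _ => by positivity)
        calc K * ρ ^ m * C * ∑ i ∈ Finset.range (m+1), r ^ (m - i)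
            ≤ K * ρ ^ m * C * (1 - r)⁻¹ := by gcongr
          _ = _ := by
            rw [pow_succ]
            field_simp
      have h2 : (C / ρ * (1 - r)⁻¹) ≤ ((m + 1 : ℕ) : ℝ) :=
        hn0.trans (by exact_mod_cast (by omega : n0 ≤ m + 1))
      have h3 : ((m + 1 : ℕ) : ℝ) * |g (m + 1)| ≤ ((m + 1 : ℕ) : ℝ) * (K * ρ ^ (m+1)) := by
        refine h1.trans ?_
        rw [mul_comm ((m + 1 : ℕ) : ℝ)]
        gcongr
      exact le_of_mul_le_mul_left h3 (by positivity)

lemma rec_transfer (q : ℝ) (A N : ℕ → ℝ)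
    (hrec : ∀ n : ℕ, ((n + 1 : ℕ) : ℝ) * A (n + 1) =
      ∑ ij ∈ Finset.HasAntidiagonal.antidiagonal n, A ij.1 * N (ij.2 + 1)) :
    ∀ n : ℕ, ((n + 1 : ℕ) : ℝ) *
        (PowerSeries.coeff (n + 1) ((1 - PowerSeries.C q * PowerSeries.X) * PowerSeries.mk A)) =
      ∑ ij ∈ Finset.HasAntidiagonal.antidiagonal n,
        (PowerSeries.coeff ij.1 ((1 - PowerSeries.C q * PowerSeries.X) * PowerSeries.mk A)) *
          (N (ij.2 + 1) - q ^ (ij.2 + 1)) := by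
  set Z := PowerSeries.mk A with hZ
  set S := PowerSeries.mk (fun j => N (j + 1)) with hS
  set Gq : PowerSeries ℝ := PowerSeries.mk (fun j => q ^ (j + 1)) with hGq
  have h1 : PowerSeries.derivative ℝ Z = Z * S := by
    ext n
    rw [PowerSeries.coeff_mul, PowerSeries.coeff_derivative]
    simp only [hZ, hS, PowerSeries.coeff_mk]
    rw [← hrec n]
    push_cast
    ring
  have h2 : (1 - PowerSeries.C q * PowerSeries.X) * Gq = PowerSeries.C q := by
    ext n
    rw [sub_mul, one_mul, mul_assoc, map_sub, PowerSeries.coeff_C_mul]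
    cases n with
    | zero => simp [hGq]
    | succ n =>
      rw [PowerSeries.coeff_succ_X_mul, PowerSeries.coeff_C]
      simp [hGq]
      ring
  set G := (1 - PowerSeries.C q * PowerSeries.X) * Z with hG
  have h3 : PowerSeries.derivative ℝ G = G * (S - Gq) := by
    rw [hG, Derivation.leibniz, h1]
    have : PowerSeries.derivative ℝ (1 - PowerSeries.C q * PowerSeries.X) = - PowerSeries.C q := by
      rw [map_sub, Derivation.leibniz]
      simp [PowerSeries.derivative_C, PowerSeries.derivative_X]
    rw [this, smul_eq_mul, smul_eq_mul]
    linear_combination Z * h2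
  intro n
  have h4 := congrArg (PowerSeries.coeff n) h3
  rw [PowerSeries.coeff_mul, PowerSeries.coeff_derivative] at h4
  simp only [map_sub, hS, hGq, PowerSeries.coeff_mk] at h4
  rw [← h4]
  push_cast
  ring

theorem analytic_main (q : ℝ) (hq : 1 < q) (A N : ℕ → ℝ) (B : ℕ) (C : ℝ)
    (hA0 : A 0 = 1)
    (hrec : ∀ n : ℕ, ((n + 1 : ℕ) : ℝ) * A (n + 1) =
      ∑ ij ∈ Finset.HasAntidiagonal.antidiagonal n, A ij.1 * N (ij.2 + 1))
    (hN : ∀ j, |N (j + 1) - q ^ (j + 1)| ≤ C * Real.sqrt q ^ (j + 1))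
    (hsymm : ∀ K, ∃ M ≥ K, ∀ n m, n + m = M → B ≤ n → B ≤ m → A n / q ^ n = A m / q ^ m)
    (hBq : B * Real.sqrt q < q) : 0 < A 1 := by
  set s := Real.sqrt q with hs
  have hs1 : 1 < s := by
    rw [hs]
    exact Real.lt_sqrt_of_sq_lt (by simpa using hq)
  have hs0 : 0 < s := by linarith
  have hss : s * s = q := Real.mul_self_sqrt (by linarith)
  have hsq : s < q := by nlinarith
  set G := (1 - PowerSeries.C q * PowerSeries.X) * PowerSeries.mk A with hG
  set g : ℕ → ℝ := fun n => PowerSeries.coeff n G with hg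
  set e : ℕ → ℝ := fun j => N (j + 1) - q ^ (j + 1) with he
  have hgrec := rec_transfer q A N hrec
  have hg0 : g 0 = 1 := by
    simp [hg, hG, hA0]
  have hgs : ∀ n, g (n + 1) = A (n + 1) - q * A n := by
    intro n
    simp only [hg, hG]
    rw [sub_mul, one_mul, mul_assoc, map_sub, PowerSeries.coeff_C_mul,
      PowerSeries.coeff_succ_X_mul]
    simp
  have heb : ∀ j, |e j| ≤ (C * s) * s ^ j := by
    intro j
    refine (hN j).trans (le_of_eq ?_)
    rw [pow_succ]
    ring
  obtain ⟨ρ, hρ1, hρ2⟩ := exists_between hsq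
  obtain ⟨K, hK, hKb⟩ := growth s ρ hs0 hρ1 g e (C * s) hgrec heb
  -- vanishing
  have hvan : ∀ n, B ≤ n → g (n + 1) = 0 := by
    intro n hn
    by_contra hne
    have hq0 : 0 < q := by linarith
    have hpos : 0 < |g (n+1)| / q ^ (n+1) := by positivity
    have ht : Tendsto (fun m : ℕ => K * (ρ / q) ^ m) atTop (𝓝 0) := by
      have := (tendsto_pow_atTop_nhds_zero_of_lt_one (r := ρ / q)
        (div_nonneg (by linarith) hq0.le) ((div_lt_one hq0).mpr hρ2)).const_mul K
      simpa using this
    obtain ⟨m0, hm0⟩ := (ht.eventually (gt_mem_nhds hpos)).exists_forall_of_atTop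
    obtain ⟨M, hM, hMs⟩ := hsymm (n + 1 + B + m0)
    obtain ⟨m, hm⟩ : ∃ m, M = n + 1 + m := ⟨M - (n+1), by omega⟩
    have e1 := hMs (n+1) m (by omega) (by omega) (by omega)
    have e2 := hMs n (m+1) (by omega) hn (by omega)
    have e3 : g (n+1) / q ^ (n+1) = - (g (m+1) / q ^ (m+1)) := by
      rw [hgs, hgs, sub_div, sub_div, e1]
      have : q * A n / q ^ (n+1) = A n / q ^ n := by
        rw [pow_succ]
        field_simp
      have h' : q * A m / q ^ (m+1) = A m / q ^ m := by
        rw [pow_succ]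
        field_simp
      rw [this, h', e2]
      ring
    have e4 : |g (n+1)| / q ^ (n+1) = |g (m+1)| / q ^ (m+1) := by
      have := congrArg abs e3
      rwa [abs_neg, abs_div, abs_div, abs_of_pos (pow_pos hq0 (n+1)),
        abs_of_pos (pow_pos hq0 (m+1))] at this
    have e5 : |g (m+1)| / q ^ (m+1) ≤ K * (ρ / q) ^ (m+1) := by
      rw [div_pow, ← mul_div_assoc]
      gcongr
      exact hKb _
    have := hm0 (m+1) (by omega)
    linarith
  -- polynomial
  set P : ℂ[X] := ∑ i ∈ Finset.range (B + 1), monomial i ((g i : ℝ) : ℂ) with hP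
  have hPc : ∀ n, P.coeff n = ((g n : ℝ) : ℂ) := by
    intro n
    rw [hP, finsetSum_coeff]
    simp only [coeff_monomial]
    rw [Finset.sum_ite_eq']
    split_ifs with h
    · rfl
    · rw [Finset.mem_range] at h
      obtain ⟨m, rfl⟩ : ∃ m, n = m + 1 := ⟨n - 1, by omega⟩
      rw [hvan m (by omega)]
      simp
  have hPd : P.natDegree ≤ B := by
    rw [natDegree_le_iff_coeff_eq_zero]
    intro n hn
    obtain ⟨m, rfl⟩ : ∃ m, n = m + 1 := ⟨n - 1, by omega⟩
    rw [hPc, hvan m (by omega)]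
    simp
  have hP0 : P.coeff 0 = 1 := by
    rw [hPc, hg0]
    simp
  have hroot := root_bound s hs0 P (fun j => ((e j : ℝ) : ℂ)) (C * s) hP0 (by
    intro n
    have := hgrec n
    simp only [hPc]
    exact_mod_cast this) (by
    intro j
    rw [Complex.norm_real, Real.norm_eq_abs]
    exact heb j)
  have hc := coeff_one_bound s hs0 P B hPd hP0 hroot
  rw [hPc, Complex.norm_real, Real.norm_eq_abs, hgs 0, hA0] at hc
  have := (abs_le.mp hc).1
  simp at this
  linarith
end HW


namespace HW
open Polynomial

section A
variable {K R : Type*} [Field K] [CommRing R] [Algebra K R]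

/-- monomials -/
def mon (x y : R) (p : ℕ × ℕ) : R := x ^ p.1 * y ^ p.2

/-- reduced exponents -/
def TT (d : ℕ) : Set (ℕ × ℕ) := {p | p.1 < d ∨ p.2 < d}

lemma mem_TT {d i j : ℕ} : (i, j) ∈ TT d ↔ i < d ∨ j < d := Iff.rfl

/-- box of exponents -/
def box (a b : ℕ) : Set (ℕ × ℕ) := {p | p.1 < a ∧ p.2 < b}

/-- span of monomials -/
def WW (K : Type*) {R : Type*} [Field K] [CommRing R] [Algebra K R] (x y : R)
    (S : Set (ℕ × ℕ)) : Submodule K R := Submodule.span K (mon x y '' S)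

/-- the abstract curve ring -/
structure Crv (f : K[X]) (c : K) (x y : R) : Prop where
  dpos : 1 ≤ f.natDegree
  c0 : c ≠ 0
  rel : aeval x f * aeval y f = algebraMap K R c
  li : LinearIndependent K (fun p : TT f.natDegree => mon x y p)
  gen : WW K x y Set.univ = ⊤

variable {f : K[X]} {c : K} {x y : R}

lemma mon_mem {S : Set (ℕ × ℕ)} {p : ℕ × ℕ} (h : p ∈ S) : mon x y p ∈ WW K x y S :=
  Submodule.subset_span (Set.mem_image_of_mem _ h)

lemma mon_mul (p q : ℕ × ℕ) : mon x y p * mon x y q = mon x y (p + q) := by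
  simp only [mon, Prod.fst_add, Prod.snd_add, pow_add]
  ring

lemma WW_mono {S S' : Set (ℕ × ℕ)} (h : S ⊆ S') : WW K x y S ≤ WW K x y S' :=
  Submodule.span_mono (Set.image_mono h)

lemma WW_le {S : Set (ℕ × ℕ)} {N : Submodule K R} (h : ∀ p ∈ S, mon x y p ∈ N) :
    WW K x y S ≤ N := by
  rw [WW, Submodule.span_le]
  rintro _ ⟨p, hp, rfl⟩
  exact h p hp

lemma WW_mul {S S' U : Set (ℕ × ℕ)} (h : ∀ p ∈ S, ∀ q ∈ S', p + q ∈ U) {u v : R}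
    (hu : u ∈ WW K x y S) (hv : v ∈ WW K x y S') : u * v ∈ WW K x y U := by
  have h1 : WW K x y S * WW K x y S' ≤ WW K x y U := by
    rw [WW, WW, Submodule.span_mul_span, Submodule.span_le]
    rintro _ ⟨_, ⟨p, hp, rfl⟩, _, ⟨q, hq, rfl⟩, rfl⟩
    simp only [mon_mul]
    exact mon_mem (h p hp q hq)
  exact h1 (Submodule.mul_mem_mul hu hv)

lemma box_mono {a b a' b' : ℕ} (h : a ≤ a') (h' : b ≤ b') : box a b ⊆ box a' b' :=
  fun _ hp => ⟨hp.1.trans_le h, hp.2.trans_le h'⟩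

lemma V_mono {a b a' b' : ℕ} (h : a ≤ a') (h' : b ≤ b') :
    WW K x y (box a b) ≤ WW K x y (box a' b') := WW_mono (box_mono h h')

lemma V_mul {a b a' b' A B : ℕ} (h : a + a' ≤ A + 1) (h' : b + b' ≤ B + 1) {u v : R}
    (hu : u ∈ WW K x y (box a b)) (hv : v ∈ WW K x y (box a' b')) :
    u * v ∈ WW K x y (box A B) := by
  refine WW_mul ?_ hu hv
  rintro ⟨p1, p2⟩ ⟨h1, h2⟩ ⟨q1, q2⟩ ⟨h3, h4⟩
  simp only at h1 h2 h3 h4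
  constructor <;> simp only [Prod.fst_add, Prod.snd_add] <;> omega

lemma mon_mul_mem (i l : ℕ) {a b : ℕ} {u : R} (hu : u ∈ WW K x y (box a b)) :
    u * mon x y (i, l) ∈ WW K x y (box (a + i) (b + l)) := by
  refine V_mul (a' := i + 1) (b' := l + 1) (by omega) (by omega) hu (mon_mem ?_)
  exact ⟨Nat.lt_succ_self _, Nat.lt_succ_self _⟩

/-- swapping the coordinates -/
lemma WW_swap (S : Set (ℕ × ℕ)) : WW K y x S = WW K x y (Prod.swap ⁻¹' S) := by
  have : ∀ p, mon y x p = mon x y p.swap := fun p => by simp [mon, mul_comm]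
  apply le_antisymm
  · apply WW_le
    intro p hp
    rw [this]
    exact mon_mem (by simpa using hp)
  · apply WW_le
    intro p hp
    rw [show p = p.swap.swap by simp, ← this]
    exact mon_mem hp

lemma V_swap (a b : ℕ) : WW K y x (box a b) = WW K x y (box b a) := by
  rw [WW_swap]
  congr 1
  ext p
  simp [box, and_comm]

lemma Crv.swap (H : Crv f c x y) : Crv f c y x where
  dpos := H.dpos
  c0 := H.c0
  rel := by rw [mul_comm, H.rel]
  gen := by rw [WW_swap, Set.preimage_univ, H.gen]
  li := by
    let e : TT f.natDegree ≃ TT f.natDegree :=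
      (Equiv.prodComm ℕ ℕ).subtypeEquiv (fun p => by simp [TT, or_comm])
    have := (linearIndependent_equiv e).mpr H.li
    convert this using 1
    ext p
    exact mul_comm _ _

lemma Crv.mon_red (H : Crv f c x y) (i j : ℕ) :
    mon x y (f.natDegree + i, f.natDegree + j) ∈
      WW K x y (box (f.natDegree + i + 1) (f.natDegree + j + 1) \
        {(f.natDegree + i, f.natDegree + j)}) := by
  set d := f.natDegree with hd
  have hlc : f.leadingCoeff ≠ 0 := by
    rw [Ne, leadingCoeff_eq_zero]
    rintro rfl
    have := H.dpos
    simp at this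
  have h1 := H.rel
  rw [aeval_eq_sum_range, aeval_eq_sum_range, ← hd, Finset.sum_mul_sum, ← Finset.sum_product'] at h1
  have hmem : (d, d) ∈ (Finset.range (d + 1)) ×ˢ (Finset.range (d + 1)) := by simp
  rw [← Finset.add_sum_erase _ _ hmem] at h1
  simp only at h1
  have h2 : (f.coeff d * f.coeff d) • mon x y (d + i, d + j) =
      c • mon x y (i, j) - ∑ p ∈ ((Finset.range (d + 1)) ×ˢ (Finset.range (d + 1))).erase (d, d),
        (f.coeff p.1 * f.coeff p.2) • mon x y (p + (i, j)) := by
    have h3 := congrArg (· * mon x y (i, j)) h1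
    simp only [add_mul, Finset.sum_mul] at h3
    rw [eq_sub_iff_add_eq, Algebra.smul_def c, ← h3]
    congr 1
    · rw [smul_mul_smul_comm, smul_mul_assoc]
      congr 1
      exact (mon_mul (d, d) (i, j)).symm
    · apply Finset.sum_congr rfl
      intro p _
      rw [smul_mul_smul_comm, smul_mul_assoc]
      congr 1
      exact (mon_mul p (i, j)).symm
  have h4 : (f.coeff d * f.coeff d) ≠ 0 := mul_ne_zero hlc hlc
  rw [← Submodule.smul_mem_iff _ h4, h2]
  apply Submodule.sub_mem
  · apply Submodule.smul_mem
    apply mon_mem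
    have := H.dpos
    refine ⟨⟨?_, ?_⟩, ?_⟩
    · simp only; omega
    · simp only; omega
    · simp only [Set.mem_singleton_iff, Prod.mk.injEq]; omega
  · apply Submodule.sum_mem
    rintro ⟨a, b⟩ hp
    simp only [Finset.mem_erase, Finset.mem_product, Finset.mem_range, Ne, Prod.mk.injEq] at hp
    apply Submodule.smul_mem
    apply mon_mem
    refine ⟨⟨?_, ?_⟩, ?_⟩
    · simp only [Prod.fst_add]; omega
    · simp only [Prod.snd_add]; omega
    · simp only [Set.mem_singleton_iff, Prod.mk_add_mk, Prod.mk.injEq]; omega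

lemma Crv.mon_norm (H : Crv f c x y) : ∀ (n : ℕ) (p : ℕ × ℕ), p.1 + p.2 = n →
    mon x y p ∈ WW K x y (box (p.1 + 1) (p.2 + 1) ∩ TT f.natDegree) := by
  intro n
  induction n using Nat.strong_induction_on with
  | _ n ih =>
    rintro ⟨i, j⟩ hp
    simp only at hp ⊢
    by_cases hT : (i, j) ∈ TT f.natDegree
    · exact mon_mem ⟨⟨by simp, by simp⟩, hT⟩
    · simp only [TT, Set.mem_ofPred_eq, not_or, not_lt] at hT
      obtain ⟨i', rfl⟩ := Nat.exists_eq_add_of_le hT.1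
      obtain ⟨j', rfl⟩ := Nat.exists_eq_add_of_le hT.2
      refine (WW_le ?_ : _ ≤ _) (H.mon_red i' j')
      rintro ⟨a, b⟩ ⟨⟨h1, h2⟩, h3⟩
      simp only [Set.mem_singleton_iff, Prod.mk.injEq] at h1 h2 h3
      refine WW_mono ?_ (ih (a + b) (by omega) (a, b) rfl)
      exact Set.inter_subset_inter_left _ (box_mono (by simp only; omega) (by simp only; omega))

lemma Crv.V_eq (H : Crv f c x y) (a b : ℕ) :
    WW K x y (box a b) = WW K x y (box a b ∩ TT f.natDegree) := by
  apply le_antisymm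
  · apply WW_le
    intro p hp
    refine WW_mono ?_ (H.mon_norm _ p rfl)
    exact Set.inter_subset_inter_left _ (box_mono hp.1 hp.2)
  · exact WW_mono Set.inter_subset_left

lemma Crv.top_eq (H : Crv f c x y) : WW K x y (TT f.natDegree) = ⊤ := by
  rw [eq_top_iff, ← H.gen]
  apply WW_le
  intro p _
  exact WW_mono Set.inter_subset_right (H.mon_norm _ p rfl)

/-- the monomial basis -/
noncomputable def Crv.bas (H : Crv f c x y) : Module.Basis (TT f.natDegree) K R :=
  Module.Basis.mk H.li (by
    rw [← H.top_eq, WW]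
    apply Submodule.span_mono
    rintro _ ⟨p, hp, rfl⟩
    exact ⟨⟨p, hp⟩, rfl⟩)

lemma Crv.bas_apply (H : Crv f c x y) (p : TT f.natDegree) : H.bas p = mon x y p := by
  simp [Crv.bas]

/-- coefficients -/
noncomputable def Crv.coef (H : Crv f c x y) (p : TT f.natDegree) : R →ₗ[K] K := H.bas.coord p

lemma Crv.coef_mon (H : Crv f c x y) (p q : TT f.natDegree) :
    H.coef p (mon x y q) = if q = p then 1 else 0 := by
  rw [← H.bas_apply, Crv.coef, Module.Basis.coord_apply, Module.Basis.repr_self,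
    Finsupp.single_apply]

lemma Crv.coef_mon' (H : Crv f c x y) (p q : ℕ × ℕ) (hp : p ∈ TT f.natDegree)
    (hq : q ∈ TT f.natDegree) : H.coef ⟨p, hp⟩ (mon x y q) = if q = p then 1 else 0 := by
  rw [H.coef_mon ⟨p, hp⟩ ⟨q, hq⟩]
  by_cases h : q = p
  · subst h
    simp
  · rw [if_neg h, if_neg (fun h' => h (congrArg Subtype.val h'))]

lemma Crv.mem_WW (H : Crv f c x y) {S : Set (ℕ × ℕ)} (hS : S ⊆ TT f.natDegree) (r : R) :
    r ∈ WW K x y S ↔ ∀ p : TT f.natDegree, p.1 ∉ S → H.coef p r = 0 := by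
  have h1 : mon x y '' S = H.bas '' (Subtype.val ⁻¹' S) := by
    ext r
    constructor
    · rintro ⟨p, hp, rfl⟩
      exact ⟨⟨p, hS hp⟩, hp, H.bas_apply _⟩
    · rintro ⟨p, hp, rfl⟩
      exact ⟨p, hp, (H.bas_apply _).symm⟩
  rw [WW, h1, Module.Basis.mem_span_image]
  constructor
  · intro h p hp
    by_contra hne
    exact hp (h (by simpa [Crv.coef] using hne))
  · intro h p hp
    by_contra hne
    have := h p hne
    simp only [Finset.mem_coe, Finsupp.mem_support_iff] at hp
    exact hp this

lemma Crv.mem_V (H : Crv f c x y) (a b : ℕ) (r : R) :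
    r ∈ WW K x y (box a b) ↔ ∀ p : TT f.natDegree, p.1 ∉ box a b → H.coef p r = 0 := by
  rw [H.V_eq, H.mem_WW Set.inter_subset_right]
  constructor
  · intro h p hp
    exact h p (fun h' => hp h'.1)
  · intro h p hp
    exact h p (fun h' => hp ⟨h', p.2⟩)

lemma V_fin (a b : ℕ) : FiniteDimensional K (WW K x y (box a b)) := by
  apply FiniteDimensional.span_of_finite
  apply Set.Finite.image
  apply ((Finset.range a) ×ˢ (Finset.range b)).finite_toSet.subset
  rintro ⟨i, j⟩ ⟨h1, h2⟩
  simp only at h1 h2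
  simp [h1, h2]

instance (a b : ℕ) : FiniteDimensional K (WW K x y (box a b)) := V_fin a b

lemma Crv.finrank_V (H : Crv f c x y) {a b : ℕ} (ha : f.natDegree ≤ a) (hb : f.natDegree ≤ b) :
    Module.finrank K (WW K x y (box a b)) + f.natDegree ^ 2 = f.natDegree * (a + b) := by
  classical
  set d := f.natDegree with hd
  rw [H.V_eq, WW]
  have hli : LinearIndepOn K (mon x y) (box a b ∩ TT d) :=
    LinearIndepOn.mono (s := TT d) (H.li : LinearIndepOn K (mon x y) (TT d))
      Set.inter_subset_right
  set S : Finset (ℕ × ℕ) := ((Finset.range a) ×ˢ (Finset.range b)) \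
    ((Finset.Ico d a) ×ˢ (Finset.Ico d b)) with hS
  have hSe : (box a b ∩ TT d) = (S : Set (ℕ × ℕ)) := by
    ext ⟨i, j⟩
    simp only [box, TT, hS, Set.mem_inter_iff, Set.mem_ofPred_eq, Finset.coe_sdiff,
      Finset.coe_product, Set.mem_sdiff, Set.mem_prod, Finset.mem_coe, Finset.mem_range,
      Finset.mem_Ico]
    omega
  have hcard : S.card + (a - d) * (b - d) = a * b := by
    have hsub : ((Finset.Ico d a) ×ˢ (Finset.Ico d b)) ⊆ ((Finset.range a) ×ˢ (Finset.range b)) := by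
      apply Finset.product_subset_product
      · intro i hi
        simp only [Finset.mem_Ico, Finset.mem_range] at hi ⊢
        exact hi.2
      · intro i hi
        simp only [Finset.mem_Ico, Finset.mem_range] at hi ⊢
        exact hi.2
    have := Finset.card_sdiff_add_card_eq_card hsub
    simpa [hS] using this
  have hf : Module.finrank K (Submodule.span K (mon x y '' (box a b ∩ TT d))) = S.card := by
    have h1 := hli.linearIndependent
    rw [Set.image_eq_range, hSe]
    rw [hSe] at hli
    have := finrank_span_eq_card (b := fun p : (S : Set (ℕ × ℕ)) => mon x y p) hli
    rw [this]
    simp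
  rw [hf]
  obtain ⟨a', rfl⟩ := Nat.exists_eq_add_of_le ha
  obtain ⟨b', rfl⟩ := Nat.exists_eq_add_of_le hb
  simp only [Nat.add_sub_cancel_left] at hcard
  nlinarith
end A
end HW

namespace HW
open Polynomial
section A2
variable {K R : Type*} [Field K] [CommRing R] [Algebra K R] {f : K[X]} {c : K} {x y : R}

lemma Crv.exists_V (H : Crv f c x y) (r : R) : ∃ n, ∀ m ≥ n, r ∈ WW K x y (box m m) := by
  suffices h : ∀ r ∈ WW K x y Set.univ, ∃ n, r ∈ WW K x y (box n n) by
    obtain ⟨n, hn⟩ := h r (by rw [H.gen]; trivial)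
    exact ⟨n, fun m hm => V_mono hm hm hn⟩
  intro r hr
  rw [WW] at hr
  induction hr using Submodule.span_induction with
  | mem r hr =>
    obtain ⟨p, -, rfl⟩ := hr
    exact ⟨p.1 + p.2 + 1, mon_mem ⟨by omega, by omega⟩⟩
  | zero => exact ⟨0, Submodule.zero_mem _⟩
  | add u v _ _ hu hv =>
    obtain ⟨n, hn⟩ := hu
    obtain ⟨m, hm⟩ := hv
    exact ⟨n + m, Submodule.add_mem _ (V_mono (by omega) (by omega) hn)
      (V_mono (by omega) (by omega) hm)⟩
  | smul a u _ hu =>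
    obtain ⟨n, hn⟩ := hu
    exact ⟨n, Submodule.smul_mem _ _ hn⟩

/-- monic elements of level `j` -/
def IsM (K : Type*) {R : Type*} [Field K] [CommRing R] [Algebra K R] (x y : R) (j : ℕ) (t : R) :
    Prop := t - (x ^ j + y ^ j) ∈ WW K x y (box j j)

lemma IsM.swap {j : ℕ} {t : R} (h : IsM K x y j t) : IsM K y x j t := by
  rw [IsM, V_swap, add_comm]
  exact h

lemma Crv.coef_top (H : Crv f c x y) {j n b : ℕ} (hj : 1 ≤ j) (hn : f.natDegree ≤ n)
    (hb : b < f.natDegree) {t : R} (ht : IsM K x y j t) {w : R}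
    (hw : w ∈ WW K x y (box (n + 1) (n + 1))) :
    H.coef ⟨(j + n, b), mem_TT.mpr (Or.inr hb)⟩ (t * w) = H.coef ⟨(n, b), mem_TT.mpr (Or.inr hb)⟩ w := by
  rw [H.V_eq] at hw
  rw [WW] at hw
  induction hw using Submodule.span_induction with
  | zero => simp
  | add u v _ _ hu hv => rw [mul_add, map_add, map_add, hu, hv]
  | smul a u _ hu => rw [mul_smul_comm, map_smul, map_smul, hu]
  | mem r hr =>
    obtain ⟨⟨i, l⟩, ⟨⟨h1, h2⟩, hT⟩, rfl⟩ := hr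
    simp only at h1 h2
    have hv : ∀ r ∈ WW K x y (box (j + n) (j + n)),
        H.coef ⟨(j + n, b), mem_TT.mpr (Or.inr hb)⟩ r = 0 := by
      intro r hr
      apply (H.mem_V (j + n) (j + n) r).mp hr
      rintro ⟨h, -⟩
      simp at h
    have e1 : t * mon x y (i, l) = (t - (x ^ j + y ^ j)) * mon x y (i, l) + mon x y (j + i, l) +
        mon x y (i, j + l) := by
      simp only [mon, pow_add]
      ring
    have e2 : (t - (x ^ j + y ^ j)) * mon x y (i, l) ∈ WW K x y (box (j + n) (j + n)) :=
      V_mono (by omega) (by omega) (mon_mul_mem i l ht)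
    rw [e1, map_add, map_add, hv _ e2, zero_add]
    have hT' : (i, l) ∈ TT f.natDegree := hT
    simp only [TT, Set.mem_ofPred_eq] at hT'
    have e4 : H.coef ⟨(j + n, b), mem_TT.mpr (Or.inr hb)⟩ (mon x y (i, j + l)) = 0 := by
      by_cases hjl : j + l < j + n
      · exact hv _ (mon_mem ⟨by simp only; omega, hjl⟩)
      · by_cases h3 : (i, j + l) ∈ TT f.natDegree
        · rw [H.coef_mon' _ _ _ h3, if_neg]
          simp only [Prod.mk.injEq]
          omega
        · simp only [TT, Set.mem_ofPred_eq] at h3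
          omega
    rw [e4, add_zero]
    by_cases h3 : (j + i, l) ∈ TT f.natDegree
    · rw [H.coef_mon' _ _ _ h3, H.coef_mon' _ _ _ hT]
      congr 1
      simp
    · simp only [TT, Set.mem_ofPred_eq] at h3
      rw [hv _ (mon_mem ⟨by simp only; omega, by simp only; omega⟩), H.coef_mon' _ _ _ hT, if_neg]
      simp only [Prod.mk.injEq]
      omega

lemma coef_swap (H : Crv f c x y) (i j : ℕ) (h : (i, j) ∈ TT f.natDegree) (r : R) :
    H.swap.coef ⟨(j, i), mem_TT.mpr (Or.symm h)⟩ r = H.coef ⟨(i, j), h⟩ r := by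
  have hr : r ∈ WW K x y (TT f.natDegree) := by
    rw [H.top_eq]
    trivial
  rw [WW] at hr
  induction hr using Submodule.span_induction with
  | zero => simp
  | add u v _ _ hu hv => rw [map_add, map_add, hu, hv]
  | smul a u _ hu => rw [map_smul, map_smul, hu]
  | mem r hr =>
    obtain ⟨⟨a, b⟩, hT, rfl⟩ := hr
    rw [H.coef_mon' _ _ _ hT]
    have : mon x y (a, b) = mon y x (b, a) := by simp [mon, mul_comm]
    rw [this, H.swap.coef_mon' _ (b, a) _ (mem_TT.mpr (Or.symm hT))]
    congr 1
    simp only [Prod.mk.injEq, and_comm]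

lemma Crv.strict (H : Crv f c x y) {j k : ℕ} (hj : 1 ≤ j) (hk : f.natDegree ≤ k)
    {t : R} (ht : IsM K x y j t) {w : R} (hw : t * w ∈ WW K x y (box (j + k) (j + k))) :
    w ∈ WW K x y (box k k) := by
  obtain ⟨n, hn⟩ := H.exists_V w
  suffices h : ∀ i, w ∈ WW K x y (box (k + i) (k + i)) → w ∈ WW K x y (box k k) by
    exact h n (hn _ (by omega))
  intro i
  induction i with
  | zero => exact fun h => h
  | succ i ih =>
    intro h
    apply ih
    rw [H.mem_V]
    rintro ⟨⟨a, b⟩, hT⟩ hp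
    by_cases hab : (a, b) ∈ box (k + (i + 1)) (k + (i + 1))
    · simp only [box, Set.mem_ofPred_eq] at hab hp
      have hT' := mem_TT.mp hT
      rcases (by omega : (a = k + i ∧ b < f.natDegree) ∨ (b = k + i ∧ a < f.natDegree)) with
        ⟨ha, hb⟩ | ⟨hb, ha⟩
      · subst ha
        rw [← H.coef_top (n := k + i) hj (by omega) hb ht h]
        refine (H.mem_V _ _ _).mp hw _ ?_
        simp only [box, Set.mem_ofPred_eq]
        omega
      · subst hb
        rw [← coef_swap H, ← H.swap.coef_top (n := k + i) hj (by omega) ha ht.swap (by rwa [V_swap])]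
        refine (H.swap.mem_V _ _ _).mp (by rwa [V_swap]) _ ?_
        simp only [box, Set.mem_ofPred_eq]
        omega
    · exact (H.mem_V _ _ _).mp h _ hab

lemma Crv.div_step (H : Crv f c x y) {j n b : ℕ} (hj : f.natDegree ≤ j) (hn : j + b ≤ n)
    {t : R} (ht : IsM K x y j t) :
    ∃ r, mon x y (n, b) - t * r ∈ WW K x y (box n (j + b + 1)) := by
  have := H.dpos
  refine ⟨mon x y (n - j, b), ?_⟩
  have e1 : mon x y (n, b) - t * mon x y (n - j, b) =
      -((t - (x ^ j + y ^ j)) * mon x y (n - j, b)) - mon x y (n - j, j + b) := by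
    have : n = j + (n - j) := by omega
    conv_lhs => rw [this]
    simp only [mon, pow_add, Nat.add_sub_cancel_left]
    ring
  rw [e1]
  apply Submodule.sub_mem
  · apply Submodule.neg_mem
    exact V_mono (by omega) (by omega) (mon_mul_mem _ _ ht)
  · exact mon_mem ⟨by simp only; omega, by simp only; omega⟩

/-- division with remainder -/
lemma Crv.division (H : Crv f c x y) {j : ℕ} (hj : f.natDegree ≤ j)
    {t : R} (ht : IsM K x y j t) (r : R) :
    ∃ s, r - t * s ∈ WW K x y (box (j + f.natDegree) (j + 1)) := by
  have hd := H.dpos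
  set d := f.natDegree with hdd
  set U : Submodule K R := WW K x y (box (j + d) (j + 1)) ⊔
    LinearMap.range (LinearMap.mulLeft K t) with hU
  have hUm : ∀ r s, r - t * s ∈ U → r ∈ U := by
    intro r s h
    have : t * s ∈ U := Submodule.mem_sup_right ⟨s, rfl⟩
    simpa using Submodule.add_mem _ h this
  have h1 : ∀ l, l ≤ j + d → j + 1 ≤ l → WW K x y (box (j + d) l) ≤ U := by
    intro l
    induction l with
    | zero => intro _ h; omega
    | succ l ih =>
      intro hl hl'
      rcases Nat.eq_or_lt_of_le hl' with h | h
      · rw [← h]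
        exact le_sup_left
      · rw [H.V_eq]
        apply WW_le
        rintro ⟨i, b⟩ ⟨⟨h2, h3⟩, h4⟩
        simp only [TT, Set.mem_ofPred_eq] at h2 h3 h4
        rcases (by omega : b < l ∨ b = l) with hb | rfl
        · exact ih (by omega) (by omega) (mon_mem ⟨h2, hb⟩)
        · have hi : i < d := by omega
          have e1 : mon x y (i, b) - t * mon x y (i, b - j) =
              -((t - (x ^ j + y ^ j)) * mon x y (i, b - j)) - mon x y (j + i, b - j) := by
            have : b = j + (b - j) := by omega
            conv_lhs => rw [this]
            simp only [mon, pow_add, Nat.add_sub_cancel_left]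
            ring
          apply hUm _ (mon x y (i, b - j))
          rw [e1]
          apply Submodule.sub_mem
          · apply Submodule.neg_mem
            exact ih (by omega) (by omega) (V_mono (by omega) (by omega) (mon_mul_mem _ _ ht))
          · exact ih (by omega) (by omega) (mon_mem ⟨by simp only; omega, by simp only; omega⟩)
  have h2 : ∀ n, j + d ≤ n → WW K x y (box n n) ≤ U := by
    intro n hn
    induction n, hn using Nat.le_induction with
    | base => exact h1 _ le_rfl (by omega)
    | succ n hn ih =>
      rw [H.V_eq]
      apply WW_le
      rintro ⟨a, b⟩ ⟨⟨h2, h3⟩, h4⟩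
      simp only [TT, Set.mem_ofPred_eq] at h2 h3 h4
      by_cases hab : (a, b) ∈ box n n
      · exact ih (mon_mem hab)
      simp only [box, Set.mem_ofPred_eq] at hab
      rcases (by omega : (a = n ∧ b < d) ∨ (b = n ∧ a < d)) with ⟨rfl, hb⟩ | ⟨rfl, ha⟩
      · obtain ⟨s, hs⟩ := H.div_step hj (n := a) (b := b) (by omega) ht
        exact hUm _ s (ih (V_mono le_rfl (by omega) hs))
      · obtain ⟨s, hs⟩ := H.swap.div_step hj (n := b) (b := a) (by omega) ht.swap
        have : mon y x (b, a) = mon x y (a, b) := by simp [mon, mul_comm]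
        rw [this, V_swap] at hs
        exact hUm _ s (ih (V_mono (by omega) le_rfl hs))
  obtain ⟨n, hn⟩ := H.exists_V r
  have h3 := h2 (n + (j + d)) (by omega) (hn _ (by omega))
  obtain ⟨v, hv, _, ⟨s, rfl⟩, e⟩ := Submodule.mem_sup.mp h3
  refine ⟨s, ?_⟩
  rw [← e]
  simpa using hv

/-- finite codimension of a nonzero principal ideal -/
lemma Crv.quot_finite [IsDomain R] (H : Crv f c x y) {a b : ℕ} {g : R} (hg : g ≠ 0)
    (hgV : g ∈ WW K x y (box (a + 1) (b + 1))) :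
    Module.Finite K (R ⧸ Ideal.span {g}) ∧
      Module.finrank K (R ⧸ Ideal.span {g}) ≤ f.natDegree * (a + b) := by
  set d := f.natDegree with hdd
  set π : R →ₗ[K] (R ⧸ Ideal.span {g}) := (Ideal.Quotient.mkₐ K (Ideal.span {g})).toLinearMap
  have hπ : ∀ r, π r = 0 ↔ r ∈ Ideal.span {g} := fun r => Ideal.Quotient.eq_zero_iff_mem
  have key : ∀ n, d ≤ n → Module.finrank K ((WW K x y (box (n + a) (n + b))).map π) ≤ d * (a + b) := by
    intro n hn
    set V := WW K x y (box (n + a) (n + b))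
    set V' := WW K x y (box n n)
    have h1 := LinearMap.finrank_range_add_finrank_ker (π.domRestrict V)
    rw [LinearMap.range_domRestrict] at h1
    have h2 : Module.finrank K V' ≤ Module.finrank K (LinearMap.ker (π.domRestrict V)) := by
      let φ : V' →ₗ[K] LinearMap.ker (π.domRestrict V) :=
        LinearMap.codRestrict _ (LinearMap.codRestrict V
          ((LinearMap.mulLeft K g).domRestrict V') (fun v => by
            simp only [LinearMap.domRestrict_apply, LinearMap.mulLeft_apply]
            exact V_mul (by omega) (by omega) hgV v.2)) (fun v => by
            rw [LinearMap.mem_ker]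
            exact (hπ _).mpr (Ideal.mul_mem_right _ _ (Ideal.mem_span_singleton_self g)))
      apply LinearMap.finrank_le_finrank_of_injective (f := φ)
      intro u v huv
      have h3 : g * (u : R) = g * (v : R) := congrArg (fun z : LinearMap.ker (π.domRestrict V) => ((z : V) : R)) huv
      exact Subtype.ext (mul_left_cancel₀ hg h3)
    have h3 := H.finrank_V (a := n + a) (b := n + b) (by omega) (by omega)
    have h4 := H.finrank_V (a := n) (b := n) hn hn
    rw [← hdd] at h3 h4
    have e : d * (n + a + (n + b)) = d * (n + n) + d * (a + b) := by ring
    change Module.finrank K V + d ^ 2 = _ at h3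
    change Module.finrank K V' + d ^ 2 = _ at h4
    omega
  have hall : ∀ (s : Finset (R ⧸ Ideal.span {g})),
      LinearIndependent K (fun i : s => (i : R ⧸ Ideal.span {g})) → s.card ≤ d * (a + b) := by
    intro s hs
    have : ∃ n, d ≤ n ∧ ∀ z ∈ s, z ∈ (WW K x y (box (n + a) (n + b))).map π := by
      clear hs
      induction s using Finset.cons_induction with
      | empty => exact ⟨d, le_rfl, by simp⟩
      | cons z s hz ih =>
        obtain ⟨n, hn, h⟩ := ih
        obtain ⟨r, rfl⟩ := Ideal.Quotient.mk_surjective z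
        obtain ⟨m, hm⟩ := H.exists_V r
        refine ⟨n + m, by omega, ?_⟩
        intro z hz
        rcases Finset.mem_cons.mp hz with rfl | hz
        · exact ⟨r, V_mono (by omega) (by omega) (hm m le_rfl), rfl⟩
        · exact Submodule.map_mono (V_mono (by omega) (by omega)) (h z hz)
    obtain ⟨n, hn, h⟩ := this
    refine le_trans ?_ (key n hn)
    have h1 := finrank_span_finset_eq_card hs
    rw [← h1]
    apply Submodule.finrank_mono
    rw [Submodule.span_le]
    exact fun z hz => h z hz
  have hrk : Module.rank K (R ⧸ Ideal.span {g}) ≤ ((d * (a + b) : ℕ) : Cardinal) := by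
    apply rank_le
    exact hall
  have hfin : Module.Finite K (R ⧸ Ideal.span {g}) := by
    rw [← Module.rank_lt_aleph0_iff]
    exact hrk.trans_lt (Cardinal.natCast_lt_aleph0)
  refine ⟨hfin, ?_⟩
  rw [← Module.finrank_eq_rank] at hrk
  exact_mod_cast hrk
end A2
end HW

namespace HW
open Polynomial
section A3
variable {K R : Type*} [Field K] [CommRing R] [Algebra K R] {f : K[X]} {c : K} {x y : R}

lemma Crv.IsM_ne_zero (H : Crv f c x y) {j : ℕ} (hj : 1 ≤ j) {t : R} (ht : IsM K x y j t) :
    t ≠ 0 := by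
  rintro rfl
  have hd := H.dpos
  have h1 := H.coef_top (n := f.natDegree) (b := 0) hj le_rfl (by omega) ht
    (w := mon x y (f.natDegree, 0)) (mon_mem ⟨by simp, by simp⟩)
  rw [zero_mul, map_zero, H.coef_mon' _ _ _ (mem_TT.mpr (Or.inr (by omega))), if_pos rfl] at h1
  exact zero_ne_one h1

lemma Crv.V_surj (H : Crv f c x y) (I : Ideal R) [Module.Finite K (R ⧸ I)] :
    ∃ n, ∀ m ≥ n, ∀ r : R, ∃ v ∈ WW K x y (box m m), r - v ∈ I := by
  set π : R →ₗ[K] (R ⧸ I) := (Ideal.Quotient.mkₐ K I).toLinearMap with hπd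
  obtain ⟨s, hs⟩ := (Module.Finite.fg_top : (⊤ : Submodule K (R ⧸ I)).FG)
  have : ∃ n, ∀ z ∈ s, z ∈ (WW K x y (box n n)).map π := by
    clear hs
    induction s using Finset.cons_induction with
    | empty => exact ⟨0, by simp⟩
    | cons z s hz ih =>
      obtain ⟨n, h⟩ := ih
      obtain ⟨r, rfl⟩ := Ideal.Quotient.mk_surjective z
      obtain ⟨m, hm⟩ := H.exists_V r
      refine ⟨n + m, ?_⟩
      intro z hz
      rcases Finset.mem_cons.mp hz with rfl | hz
      · exact ⟨r, V_mono (by omega) (by omega) (hm m le_rfl), rfl⟩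
      · exact Submodule.map_mono (V_mono (by omega) (by omega)) (h z hz)
  obtain ⟨n, hn⟩ := this
  refine ⟨n, fun m hm r => ?_⟩
  have h1 : (⊤ : Submodule K (R ⧸ I)) ≤ (WW K x y (box m m)).map π := by
    rw [← hs, Submodule.span_le]
    intro z hz
    exact Submodule.map_mono (V_mono hm hm) (hn z hz)
  obtain ⟨v, hv, e⟩ := h1 (Submodule.mem_top : π r ∈ ⊤)
  refine ⟨v, hv, ?_⟩
  rw [← Ideal.Quotient.eq]
  exact e.symm

lemma Crv.exists_M [IsDomain R] (H : Crv f c x y) {g : R} (hg : g ≠ 0) :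
    ∃ n, ∀ j ≥ n, ∃ t, IsM K x y j t ∧ g ∣ t := by
  obtain ⟨m, hm⟩ := H.exists_V g
  obtain ⟨hfin, -⟩ := H.quot_finite hg (hm (m + 1) (by omega))
  obtain ⟨n, hn⟩ := H.V_surj (Ideal.span {g})
  refine ⟨n, fun j hj => ?_⟩
  obtain ⟨v, hv, h⟩ := hn j hj (x ^ j + y ^ j)
  refine ⟨x ^ j + y ^ j - v, ?_, Ideal.mem_span_singleton.mp h⟩
  rw [IsM, sub_sub_cancel_left]
  exact Submodule.neg_mem _ hv

lemma Crv.key [IsDomain R] (H : Crv f c x y) {k : ℕ} (hk : f.natDegree ≤ k) {g : R} (hg : g ≠ 0)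
    (hgV : g ∈ WW K x y (box (k + 1 - f.natDegree) k)) (r : R) :
    ∃ s, r - g * s ∈ WW K x y (box k k) := by
  have hd := H.dpos
  obtain ⟨n, hn⟩ := H.exists_M hg
  set j := n + f.natDegree with hj
  obtain ⟨t, ht, g', rfl⟩ := hn j (by omega)
  obtain ⟨s, hs⟩ := H.division (by omega) ht (g' * r)
  refine ⟨s, H.strict (j := j) (by omega) hk ht ?_⟩
  have e : g * g' * (r - g * s) = g * (g' * r - g * g' * s) := by ring
  rw [e]
  exact V_mul (by omega) (by omega) hgV hs

lemma Crv.finrank_M [IsDomain R] (H : Crv f c x y) {j : ℕ} (hj : f.natDegree ≤ j)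
    {t : R} (ht : IsM K x y j t) :
    Module.Finite K (R ⧸ Ideal.span {t}) ∧
      Module.finrank K (R ⧸ Ideal.span {t}) = 2 * f.natDegree * j := by
  set d := f.natDegree with hdd
  have hd := H.dpos
  have ht0 := H.IsM_ne_zero (by omega) ht
  obtain ⟨m, hm⟩ := H.exists_V t
  obtain ⟨hfin, -⟩ := H.quot_finite ht0 (hm (m + 1) (by omega))
  refine ⟨hfin, ?_⟩
  set π : R →ₗ[K] (R ⧸ Ideal.span {t}) := (Ideal.Quotient.mkₐ K (Ideal.span {t})).toLinearMap
  have hπ : ∀ r, π r = 0 ↔ r ∈ Ideal.span {t} := fun r => Ideal.Quotient.eq_zero_iff_mem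
  set V := WW K x y (box (j + d) (j + d))
  set V' := WW K x y (box d d)
  have h1 := LinearMap.finrank_range_add_finrank_ker (π.domRestrict V)
  have hs : LinearMap.range (π.domRestrict V) = ⊤ := by
    rw [LinearMap.range_domRestrict, eq_top_iff]
    intro z _
    obtain ⟨r, rfl⟩ := Ideal.Quotient.mk_surjective z
    obtain ⟨s, hs⟩ := H.division hj ht r
    refine ⟨r - t * s, V_mono (by omega) (by omega) hs, ?_⟩
    refine Ideal.Quotient.eq.mpr ?_
    rw [sub_sub_cancel_left]
    exact Ideal.neg_mem_iff _ |>.mpr (Ideal.mul_mem_right _ _ (Ideal.mem_span_singleton_self t))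
  have htV : t ∈ WW K x y (box (j + 1) (j + 1)) := by
    have e : t = (t - (x ^ j + y ^ j)) + (mon x y (j, 0) + mon x y (0, j)) := by
      simp [mon]
    rw [e]
    refine Submodule.add_mem _ (V_mono (by omega) (by omega) ht) (Submodule.add_mem _ ?_ ?_)
    · exact mon_mem ⟨by simp, by simp⟩
    · exact mon_mem ⟨by simp, by simp⟩
  have h2 : Module.finrank K V' = Module.finrank K (LinearMap.ker (π.domRestrict V)) := by
    let φ : V' →ₗ[K] LinearMap.ker (π.domRestrict V) :=
      LinearMap.codRestrict _ (LinearMap.codRestrict V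
        ((LinearMap.mulLeft K t).domRestrict V') (fun v => by
          simp only [LinearMap.domRestrict_apply, LinearMap.mulLeft_apply]
          exact V_mul (by omega) (by omega) htV v.2)) (fun v => by
          rw [LinearMap.mem_ker]
          exact (hπ _).mpr (Ideal.mul_mem_right _ _ (Ideal.mem_span_singleton_self t)))
    apply LinearEquiv.finrank_eq
    apply LinearEquiv.ofBijective φ
    constructor
    · intro u v huv
      have h3 : t * (u : R) = t * (v : R) :=
        congrArg (fun z : LinearMap.ker (π.domRestrict V) => ((z : V) : R)) huv
      exact Subtype.ext (mul_left_cancel₀ ht0 h3)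
    · rintro ⟨⟨v, hv⟩, hv'⟩
      obtain ⟨w, rfl⟩ := Ideal.mem_span_singleton.mp ((hπ v).mp hv')
      refine ⟨⟨w, H.strict (by omega) le_rfl ht hv⟩, ?_⟩
      rfl
  rw [hs, finrank_top, ← h2] at h1
  have h3 := H.finrank_V (a := j + d) (b := j + d) (by omega) (by omega)
  have h4 := H.finrank_V (a := d) (b := d) le_rfl le_rfl
  rw [← hdd] at h3 h4
  change Module.finrank K V + d ^ 2 = _ at h3
  change Module.finrank K V' + d ^ 2 = _ at h4
  have e : d * (j + d + (j + d)) = d * (d + d) + 2 * d * j := by ring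
  omega
end A3
end HW

namespace HW
open Polynomial
section PR
variable {K : Type*} [Field K]

/-- defining polynomial -/
noncomputable def PP (f : K[X]) (c : K) : K[X][X] := C f * f.map C - C (C c)

/-- the coordinate ring -/
abbrev CR (f : K[X]) (c : K) := AdjoinRoot (PP f c)

/-- first coordinate -/
noncomputable def cx (f : K[X]) (c : K) : CR f c := AdjoinRoot.of (PP f c) X

/-- second coordinate -/
noncomputable def cy (f : K[X]) (c : K) : CR f c := AdjoinRoot.root (PP f c)

variable {f : K[X]} {c : K}

lemma PP_coeff (n : ℕ) : (PP f c).coeff n = f * C (f.coeff n) - if n = 0 then C c else 0 := by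
  rw [PP, coeff_sub, coeff_C_mul, coeff_map, coeff_C]

lemma PP_natDegree (hd : 1 ≤ f.natDegree) : (PP f c).natDegree = f.natDegree := by
  have hf : f ≠ 0 := by rintro rfl; simp at hd
  apply natDegree_eq_of_le_of_coeff_ne_zero
  · rw [natDegree_le_iff_coeff_eq_zero]
    intro n hn
    rw [PP_coeff, if_neg (by omega), coeff_eq_zero_of_natDegree_lt hn]
    simp
  · rw [PP_coeff, if_neg (by omega), sub_zero]
    refine mul_ne_zero hf (C_ne_zero.mpr ?_)
    exact leadingCoeff_ne_zero.mpr hf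

lemma PP_li_aux (hd : 1 ≤ f.natDegree) (G : K[X][X]) (hG : PP f c ∣ G)
    (h : ∀ i j, f.natDegree ≤ i → f.natDegree ≤ j → (G.coeff j).coeff i = 0) : G = 0 := by
  have hf : f ≠ 0 := by rintro rfl; simp at hd
  obtain ⟨g, rfl⟩ := hG
  by_contra hne
  have hg : g ≠ 0 := right_ne_zero_of_mul hne
  have h1 := coeff_mul_degree_add_degree (PP f c) g
  have h2 : (PP f c).leadingCoeff = f * C f.leadingCoeff := by
    rw [leadingCoeff, PP_natDegree hd, PP_coeff, if_neg (by omega), sub_zero, leadingCoeff]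
  rw [PP_natDegree hd, h2] at h1
  have h3 := h (f.natDegree + g.leadingCoeff.natDegree) (f.natDegree + g.natDegree)
    (by omega) (by omega)
  rw [h1, show f * C f.leadingCoeff * g.leadingCoeff = C f.leadingCoeff * (f * g.leadingCoeff) by
    ring, coeff_C_mul, coeff_mul_degree_add_degree] at h3
  have h4 : f.leadingCoeff ≠ 0 := leadingCoeff_ne_zero.mpr hf
  have h5 : g.leadingCoeff.leadingCoeff ≠ 0 := leadingCoeff_ne_zero.mpr (leadingCoeff_ne_zero.mpr hg)
  exact mul_ne_zero h4 (mul_ne_zero h4 h5) h3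

lemma mk_monomial (p : ℕ × ℕ) (a : K) :
    AdjoinRoot.mk (PP f c) (monomial p.2 (monomial p.1 a)) = a • mon (cx f c) (cy f c) p := by
  rw [mon, cx, cy, ← C_mul_X_pow_eq_monomial, ← C_mul_X_pow_eq_monomial]
  simp only [map_mul, map_pow, AdjoinRoot.mk_C, AdjoinRoot.mk_X]
  rw [Algebra.smul_def, mul_assoc]
  rfl

lemma cr_crv (hd : 1 ≤ f.natDegree) (hc : c ≠ 0) : Crv f c (cx f c) (cy f c) where
  dpos := hd
  c0 := hc
  rel := by
    have h1 : aeval (cx f c) f = AdjoinRoot.mk (PP f c) (C f) := by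
      rw [cx, AdjoinRoot.mk_C]
      have := (aeval_algHom_apply (AdjoinRoot.ofAlgHom K (PP f c)) X f)
      simp only [aeval_X_left_apply] at this
      exact this
    have h2 : aeval (cy f c) f = AdjoinRoot.mk (PP f c) (f.map C) := by
      have h3 := AdjoinRoot.aeval_eq (f := PP f c) (f.map C)
      rw [← h3, cy]
      have := aeval_map_algebraMap K[X] (AdjoinRoot.root (PP f c)) f
      rw [← this]
      rfl
    rw [h1, h2, ← map_mul]
    have h3 : AdjoinRoot.mk (PP f c) (C f * f.map C - C (C c)) = 0 := AdjoinRoot.mk_self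
    rw [map_sub, sub_eq_zero] at h3
    rw [h3, AdjoinRoot.mk_C]
    rfl
  gen := by
    rw [eq_top_iff]
    intro r _
    obtain ⟨g, rfl⟩ := AdjoinRoot.mk_surjective r
    rw [← sum_monomial_eq g, Polynomial.sum, map_sum]
    apply Submodule.sum_mem
    intro j _
    rw [← sum_monomial_eq (g.coeff j), Polynomial.sum, map_sum, map_sum]
    apply Submodule.sum_mem
    intro i _
    rw [mk_monomial (i, j)]
    exact Submodule.smul_mem _ _ (mon_mem (Set.mem_univ _))
  li := by
    rw [linearIndependent_iff]
    intro l hl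
    rw [Finsupp.linearCombination_apply, Finsupp.sum] at hl
    set G : K[X][X] := ∑ p ∈ l.support, monomial p.1.2 (monomial p.1.1 (l p)) with hG
    have hmk : AdjoinRoot.mk (PP f c) G = 0 := by
      rw [hG, map_sum, ← hl]
      apply Finset.sum_congr rfl
      intro p _
      rw [mk_monomial p.1]
    have hcf : ∀ i j, (G.coeff j).coeff i =
        ∑ p ∈ l.support, if p.1 = (i, j) then l p else 0 := by
      intro i j
      rw [hG, finsetSum_coeff, finsetSum_coeff]
      apply Finset.sum_congr rfl
      rintro ⟨⟨a, b⟩, hp⟩ _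
      rw [coeff_monomial]
      simp only [Prod.mk.injEq]
      by_cases h1 : b = j
      · by_cases h2 : a = i
        · simp [h1, h2]
        · simp [h1, h2, coeff_monomial]
      · simp [h1]
    have hG0 : G = 0 := by
      apply PP_li_aux hd G (AdjoinRoot.mk_eq_zero.mp hmk)
      intro i j hi hj
      rw [hcf]
      apply Finset.sum_eq_zero
      rintro ⟨⟨a, b⟩, hp⟩ _
      rw [if_neg]
      rintro h
      simp only [Prod.mk.injEq] at h
      have := mem_TT.mp hp
      omega
    ext p
    have h1 := hcf p.1.1 p.1.2
    rw [hG0] at h1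
    simp only [coeff_zero] at h1
    rw [Finset.sum_eq_single p] at h1
    · simpa using h1.symm
    · intro b _ hb
      rw [if_neg]
      intro h
      exact hb (Subtype.ext h)
    · intro h
      simp only [Finsupp.mem_support_iff, not_not] at h
      simp [h]

lemma PP_irreducible (hd : 1 ≤ f.natDegree) (hc : c ≠ 0) (hs : f.Separable) :
    Irreducible (PP f c) := by
  have hf : f ≠ 0 := by rintro rfl; simp at hd
  have hdeg := PP_natDegree (c := c) hd
  have h00 : (PP f c).coeff 0 = f * C (f.coeff 0) - C c := by rw [PP_coeff, if_pos rfl]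
  obtain ⟨π, hπ, hπf⟩ := exists_irreducible_of_natDegree_pos (f := f) (by omega)
  have hcu : ∀ g : K[X], g ∣ C c → IsUnit g := fun g h =>
    isUnit_of_dvd_unit h (isUnit_C.mpr hc.isUnit)
  have hnd : ¬ π ∣ (PP f c).coeff 0 := by
    rw [h00]
    intro h
    refine hπ.not_isUnit (hcu _ ?_)
    have := dvd_sub (hπf.mul_right (C (f.coeff 0))) h
    simpa using this
  have h0 : (PP f c).coeff 0 ≠ 0 := fun h => hnd (by rw [h]; exact dvd_zero _)
  have hntd : ∀ A : K[X][X], A.coeff 0 ≠ 0 → A.reverse.natDegree = A.natDegree := by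
    intro A hA
    rw [reverse_natDegree, natTrailingDegree_eq_zero.mpr (Or.inr hA), Nat.sub_zero]
  have hQd := hntd _ h0
  have hlc : (PP f c).reverse.leadingCoeff = (PP f c).coeff 0 := by
    rw [leadingCoeff, hQd, coeff_reverse, revAt_le le_rfl, Nat.sub_self]
  have hQ0 : (PP f c).reverse.coeff 0 = f * C f.leadingCoeff := by
    rw [coeff_zero_reverse, leadingCoeff, hdeg, PP_coeff, if_neg (by omega), sub_zero, leadingCoeff]
  have hlcu : IsUnit (C f.leadingCoeff) :=
    isUnit_C.mpr (leadingCoeff_ne_zero.mpr hf).isUnit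
  have hQirr : Irreducible (PP f c).reverse := by
    apply irreducible_of_eisenstein_criterion (P := Ideal.span {π})
    · exact (Ideal.span_singleton_prime hπ.ne_zero).mpr hπ.prime
    · rw [hlc, Ideal.mem_span_singleton]
      exact hnd
    · intro n hn
      have hn' : n < f.natDegree := by
        rw [degree_eq_natDegree (by rw [Ne, reverse_eq_zero]; rintro h; simp [h] at h0), hQd,
          hdeg] at hn
        exact_mod_cast hn
      rw [coeff_reverse, hdeg, revAt_le hn'.le, PP_coeff, if_neg (by omega), sub_zero,
        Ideal.mem_span_singleton]
      exact hπf.mul_right _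
    · rw [← natDegree_pos_iff_degree_pos, hQd, hdeg]
      omega
    · rw [hQ0, Ideal.span_singleton_pow, Ideal.mem_span_singleton]
      intro h
      have h2 := (hlcu.dvd_mul_right).mp h
      rw [sq] at h2
      exact hπ.not_isUnit (hs.squarefree π h2)
    · intro r hr
      rw [C_dvd_iff_dvd_coeff] at hr
      have h1 := (hlcu.dvd_mul_right).mp (hQ0 ▸ hr 0)
      have h2 := hr (PP f c).reverse.natDegree
      rw [← leadingCoeff, hlc, h00] at h2
      apply hcu
      have := dvd_sub (h1.mul_right (C (f.coeff 0))) h2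
      simpa using this
  have aux : ∀ A : K[X][X], A.coeff 0 ≠ 0 → IsUnit A.reverse → IsUnit A := by
    intro A hA hu
    have h1 := natDegree_eq_zero_of_isUnit hu
    rw [hntd A hA] at h1
    rw [eq_C_of_natDegree_eq_zero h1] at hu ⊢
    rwa [reverse_C] at hu
  constructor
  · intro hu
    have := natDegree_eq_zero_of_isUnit hu
    omega
  · intro A B hAB
    have h1 : (PP f c).reverse = A.reverse * B.reverse := by
      rw [hAB, reverse_mul_of_domain]
    have h2 : A.coeff 0 ≠ 0 ∧ B.coeff 0 ≠ 0 := by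
      rw [hAB, mul_coeff_zero] at h0
      exact ⟨left_ne_zero_of_mul h0, right_ne_zero_of_mul h0⟩
    rcases hQirr.isUnit_or_isUnit h1 with h | h
    · exact Or.inl (aux A h2.1 h)
    · exact Or.inr (aux B h2.2 h)

lemma cr_domain (hd : 1 ≤ f.natDegree) (hc : c ≠ 0) (hs : f.Separable) : IsDomain (CR f c) :=
  AdjoinRoot.isDomain_of_prime (PP_irreducible hd hc hs).prime

/-- points -/
lemma cr_lift {S : Type*} [CommRing S] [Algebra K S] (a b : S)
    (h : aeval a f * aeval b f = algebraMap K S c) :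
    ∃ φ : CR f c →ₐ[K] S, φ (cx f c) = a ∧ φ (cy f c) = b := by
  have h1 : eval₂ ((aeval a : K[X] →ₐ[K] S) : K[X] →+* S) b (PP f c) = 0 := by
    rw [PP, eval₂_sub, eval₂_mul, eval₂_C, eval₂_C, eval₂_map]
    have e : (((aeval a : K[X] →ₐ[K] S) : K[X] →+* S)).comp C = algebraMap K S := by
      ext r
      simp
    rw [e]
    simp only [RingHom.coe_coe, aeval_C]
    rw [← h, sub_eq_zero]
    rfl
  let φ := AdjoinRoot.lift _ _ h1
  refine ⟨{ φ with commutes' := fun r => ?_ }, ?_, ?_⟩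
  · change φ (AdjoinRoot.of (PP f c) (C r)) = _
    rw [AdjoinRoot.lift_of]
    simp
  · change φ (AdjoinRoot.of (PP f c) X) = _
    rw [AdjoinRoot.lift_of]
    simp
  · change φ (AdjoinRoot.root (PP f c)) = _
    rw [AdjoinRoot.lift_root]

lemma Crv.hom_ext {R S : Type*} [CommRing R] [Algebra K R] [CommRing S] [Algebra K S] {x y : R}
    (H : Crv f c x y) {φ ψ : R →ₐ[K] S} (h1 : φ x = ψ x) (h2 : φ y = ψ y) : φ = ψ := by
  ext r
  have hr : r ∈ WW K x y Set.univ := by rw [H.gen]; trivial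
  rw [WW] at hr
  induction hr using Submodule.span_induction with
  | zero => simp
  | add u v _ _ hu hv => rw [map_add, map_add, hu, hv]
  | smul a u _ hu => rw [map_smul, map_smul, hu]
  | mem r hr =>
    obtain ⟨p, -, rfl⟩ := hr
    simp [mon, h1, h2]
end PR
end HW

namespace HW
open Polynomial
section PV
variable {K R : Type*} [Field K] [CommRing R] [Algebra K R] {f : K[X]} {c : K} {x y : R}

lemma Crv.aeval_y_ne (H : Crv f c x y) {g : K[X]} (hg : g ≠ 0) : aeval y g ≠ 0 := by
  intro h
  apply hg
  have hd := H.dpos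
  ext n
  have hT : ∀ i, (0, i) ∈ TT f.natDegree := fun i => mem_TT.mpr (Or.inl (by omega))
  have h1 := congrArg (H.coef ⟨(0, n), hT n⟩) h
  rw [aeval_eq_sum_range, map_sum, map_zero] at h1
  have h2 : ∀ i, H.coef ⟨(0, n), hT n⟩ (g.coeff i • y ^ i) = if i = n then g.coeff i else 0 := by
    intro i
    have : y ^ i = mon x y (0, i) := by simp [mon]
    rw [this, map_smul, H.coef_mon' _ _ _ (hT i)]
    simp
  simp only [h2] at h1
  rw [Finset.sum_ite_eq'] at h1
  simp only [coeff_zero]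
  by_cases hn : n ∈ Finset.range (g.natDegree + 1)
  · rwa [if_pos hn] at h1
  · exact coeff_eq_zero_of_natDegree_lt (by simpa using hn)

lemma Crv.place [IsAlgClosed K] [IsDomain R] (H : Crv f c x y) (hs : f.Separable) :
    ∃ α : K, ∀ (ι : Type) (s : Finset ι) (I J : ι → ℕ) (a : ι → K),
      (∀ i ∈ s, ∀ i' ∈ s, J i + f.natDegree * I i' = J i' + f.natDegree * I i → i = i') →
      (∃ i ∈ s, a i ≠ 0) →
      ∑ i ∈ s, a i • ((x - algebraMap K R α) ^ I i * y ^ J i) ≠ 0 := by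
  classical
  have hd := H.dpos
  have hf : f ≠ 0 := by rintro rfl; simp at hd
  let E := FractionRing R
  have hinj : Function.Injective (algebraMap R E) := IsFractionRing.injective R E
  set X' : E := algebraMap R E x with hX'
  set Y' : E := algebraMap R E y with hY'
  have hYt : Y' ∉ (integralClosure K E).toSubring := by
    intro h
    have h1 : IsIntegral K Y' := h
    obtain ⟨g, hg, h2⟩ := h1
    apply H.aeval_y_ne hg.ne_zero
    apply hinj
    rw [map_zero, ← aeval_algebraMap_apply]
    exact h2
  have : IsIntegrallyClosedIn (integralClosure K E).toSubring E :=
    inferInstanceAs (IsIntegrallyClosedIn (integralClosure K E) E)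
  obtain ⟨V, hV1, hV2⟩ := Subring.exists_le_valuationSubring_of_isIntegrallyClosedIn hYt
  set v := V.valuation with hv
  have hKV : ∀ a : K, v (algebraMap K E a) ≤ 1 := by
    intro a
    rw [hv, ValuationSubring.valuation_le_one_iff]
    exact hV1 (isIntegral_algebraMap : IsIntegral K (algebraMap K E a))
  have htriv : v.IsTrivialOn K := ⟨by
    intro a ha
    apply le_antisymm (hKV a)
    have h1 := hKV a⁻¹
    have h2 : v (algebraMap K E a) ≠ 0 := by
      rw [Ne, Valuation.zero_iff]
      simpa using ha
    rw [map_inv₀, map_inv₀] at h1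
    exact (inv_le_one₀ (zero_lt_iff.mpr h2)).mp h1⟩
  have hY1 : 1 < v Y' := by
    rw [← not_le, hv, ValuationSubring.valuation_le_one_iff]
    exact hV2
  set u := v Y' with hu
  have hu0 : u ≠ 0 := (zero_lt_one.trans hY1).ne'
  have hfY : v (aeval Y' f) = u ^ f.natDegree :=
    valuation_aeval_eq_valuation_X_pow_natDegree_of_one_lt_valuation_X Y' hY1 hf
  have hfX : v (aeval X' f) * u ^ f.natDegree = 1 := by
    rw [← hfY, ← map_mul, hX', hY', aeval_algebraMap_apply, aeval_algebraMap_apply, ← map_mul,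
      H.rel, ← IsScalarTower.algebraMap_apply]
    exact htriv.eq_one c H.c0
  have hud : 1 < u ^ f.natDegree := one_lt_pow₀ hY1 (by omega)
  have hfX1 : v (aeval X' f) < 1 := by
    rw [eq_inv_of_mul_eq_one_left hfX]
    exact inv_lt_one_of_one_lt₀ hud
  obtain ⟨α, hα, hαv⟩ : ∃ α, f.IsRoot α ∧ v (X' - algebraMap K E α) < 1 := by
    have hsp := (IsAlgClosed.splits f).eq_prod_roots
    by_contra! hcon
    rw [hsp, map_mul, aeval_C, map_mul, htriv.eq_one _ (leadingCoeff_ne_zero.mpr hf), one_mul,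
      map_multiset_prod, map_multiset_prod, Multiset.map_map, Multiset.map_map] at hfX1
    revert hfX1
    rw [imp_false, not_lt]
    apply Multiset.one_le_prod
    intro z hz
    obtain ⟨a, ha, rfl⟩ := Multiset.mem_map.mp hz
    simpa using hcon a (isRoot_of_mem_roots ha)
  have hXle : v X' ≤ 1 := by
    have : X' = (X' - algebraMap K E α) + algebraMap K E α := by ring
    rw [this]
    exact (v.map_add _ _).trans (max_le hαv.le (hKV α))
  have hpol : ∀ g : K[X], v (aeval X' g) ≤ 1 := by
    intro g
    rw [aeval_eq_sum_range]
    apply Valuation.map_sum_le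
    intro i _
    rw [Algebra.smul_def, map_mul, map_pow]
    exact mul_le_one' (hKV _) (pow_le_one' hXle i)
  obtain ⟨h, hh⟩ := dvd_iff_isRoot.mpr hα
  have hhα : h.eval α ≠ 0 := by
    intro h0
    obtain ⟨h', hh'⟩ := dvd_iff_isRoot.mpr (show h.IsRoot α from h0)
    have h2 : (X - C α) * (X - C α) ∣ f := ⟨h', by rw [hh, hh']; ring⟩
    exact (irreducible_X_sub_C α).not_isUnit (hs.squarefree _ h2)
  have hhv : v (aeval X' h) = 1 := by
    obtain ⟨h2, hh2⟩ := X_sub_C_dvd_sub_C_eval (p := h) (a := α)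
    have e : aeval X' h = aeval X' ((X - C α) * h2) + algebraMap K E (h.eval α) := by
      rw [← hh2]
      simp
    have h1 := htriv.eq_one _ hhα
    rw [e, Valuation.map_add_eq_of_lt_right, h1]
    rw [h1, map_mul, map_mul]
    have h3 : aeval X' (X - C α) = X' - algebraMap K E α := by simp
    rw [h3]
    exact lt_of_le_of_lt (mul_le_of_le_one_right' (hpol h2)) hαv
  have hxα : v (X' - algebraMap K E α) * u ^ f.natDegree = 1 := by
    have e : aeval X' f = (X' - algebraMap K E α) * aeval X' h := by
      rw [hh]
      simp
    rw [e, map_mul, hhv, mul_one] at hfX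
    exact hfX
  have hxα' : v (X' - algebraMap K E α) = u ^ (-(f.natDegree : ℤ)) := by
    rw [zpow_neg, zpow_natCast]
    exact eq_inv_of_mul_eq_one_left hxα
  refine ⟨α, ?_⟩
  intro ι s I J a hij ⟨i₁, hi₁, hai₁⟩ h0
  have hterm : ∀ i, a i ≠ 0 → v (algebraMap R E (a i • ((x - algebraMap K R α) ^ I i * y ^ J i))) =
      u ^ ((J i : ℤ) - f.natDegree * I i) := by
    intro i hi
    rw [Algebra.smul_def, map_mul, ← IsScalarTower.algebraMap_apply, map_mul, htriv.eq_one _ hi,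
      one_mul, map_mul, map_pow, map_pow, map_sub, ← IsScalarTower.algebraMap_apply, map_mul,
      map_pow, map_pow, ← hX', ← hY', hxα', ← hu, ← zpow_natCast, ← zpow_natCast, ← zpow_mul,
      ← zpow_add₀ hu0]
    congr 1
    ring
  obtain ⟨i₀, hi₀, hmax⟩ := Finset.exists_max_image (s.filter (fun i => a i ≠ 0))
    (fun i => (J i : ℤ) - f.natDegree * I i) ⟨i₁, by simp [hi₁, hai₁]⟩
  rw [Finset.mem_filter] at hi₀
  have h1 := congrArg (fun r => v (algebraMap R E r)) h0
  simp only [map_sum, map_zero] at h1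
  rw [← Finset.sum_filter_of_ne (p := fun i => a i ≠ 0) (fun i _ h => by
    intro h'; rw [h'] at h; simp at h)] at h1
  rw [Valuation.map_sum_eq_of_lt v (j := i₀) (by simpa using hi₀)] at h1
  · rw [hterm _ hi₀.2] at h1
    exact zpow_ne_zero _ hu0 h1
  · intro i hi
    simp only [Finset.mem_sdiff, Finset.mem_filter, Finset.mem_singleton] at hi
    rw [hterm _ hi₀.2, hterm _ hi.1.2]
    apply zpow_lt_zpow_right₀ hY1
    refine lt_of_le_of_ne (hmax i (by simpa using hi.1)) ?_
    intro he
    apply hi.2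
    apply hij _ hi.1.1 _ hi₀.1
    zify
    linarith
end PV
end HW

namespace HW
open Polynomial
section PD
variable {K : Type*} [Field K] {f : K[X]} {c : K}

/-- points vanish bound -/
lemma zeros_le (hd : 1 ≤ f.natDegree) (hc : c ≠ 0) (hs : f.Separable) {a b : ℕ} {g : CR f c}
    (hg : g ≠ 0) (hgV : g ∈ WW K (cx f c) (cy f c) (box (a + 1) (b + 1))) (S : Finset (K × K))
    (hS : ∀ P ∈ S, ∃ φ : CR f c →ₐ[K] K, φ (cx f c) = P.1 ∧ φ (cy f c) = P.2 ∧ φ g = 0) :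
    S.card ≤ f.natDegree * (a + b) := by
  have := cr_domain hd hc hs
  obtain ⟨h1, h2⟩ := (cr_crv hd hc).quot_finite hg hgV
  refine le_trans ?_ ((card_algHom_le_finrank K (CR f c ⧸ Ideal.span {g}) K).trans h2)
  choose φ hφ using hS
  let ψ : S → ((CR f c ⧸ Ideal.span {g}) →ₐ[K] K) := fun P =>
    Ideal.Quotient.liftₐ _ (φ P.1 P.2) (by
      intro a ha
      obtain ⟨b, rfl⟩ := Ideal.mem_span_singleton'.mp ha
      rw [map_mul, (hφ P.1 P.2).2.2, mul_zero])
  have hψ : Function.Injective ψ := by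
    intro P P' h
    have e1 : ∀ P r, ψ P (Ideal.Quotient.mk _ r) = φ P.1 P.2 r := fun P r => rfl
    ext
    · rw [← (hφ P.1 P.2).1, ← (hφ P'.1 P'.2).1, ← e1, ← e1, h]
    · rw [← (hφ P.1 P.2).2.1, ← (hφ P'.1 P'.2).2.1, ← e1, ← e1, h]
  have := Nat.card_le_card_of_injective ψ hψ
  simpa using this

lemma digit_inj {d j j' a b : ℕ} (hj : j < d) (hj' : j' < d) (h : j + d * a = j' + d * b) :
    j = j' ∧ a = b := by
  have h1 := congrArg (· % d) h
  simp only [Nat.add_mul_mod_self_left, Nat.mod_eq_of_lt hj, Nat.mod_eq_of_lt hj'] at h1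
  subst h1
  refine ⟨rfl, Nat.eq_of_mul_eq_mul_left (by omega : 0 < d) (by omega)⟩

lemma pow_sub_mem (α : K) (n : ℕ) :
    (cx f c - algebraMap K _ α) ^ n ∈ WW K (cx f c) (cy f c) (box (n + 1) 1) := by
  have h0 : cx f c - algebraMap K _ α ∈ WW K (cx f c) (cy f c) (box 2 1) := by
    apply Submodule.sub_mem
    · have := mon_mem (K := K) (x := cx f c) (y := cy f c) (S := box 2 1) (p := (1, 0))
        ⟨by norm_num, by norm_num⟩
      simpa [mon] using this
    · have := mon_mem (K := K) (x := cx f c) (y := cy f c) (S := box 2 1) (p := (0, 0))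
        ⟨by norm_num, by norm_num⟩
      rw [Algebra.algebraMap_eq_smul_one]
      apply Submodule.smul_mem
      simpa [mon] using this
  induction n with
  | zero =>
    have := mon_mem (K := K) (x := cx f c) (y := cy f c) (S := box 1 1) (p := (0, 0))
        ⟨by norm_num, by norm_num⟩
    simpa [mon] using this
  | succ n ih =>
    rw [pow_succ]
    exact V_mul (by omega) (by omega) ih h0

lemma pow_y_mem (n : ℕ) :
    (cy f c) ^ n ∈ WW K (cx f c) (cy f c) (box 1 (n + 1)) := by
  have := mon_mem (K := K) (x := cx f c) (y := cy f c) (S := box 1 (n + 1)) (p := (0, n))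
        ⟨by norm_num, by simp⟩
  simpa [mon] using this

lemma aeval_y_mem {g : K[X]} {n : ℕ} (hg : g.natDegree < n) :
    aeval (cy f c) g ∈ WW K (cx f c) (cy f c) (box 1 n) := by
  rw [aeval_eq_sum_range]
  apply Submodule.sum_mem
  intro i hi
  apply Submodule.smul_mem
  rw [Finset.mem_range] at hi
  exact V_mono le_rfl (by omega) (pow_y_mem i)

lemma stepanov_raw [IsAlgClosed K] (p : ℕ) [Fact p.Prime] [CharP K p]
    (hc : c ≠ 0) (hs : f.Separable) (d : ℕ) (hdd : f.natDegree = d)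
    (hd : 1 ≤ d) (r μ ν m Q : ℕ) (hQ : Q = p ^ (μ + ν)) (hμ : d * p ^ μ ≤ p ^ ν) (hm : d ≤ m + 1)
    (hdim : r * ((p ^ μ) ^ 2 + (d - 2 : ℤ) * p ^ μ + m + 1) < (p ^ μ : ℤ) * (m + 1) * d)
    (ρ : ℕ → ℕ → K[X]) (hρ : ∀ t t', (ρ t t').natDegree < d)
    (S : Finset (K × K)) (hS : ∀ P ∈ S, P.1 ^ Q = P.1 ∧ f.eval P.1 * f.eval P.2 = c ∧
      ∀ t < d, (P.2 ^ Q) ^ t = ∑ t' : Fin r, (ρ t t').eval P.2 * (P.2 ^ Q) ^ (t' : ℕ)) :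
    S.card ≤ d * ((p ^ μ - 1 + p ^ ν * m) + (d - 1) * (1 + p ^ ν)) := by
  classical
  have hd' : 1 ≤ f.natDegree := by omega
  have := cr_domain hd' hc hs
  have H := cr_crv hd' hc
  obtain ⟨α, hα⟩ := H.place hs
  set M := p ^ μ with hM
  set Q' := p ^ ν with hQ'
  have hMpos : 1 ≤ M := Nat.one_le_pow _ _ (Fact.out : p.Prime).pos
  have hQQ : Q = M * Q' := by rw [hQ, pow_add]
  set x := cx f c with hx
  set y := cy f c with hy
  let ι := Fin M × Fin d × Fin (m + 1) × Fin d
  set A := (M - 1) * M + m with hA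
  set B := (d - 1) * M + (d - 1) with hB
  have hmem : ∀ (i : ι) (t' : Fin r), (x - algebraMap K _ α) ^ (M * i.1) *
      (x - algebraMap K _ (α ^ Q)) ^ (i.2.2.1 : ℕ) * y ^ (M * i.2.1) * aeval y (ρ i.2.2.2 t') ∈
      WW K x y (box (A + 1) (B + 1)) := by
    rintro ⟨i, j, s, t⟩ t'
    have h1 : M * i ≤ (M - 1) * M := by
      rw [mul_comm]; exact Nat.mul_le_mul_right _ (by omega)
    have h2 : M * j ≤ (d - 1) * M := by
      rw [mul_comm]; exact Nat.mul_le_mul_right _ (by omega)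
    have h3 := s.2
    have h4 := V_mul (A := M * i + s + 1) (B := 1) (by omega) (by omega) (pow_sub_mem (f := f) (c := c) α (M * i))
      (pow_sub_mem (f := f) (c := c) (α ^ Q) s)
    have h5 := V_mul (A := M * i + s + 1) (B := M * j + 1) (by omega) (by omega) h4 (pow_y_mem (M * j))
    have h6 := V_mul (A := A + 1) (B := B + 1) (by omega) (by omega) h5 (aeval_y_mem (hρ t t'))
    exact h6
  let v : ι → (Fin r → WW K x y (box (A + 1) (B + 1))) := fun i t' => ⟨_, hmem i t'⟩
  have hfin : Module.Finite K (WW K x y (box (A + 1) (B + 1))) := V_fin _ _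
  have hrank : Module.finrank K (Fin r → WW K x y (box (A + 1) (B + 1))) <
      Module.finrank K (ι → K) := by
    have hV := H.finrank_V (a := A + 1) (b := B + 1) (by omega) (by
      rw [hB, hdd]; omega)
    rw [Module.finrank_pi_fintype, Module.finrank_fintype_fun_eq_card, Finset.sum_const]
    simp only [ι, Fintype.card_prod, Fintype.card_fin, Finset.card_univ, smul_eq_mul]
    rw [hdd] at hV
    set V := Module.finrank K (WW K x y (box (A + 1) (B + 1)))
    have e1 : (A : ℤ) = (M - 1) * M + m := by rw [hA]; push_cast [hMpos]; ring
    have e2 : (B : ℤ) = (d - 1) * M + (d - 1) := by rw [hB]; push_cast [hd]; ring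
    have hV' : (V : ℤ) + d ^ 2 = d * ((A + 1) + (B + 1)) := by exact_mod_cast hV
    rw [e1, e2] at hV'
    have e3 : (V : ℤ) = d * (M ^ 2 + (d - 2) * M + m + 1) := by linear_combination hV'
    zify
    rw [e3]
    have hdz : (0 : ℤ) < d := by exact_mod_cast hd
    have := mul_lt_mul_of_pos_left hdim hdz
    have e4 : (M : ℤ) = (p : ℤ) ^ μ := by rw [hM]; push_cast; rfl
    rw [← e4] at this
    push_cast at this ⊢
    linarith
  have hker := LinearMap.ker_ne_bot_of_finrank_lt (f := Fintype.linearCombination K v) hrank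
  obtain ⟨b, hb, hb0⟩ := (Submodule.ne_bot_iff _).mp hker
  rw [LinearMap.mem_ker, Fintype.linearCombination_apply] at hb
  have hroot : ∀ i, ∃ a : K, a ^ M = b i := fun i => IsAlgClosed.exists_pow_nat_eq _ (by omega)
  choose a ha using hroot
  obtain ⟨i₀, hi₀⟩ := Function.ne_iff.mp hb0
  have hΘ := hα ι Finset.univ (fun i => i.1 + Q' * i.2.2.1) (fun i => i.2.1 + Q' * i.2.2.2) a (by
    rintro ⟨i, j, s, t⟩ - ⟨i', j', s', t'⟩ - h
    rw [hdd] at h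
    dsimp only at h
    have hlt : ∀ (j : Fin d) (i : Fin M), (j : ℕ) + d * i < Q' := by
      intro j i
      have h1 : d * (i + 1) ≤ d * M := Nat.mul_le_mul_left _ (by omega)
      have := j.2
      rw [mul_add] at h1
      omega
    have h1 : (j + d * i') + Q' * (t + d * s' : ℕ) = (j' + d * i) + Q' * (t' + d * s) := by
      linarith
    obtain ⟨h2, h3⟩ := digit_inj (hlt _ _) (hlt _ _) h1
    obtain ⟨h4, h5⟩ := digit_inj j.2 j'.2 h2
    obtain ⟨h6, h7⟩ := digit_inj t.2 t'.2 h3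
    exact Prod.ext (Fin.ext (by dsimp only; omega)) (Prod.ext (Fin.ext (by dsimp only; omega)) (Prod.ext (Fin.ext (by dsimp only; omega)) (Fin.ext (by dsimp only; omega))))) ⟨i₀, Finset.mem_univ _, by
      intro h0
      apply hi₀
      rw [← ha, h0, zero_pow (by omega)]
      rfl⟩
  have hΘV : ∑ i : ι, a i • ((x - algebraMap K _ α) ^ ((i.1 : ℕ) + Q' * i.2.2.1) *
      y ^ ((i.2.1 : ℕ) + Q' * i.2.2.2)) ∈
      WW K x y (box ((M - 1 + Q' * m) + 1) ((d - 1) * (1 + Q') + 1)) := by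
    apply Submodule.sum_mem
    rintro ⟨i, j, s, t⟩ -
    apply Submodule.smul_mem
    have h1 : Q' * s ≤ Q' * m := Nat.mul_le_mul_left _ (by omega)
    have h2 : Q' * t ≤ (d - 1) * Q' := by
      rw [mul_comm]; exact Nat.mul_le_mul_right _ (by omega)
    have h3 : (d - 1) * (1 + Q') = (d - 1) + (d - 1) * Q' := by ring
    have h4 := i.2
    have h5 := j.2
    dsimp only
    exact V_mul (by omega) (by omega) (pow_sub_mem (f := f) (c := c) α _) (pow_y_mem _)
  have hz := zeros_le hd' hc hs hΘ hΘV S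
  rw [hdd] at hz
  refine hz ?_
  intro P hP
  obtain ⟨h1, h2, h3⟩ := hS P hP
  obtain ⟨φ, hφ1, hφ2⟩ := cr_lift (f := f) (c := c) P.1 P.2 (by
    simpa [coe_aeval_eq_eval] using h2)
  refine ⟨φ, hφ1, hφ2, ?_⟩
  have hM0 : M ≠ 0 := by omega
  rw [← pow_eq_zero_iff hM0]
  have hb' : ∀ t' : Fin r, ∑ i : ι, b i * ((P.1 - α) ^ (M * i.1) * (P.1 - α ^ Q) ^ (i.2.2.1 : ℕ) *
      P.2 ^ (M * i.2.1) * (ρ i.2.2.2 t').eval P.2) = 0 := by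
    intro t'
    have := congrArg (fun w => φ (w t' : CR f c)) hb
    simp only [Finset.sum_apply, Pi.smul_apply, Submodule.coe_sum, Submodule.coe_smul, map_sum,
      map_smul, v, Pi.zero_apply, Submodule.coe_zero, map_zero, map_mul, map_pow, map_sub, hx, hy, hφ1, hφ2,
      AlgHom.commutes, smul_eq_mul, ← aeval_algHom_apply, coe_aeval_eq_eval] at this
    simpa using this
  have hfrob : ∀ w : ι → K, (∑ i, w i) ^ M = ∑ i, w i ^ M := fun w => sum_pow_char_pow p μ _ _
  rw [map_sum, hfrob]
  have hterm : ∀ i : ι, (φ (a i • ((x - algebraMap K _ α) ^ ((i.1 : ℕ) + Q' * i.2.2.1) *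
      y ^ ((i.2.1 : ℕ) + Q' * i.2.2.2)))) ^ M = ∑ t' : Fin r, (P.2 ^ Q) ^ (t' : ℕ) * (b i *
      ((P.1 - α) ^ (M * i.1) * (P.1 - α ^ Q) ^ (i.2.2.1 : ℕ) *
      P.2 ^ (M * i.2.1) * (ρ i.2.2.2 t').eval P.2)) := by
    rintro ⟨i, j, s, t⟩
    have e1 : ∀ t' : Fin r, (P.2 ^ Q) ^ (t' : ℕ) * (b (i, j, s, t) *
      ((P.1 - α) ^ (M * i) * (P.1 - α ^ Q) ^ (s : ℕ) *
      P.2 ^ (M * j) * (ρ t t').eval P.2)) = (b (i, j, s, t) *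
      ((P.1 - α) ^ (M * i) * (P.1 - α ^ Q) ^ (s : ℕ) *
      P.2 ^ (M * j))) * ((ρ t t').eval P.2 * (P.2 ^ Q) ^ (t' : ℕ)) := fun t' => by ring
    simp only [e1]
    rw [← Finset.mul_sum, ← h3 t t.2, map_smul, map_mul, map_pow, map_pow, map_sub, hx, hy, hφ1, hφ2,
      AlgHom.commutes, smul_eq_mul, mul_pow, ha, Algebra.algebraMap_self_apply]
    have e2 : P.1 - α ^ Q = (P.1 - α) ^ Q := by
      rw [hQ, sub_pow_char_pow, ← hQ, h1]
    rw [e2, hQQ]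
    ring
  simp only [hterm]
  rw [Finset.sum_comm]
  apply Finset.sum_eq_zero
  intro t' _
  rw [← Finset.mul_sum, hb' t', mul_zero]
end PD
end HW

namespace HW
open Polynomial
section PD2
variable {K : Type*} [Field K] {f : K[X]} {c : K}

lemma trivial_bound (hd : 1 ≤ f.natDegree) (hc : c ≠ 0) (hs : f.Separable) (Q : ℕ) (hQ : 2 ≤ Q)
    (S : Finset (K × K)) (hS : ∀ P ∈ S, P.1 ^ Q = P.1 ∧ f.eval P.1 * f.eval P.2 = c) :
    S.card ≤ f.natDegree * Q := by
  have H := cr_crv hd hc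
  have h0 : (X ^ Q - X : K[X]) ≠ 0 := by
    intro h
    have := congrArg (fun g => coeff g Q) h
    simp [coeff_X_pow, coeff_X, show 1 ≠ Q by omega] at this
  have hg := H.swap.aeval_y_ne h0
  rw [map_sub, map_pow, aeval_X] at hg
  have hV : cx f c ^ Q - cx f c ∈ WW K (cx f c) (cy f c) (box (Q + 1) (0 + 1)) := by
    have := pow_sub_mem (f := f) (c := c) 0
    simp only [map_zero, sub_zero] at this
    apply Submodule.sub_mem _ (this Q)
    have h1 := this 1
    rw [pow_one] at h1
    exact V_mono (by omega) le_rfl h1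
  have := zeros_le hd hc hs hg hV S (by
    intro P hP
    obtain ⟨h1, h2⟩ := hS P hP
    obtain ⟨φ, hφ1, hφ2⟩ := cr_lift (f := f) (c := c) P.1 P.2 (by
      simpa [coe_aeval_eq_eval] using h2)
    refine ⟨φ, hφ1, hφ2, ?_⟩
    rw [map_sub, map_pow, hφ1, h1, sub_self])
  simpa using this

lemma stepanov [IsAlgClosed K] (p : ℕ) [Fact p.Prime] [CharP K p]
    (hc : c ≠ 0) (hs : f.Separable) (d : ℕ) (hdd : f.natDegree = d)
    (hd : 1 ≤ d) (r n Q : ℕ) (hr : r ≤ d) (hn : 1 ≤ n) (hQ : Q = p ^ n)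
    (ρ : ℕ → ℕ → K[X]) (hρ : ∀ t t', (ρ t t').natDegree < d)
    (S : Finset (K × K)) (hS : ∀ P ∈ S, P.1 ^ Q = P.1 ∧ f.eval P.1 * f.eval P.2 = c ∧
      ∀ t < d, (P.2 ^ Q) ^ t = ∑ t' : Fin r, (ρ t t').eval P.2 * (P.2 ^ Q) ^ (t' : ℕ)) :
    (S.card : ℝ) ≤ r * Q + 5 * d ^ 2 * p ^ (d + 1) * Real.sqrt Q := by
  have hp : 2 ≤ p := (Fact.out : p.Prime).two_le
  have hQ2 : 2 ≤ Q := by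
    rw [hQ]
    calc 2 ≤ p := hp
      _ = p ^ 1 := (pow_one p).symm
      _ ≤ p ^ n := Nat.pow_le_pow_right (by omega) hn
  have hsq : Real.sqrt Q * Real.sqrt Q = Q := Real.mul_self_sqrt (by positivity)
  have hsq0 : 0 ≤ Real.sqrt Q := Real.sqrt_nonneg _
  have hdr : (1 : ℝ) ≤ d := by exact_mod_cast hd
  have hpe : d ≤ p ^ d := (Nat.lt_pow_self hp).le
  by_cases hnd : n < d + 2
  · have h1 := trivial_bound (by omega) hc hs Q hQ2 S (fun P hP => ⟨(hS P hP).1, (hS P hP).2.1⟩)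
    rw [hdd] at h1
    have h2 : Q ≤ p ^ (d + 1) := by
      rw [hQ]; exact Nat.pow_le_pow_right (by omega) (by omega)
    have h3 : Real.sqrt Q ≤ p ^ (d + 1) := by
      rw [Real.sqrt_le_left (by positivity)]
      have h4 : (1 : ℝ) ≤ p ^ (d + 1) := one_le_pow₀ (by exact_mod_cast (by omega : 1 ≤ p))
      have h5 : (Q : ℝ) ≤ p ^ (d + 1) := by exact_mod_cast h2
      nlinarith
    have h6 : (S.card : ℝ) ≤ d * Q := by exact_mod_cast h1
    have h7 : (d : ℝ) * Q ≤ d * (p ^ (d + 1) * Real.sqrt Q) := by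
      have e : (d : ℝ) * Q = d * (Real.sqrt Q * Real.sqrt Q) := by rw [hsq]
      rw [e]
      gcongr
    have h8 : (d : ℝ) * (p ^ (d + 1) * Real.sqrt Q) ≤ 5 * d ^ 2 * p ^ (d + 1) * Real.sqrt Q := by
      have : (0 : ℝ) ≤ p ^ (d + 1) * Real.sqrt Q := by positivity
      nlinarith [mul_nonneg (by nlinarith : (0 : ℝ) ≤ 5 * d ^ 2 - d) this]
    have h9 : (0 : ℝ) ≤ r * Q := by positivity
    linarith
  · push Not at hnd
    obtain ⟨μ, hμ⟩ : ∃ μ, μ = (n - d) / 2 := ⟨_, rfl⟩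
    obtain ⟨ν, hν⟩ : ∃ ν, ν = n - μ := ⟨_, rfl⟩
    have hμ1 : 1 ≤ μ := by omega
    have hM2 : 2 ≤ p ^ μ := by
      calc 2 ≤ p := hp
        _ = p ^ 1 := (pow_one p).symm
        _ ≤ p ^ μ := Nat.pow_le_pow_right (by omega) hμ1
    have hMQ : d * p ^ μ ≤ p ^ ν := by
      calc d * p ^ μ ≤ p ^ d * p ^ μ := Nat.mul_le_mul_right _ hpe
        _ = p ^ (d + μ) := (pow_add _ _ _).symm
        _ ≤ p ^ ν := Nat.pow_le_pow_right (by omega) (by omega)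
    have hQ' : ((p ^ ν : ℕ) : ℝ) ≤ p ^ (d + 1) * Real.sqrt Q := by
      apply le_of_sq_le_sq _ (by positivity)
      rw [mul_pow, Real.sq_sqrt (by positivity), hQ]
      norm_cast
      rw [← pow_mul, ← pow_mul, ← pow_add]
      exact Nat.pow_le_pow_right (by omega) (by omega)
    obtain ⟨M, hM⟩ : ∃ M, M = p ^ μ := ⟨_, rfl⟩
    obtain ⟨Q', hQQ⟩ : ∃ Q', Q' = p ^ ν := ⟨_, rfl⟩
    obtain ⟨m, hm⟩ : ∃ m, m = r * M / d + 2 * d := ⟨_, rfl⟩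
    have hm0 : 2 * d ≤ m := by rw [hm]; exact Nat.le_add_left _ _
    have hm1 : d * m ≤ r * M + 2 * d ^ 2 := by
      rw [hm, mul_add]
      have := Nat.mul_div_le (r * M) d
      nlinarith
    have hm2 : r * M + 2 * d ^ 2 < d * (m + 1) := by
      rw [hm]
      have := Nat.lt_mul_div_succ (r * M) (by omega : 0 < d)
      nlinarith
    have hQM : Q = M * Q' := by rw [hQ, hM, hQQ, ← pow_add]; congr 1; omega
    have hraw := stepanov_raw p hc hs d hdd hd r μ ν m Q (by rw [hQ]; congr 1; omega) hMQ
      (by omega) (by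
        have e4 : (p : ℤ) ^ μ = M := by rw [hM]; push_cast; rfl
        rw [e4]
        zify at hm1 hm2 hr hd
        have hM2' : (2 : ℤ) ≤ M := by rw [hM]; exact_mod_cast hM2
        have hr0 : (0 : ℤ) ≤ r := by positivity
        have a1 : (M : ℤ) * (r * M + 2 * d ^ 2) < M * (d * (m + 1)) :=
          mul_lt_mul_of_pos_left hm2 (by linarith)
        have a2 : (r : ℤ) * (m + 1) ≤ d * (m + 1) := mul_le_mul_of_nonneg_right hr (by positivity)
        have a3 : (r : ℤ) * ((d - 1) * M) ≤ d * ((d - 1) * M) :=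
          mul_le_mul_of_nonneg_right hr (mul_nonneg (by linarith) (by linarith))
        have a4 : (d : ℤ) ^ 2 * 2 ≤ d ^ 2 * M := mul_le_mul_of_nonneg_left hM2' (by positivity)
        have a5 : (d : ℤ) * 2 ≤ d * M := mul_le_mul_of_nonneg_left hM2' (by linarith)
        nlinarith) ρ hρ S hS
    rw [← hM, ← hQQ] at hraw
    rw [← hM, ← hQQ] at hMQ
    rw [← hQQ] at hQ'
    have hb1 : d * ((M - 1 + Q' * m) + (d - 1) * (1 + Q')) ≤ r * Q + 5 * d ^ 2 * Q' := by
      have b1 : d * (M - 1) ≤ d * M := Nat.mul_le_mul_left _ (by omega)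
      have b2 : Q' * (d * m) ≤ Q' * (r * M + 2 * d ^ 2) := Nat.mul_le_mul_left _ hm1
      have b3 : d * ((d - 1) * (1 + Q')) ≤ d * (d * (1 + Q')) :=
        Nat.mul_le_mul_left _ (Nat.mul_le_mul_right _ (by omega))
      have b4 : 1 ≤ Q' := by rw [hQQ]; exact Nat.one_le_pow _ _ (by omega)
      have b5 : d * d * 1 ≤ d * d * Q' := Nat.mul_le_mul_left _ b4
      have b6 : 1 * Q' ≤ (d * d) * Q' := Nat.mul_le_mul_right _ (Nat.mul_le_mul hd hd)
      have b7 : d * ((M - 1 + Q' * m) + (d - 1) * (1 + Q')) =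
        d * (M - 1) + Q' * (d * m) + d * ((d - 1) * (1 + Q')) := by ring
      have b8 : Q' * (r * M + 2 * d ^ 2) = r * Q + 2 * (d * d * Q') := by rw [hQM]; ring
      have b9 : d * (d * (1 + Q')) = d * d * 1 + d * d * Q' := by ring
      have b10 : 5 * d ^ 2 * Q' = 5 * (d * d * Q') := by ring
      rw [b7, b10]
      rw [b8] at b2
      rw [b9] at b3
      linarith
    have hb2 : (S.card : ℝ) ≤ r * Q + 5 * d ^ 2 * Q' := by exact_mod_cast hraw.trans hb1
    have hb3 : (5 : ℝ) * d ^ 2 * Q' ≤ 5 * d ^ 2 * (p ^ (d + 1) * Real.sqrt Q) := by gcongr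
    linarith
end PD2
end HW

namespace HW
open Polynomial
section PD3
variable {K : Type*} [Field K] {f : K[X]} {c : K}

/-- coefficient polynomials of the difference quotient -/
noncomputable def gq (f : K[X]) (i : ℕ) : K[X] :=
  ∑ k ∈ Finset.range (f.natDegree + 1), if i < k then C (f.coeff k) * X ^ (k - 1 - i) else 0

lemma gq_natDegree (hd : 1 ≤ f.natDegree) (i : ℕ) : (gq f i).natDegree ≤ f.natDegree - 1 := by
  apply natDegree_sum_le_of_forall_le
  intro k hk
  rw [Finset.mem_range] at hk
  split_ifs
  · exact (natDegree_C_mul_X_pow_le _ _).trans (by omega)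
  · simp

lemma gq_top {e : ℕ} (hd : f.natDegree = e + 1) : gq f e = C f.leadingCoeff := by
  rw [gq, hd, Finset.sum_range_succ, Finset.sum_eq_zero]
  · simp [leadingCoeff, hd]
  · intro k hk
    rw [Finset.mem_range] at hk
    rw [if_neg (by omega)]

lemma gq_rel (y z : K) :
    (∑ i ∈ Finset.range f.natDegree, (gq f i).eval y * z ^ i) * (z - y) = f.eval z - f.eval y := by
  have h1 : ∀ i ∈ Finset.range f.natDegree, (gq f i).eval y * z ^ i =
      ∑ k ∈ Finset.range (f.natDegree + 1),
        if i < k then f.coeff k * (z ^ i * y ^ (k - 1 - i)) else 0 := by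
    intro i _
    rw [gq, eval_finsetSum, Finset.sum_mul]
    apply Finset.sum_congr rfl
    intro k _
    split_ifs
    · simp; ring
    · simp
  rw [Finset.sum_congr rfl h1, Finset.sum_comm, Finset.sum_mul, eval_eq_sum_range,
    eval_eq_sum_range, ← Finset.sum_sub_distrib]
  apply Finset.sum_congr rfl
  intro k hk
  rw [Finset.mem_range] at hk
  rw [← Finset.sum_filter]
  have : (Finset.range f.natDegree).filter (fun i => i < k) = Finset.range k := by
    ext i; simp; omega
  rw [this, ← Finset.mul_sum, mul_assoc, geom_sum₂_mul, mul_sub]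

/-- affine points -/
def PT (f : K[X]) (c : K) (Q : ℕ) : Set (K × K) :=
  {P | P.1 ^ Q = P.1 ∧ P.2 ^ Q = P.2 ∧ f.eval P.1 * f.eval P.2 = c ∧ f.derivative.eval P.2 ≠ 0}

lemma roots_card [IsAlgClosed K] (p : ℕ) [Fact p.Prime] [CharP K p] (n : ℕ) (hn : 1 ≤ n) :
    ∃ s : Finset K, s.card = p ^ n ∧ ∀ a, a ∈ s ↔ a ^ (p ^ n) = a := by
  classical
  have hp : 1 < p := (Fact.out : p.Prime).one_lt
  have h1 : (X ^ (p ^ n) - X : K[X]).Separable :=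
    galois_poly_separable p _ (dvd_pow_self p (by omega))
  have hne := FiniteField.X_pow_card_pow_sub_X_ne_zero K (p := p) (n := n) (by omega) hp
  refine ⟨(X ^ (p ^ n) - X : K[X]).roots.toFinset, ?_, ?_⟩
  · rw [Multiset.toFinset_card_of_nodup (nodup_roots h1),
      splits_iff_card_roots.mp (IsAlgClosed.splits _),
      FiniteField.X_pow_card_pow_sub_X_natDegree_eq K (by omega) hp]
  · intro a
    rw [Multiset.mem_toFinset, mem_roots hne]
    simp [sub_eq_zero]

lemma PT_finite [IsAlgClosed K] (p : ℕ) [Fact p.Prime] [CharP K p] (n : ℕ) (hn : 1 ≤ n) :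
    (PT f c (p ^ n)).Finite := by
  obtain ⟨s, -, hs⟩ := roots_card (K := K) p n hn
  apply (s ×ˢ s).finite_toSet.subset
  rintro P ⟨h1, h2, -⟩
  simp [hs, h1, h2]

lemma point_count [IsAlgClosed K] (p : ℕ) [Fact p.Prime] [CharP K p]
    (hc : c ≠ 0) (hs : f.Separable) (d : ℕ) (hdd : f.natDegree = d)
    (hd : 2 ≤ d) (n Q : ℕ) (hn : 1 ≤ n) (hQ : Q = p ^ n) (hcQ : c ^ Q = c)
    (hfQ : ∀ y, f.eval (y ^ Q) = (f.eval y) ^ Q) :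
    |((PT f c Q).ncard : ℝ) - Q| ≤ (5 * d ^ 2 * p ^ (d + 1) + d ^ 3) * Real.sqrt Q := by
  classical
  have hp : 2 ≤ p := (Fact.out : p.Prime).two_le
  have hQ2 : 1 ≤ Q := by rw [hQ]; exact Nat.one_le_pow _ _ (by omega)
  have hfin : (PT f c Q).Finite := by rw [hQ]; exact PT_finite p n hn
  have hf0 : f ≠ 0 := by rintro rfl; simp at hdd; omega
  have hlc : f.leadingCoeff ≠ 0 := leadingCoeff_ne_zero.mpr hf0
  obtain ⟨T, hT⟩ := hfin.exists_finset
  have hTc : (PT f c Q).ncard = T.card := by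
    rw [← Set.ncard_coe_finset]
    congr 1
    ext P
    simp [hT]
  have hs1 : (1 : ℝ) ≤ Real.sqrt Q := by
    rw [Real.one_le_sqrt]; exact_mod_cast hQ2
  have hup := stepanov p hc hs d hdd (by omega) 1 n Q (by omega) hn hQ
    (fun t _ => if t < d then X ^ t else 0) (by
      intro t t'
      split_ifs with h
      · rwa [natDegree_X_pow]
      · rw [natDegree_zero]; omega) T (by
      intro P hP
      obtain ⟨h1, h2, h3, h4⟩ := (hT P).mp hP
      refine ⟨h1, h3, ?_⟩
      intro t ht
      simp [ht, h2])
  obtain ⟨s, hsc, hsm⟩ := roots_card (K := K) p n hn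
  rw [← hQ] at hsc hsm
  -- bad polynomial
  set Bd : K[X] := f * ∏ β ∈ f.derivative.roots.toFinset, (f * C (f.eval β) - C c) with hBd
  have hfac : ∀ b : K, f * C b - C c ≠ 0 := by
    intro b h
    by_cases hb : b = 0
    · rw [hb] at h; simp [hc] at h
    · have h1 := congrArg natDegree h
      rw [natDegree_sub_C, natDegree_mul_C hb, natDegree_zero] at h1
      omega
  have hBd0 : Bd ≠ 0 := mul_ne_zero hf0 (Finset.prod_ne_zero_iff.mpr fun β _ => hfac _)
  have hBdd : Bd.natDegree ≤ d * d := by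
    refine natDegree_mul_le.trans ?_
    have h1 : (∏ β ∈ f.derivative.roots.toFinset, (f * C (f.eval β) - C c)).natDegree ≤
        ∑ β ∈ f.derivative.roots.toFinset, d := by
      refine (natDegree_prod_le _ _).trans (Finset.sum_le_sum ?_)
      intro β _
      rw [natDegree_sub_C, ← hdd]
      exact natDegree_mul_C_le _ _
    rw [Finset.sum_const, smul_eq_mul] at h1
    have h2 : f.derivative.roots.toFinset.card ≤ d - 1 :=
      (Multiset.toFinset_card_le _).trans ((card_roots' _).trans
        ((natDegree_derivative_le f).trans (by omega)))
    have h3 := Nat.mul_le_mul_right d h2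
    obtain ⟨e, rfl⟩ : ∃ e, d = e + 1 := ⟨d - 1, by omega⟩
    simp only [Nat.add_sub_cancel] at h3
    nlinarith
  set G := s \ Bd.roots.toFinset with hG
  have hGc : Q ≤ G.card + d * d := by
    have h1 := Finset.le_card_sdiff Bd.roots.toFinset s
    rw [← hG, hsc] at h1
    have h2 : Bd.roots.toFinset.card ≤ d * d :=
      (Multiset.toFinset_card_le _).trans ((card_roots' _).trans hBdd)
    omega
  have hGm : ∀ a ∈ G, a ^ Q = a ∧ f.eval a ≠ 0 ∧ ∀ β, f.derivative.eval β = 0 →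
      f.eval a * f.eval β ≠ c := by
    intro a ha
    rw [hG, Finset.mem_sdiff, hsm, Multiset.mem_toFinset, mem_roots hBd0, IsRoot, hBd, eval_mul,
      eval_prod, mul_eq_zero, not_or, Finset.prod_eq_zero_iff] at ha
    refine ⟨ha.1, ha.2.1, ?_⟩
    intro β hβ h
    apply ha.2.2
    have hd0 : f.derivative ≠ 0 := by
      intro h0
      have := hs
      rw [separable_def, h0, isCoprime_zero_right] at this
      have := natDegree_eq_zero_of_isUnit this
      omega
    refine ⟨β, ?_, ?_⟩
    · rw [Multiset.mem_toFinset, mem_roots hd0]; exact hβ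
    · simp [h]
  set Y : K → Finset K := fun a => (f - C (c / f.eval a)).roots.toFinset with hY
  have hYm : ∀ a ∈ G, ∀ b, b ∈ Y a ↔ f.eval a * f.eval b = c := by
    intro a ha b
    have hne : f - C (c / f.eval a) ≠ 0 := by
      intro h
      have h1 := congrArg natDegree h
      rw [natDegree_sub_C, natDegree_zero] at h1
      omega
    rw [hY]
    simp only
    rw [Multiset.mem_toFinset, mem_roots hne, IsRoot, eval_sub, eval_C, sub_eq_zero,
      eq_div_iff (hGm a ha).2.1, mul_comm]
  have hYc : ∀ a ∈ G, (Y a).card = d := by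
    intro a ha
    have hsep : (f - C (c / f.eval a)).Separable := by
      rw [separable_def]
      rw [← gcd_isUnit_iff, ← not_not (a := IsUnit _)]
      intro hu
      obtain ⟨β, hβ⟩ := IsAlgClosed.exists_root (gcd (f - C (c / f.eval a)) (derivative (f - C (c / f.eval a)))) (by
        intro h0
        apply hu
        rw [isUnit_iff_degree_eq_zero]
        exact h0)
      have h1 : (f - C (c / f.eval a)).IsRoot β := hβ.dvd (gcd_dvd_left _ _)
      have h2 : (derivative (f - C (c / f.eval a))).IsRoot β := hβ.dvd (gcd_dvd_right _ _)
      rw [derivative_sub, derivative_C, sub_zero] at h2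
      apply (hGm a ha).2.2 β h2
      rw [IsRoot, eval_sub, eval_C, sub_eq_zero, eq_div_iff (hGm a ha).2.1, mul_comm] at h1
      exact h1
    rw [hY]
    simp only
    rw [Multiset.toFinset_card_of_nodup (nodup_roots hsep),
      splits_iff_card_roots.mp (IsAlgClosed.splits _), natDegree_sub_C, hdd]
  set U := (G.sigma Y).map (Equiv.sigmaEquivProd K K).toEmbedding with hU
  have hUc : U.card = G.card * d := by
    rw [hU, Finset.card_map, Finset.card_sigma, Finset.sum_congr rfl hYc, Finset.sum_const,
      smul_eq_mul]
  have hUm : ∀ P ∈ U, P.1 ∈ G ∧ P.2 ∈ Y P.1 := by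
    intro P hP
    rw [hU, Finset.mem_map] at hP
    obtain ⟨⟨a, b⟩, h, rfl⟩ := hP
    simpa using h
  have hsplit := Finset.card_filter_add_card_filter_not (s := U) (fun P => P.2 ^ Q = P.2)
  have hU1 : (U.filter (fun P => P.2 ^ Q = P.2)).card ≤ T.card := by
    apply Finset.card_le_card
    intro P hP
    rw [Finset.mem_filter] at hP
    obtain ⟨h1, h2⟩ := hUm P hP.1
    rw [hYm _ h1] at h2
    rw [hT]
    exact ⟨(hGm _ h1).1, hP.2, h2, fun h => (hGm _ h1).2.2 _ h h2⟩
  obtain ⟨e, rfl⟩ : ∃ e, d = e + 1 := ⟨d - 1, by omega⟩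
  have hlow := stepanov p hc hs (e + 1) hdd (by omega) e n Q (by omega) hn hQ
    (fun t t' => if t < e then (if t = t' then 1 else 0) else - C (f.leadingCoeff)⁻¹ * gq f t') (by
      intro t t'
      split_ifs with h h'
      · rw [natDegree_one]; omega
      · rw [natDegree_zero]; omega
      · rw [neg_mul, natDegree_neg]
        have := natDegree_C_mul_le (f.leadingCoeff)⁻¹ (gq f t')
        have h3 := gq_natDegree (f := f) (by omega) t'
        omega) (U.filter (fun P => ¬ P.2 ^ Q = P.2)) (by
      intro P hP
      rw [Finset.mem_filter] at hP
      obtain ⟨h1, h2⟩ := hUm P hP.1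
      rw [hYm _ h1] at h2
      obtain ⟨h3, h4, h5⟩ := hGm _ h1
      refine ⟨h3, h2, ?_⟩
      have hz : f.eval (P.2 ^ Q) = f.eval P.2 := by
        rw [hfQ]
        apply mul_left_cancel₀ h4
        have h6 : (f.eval P.1) ^ Q = f.eval P.1 := by rw [← hfQ, h3]
        calc f.eval P.1 * f.eval P.2 ^ Q = (f.eval P.1 * f.eval P.2) ^ Q := by rw [mul_pow, h6]
          _ = _ := by rw [h2, hcQ]
      have hrel := gq_rel (f := f) P.2 (P.2 ^ Q)
      rw [hz, sub_self, mul_eq_zero, or_iff_left (sub_ne_zero.mpr hP.2), hdd,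
        Finset.sum_range_succ, gq_top hdd, eval_C] at hrel
      intro t ht
      by_cases hte : t < e
      · simp only [hte, if_true]
        rw [Finset.sum_eq_single ⟨t, hte⟩]
        · simp
        · intro b _ hb
          rw [if_neg (fun h => hb (Fin.ext h.symm))]
          simp
        · simp
      · have hte' : t = e := by omega
        subst hte'
        simp only [lt_irrefl, if_false]
        rw [Fin.sum_univ_eq_sum_range (fun t' => eval P.2 (-C f.leadingCoeff⁻¹ * gq f t') * (P.2 ^ Q) ^ t') t]
        simp only [neg_mul, eval_neg, eval_mul, eval_C, mul_assoc, Finset.sum_neg_distrib]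
        rw [← Finset.mul_sum]
        have h7 : ∑ i ∈ Finset.range t, eval P.2 (gq f i) * (P.2 ^ Q) ^ i =
          - (f.leadingCoeff * (P.2 ^ Q) ^ t) := eq_neg_of_add_eq_zero_left hrel
        rw [h7]
        field_simp)
  rw [hTc, abs_le]
  rw [hUc] at hsplit
  have g1 : (Q : ℝ) ≤ G.card + (e + 1) * (e + 1) := by exact_mod_cast hGc
  have g2 : (G.card : ℝ) * (e + 1) ≤ T.card + (U.filter (fun P => ¬ P.2 ^ Q = P.2)).card := by
    have : G.card * (e + 1) ≤ T.card + (U.filter (fun P => ¬ P.2 ^ Q = P.2)).card := by omega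
    exact_mod_cast this
  have g3 : (Q : ℝ) * (e + 1) ≤ (G.card + (e + 1) * (e + 1)) * (e + 1) := by gcongr
  push_cast at hup hlow ⊢
  have g4 : ((e : ℝ) + 1) ^ 3 * 1 ≤ (e + 1) ^ 3 * Real.sqrt Q := by gcongr
  have g5 : 0 ≤ ((e : ℝ) + 1) ^ 3 * Real.sqrt Q := by positivity
  constructor
  · nlinarith
  · nlinarith
end PD3
end HW

namespace HW
open Polynomial
section PC

theorem cardQuot_mul' {S : Type*} [CommRing S] [IsDedekindDomain S] [Infinite S] (I J : Ideal S) :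
    Submodule.cardQuot (I * J) = Submodule.cardQuot I * Submodule.cardQuot J := by
  exact UniqueFactorizationMonoid.multiplicative_of_coprime Submodule.cardQuot I J
      (Submodule.cardQuot_bot _ _)
      (fun {I J} hI => by simp [Ideal.isUnit_iff.mp hI, Ideal.mul_top])
      (fun {I} i hI =>
        have : Ideal.IsPrime I := Ideal.isPrime_of_prime hI
        cardQuot_pow_of_prime hI.ne_zero)
      fun {I J} hIJ => cardQuot_mul_of_coprime <| Ideal.isCoprime_iff_sup_eq.mpr
        (Ideal.isUnit_iff.mp
          (hIJ (Ideal.dvd_iff_le.mpr le_sup_left) (Ideal.dvd_iff_le.mpr le_sup_right)))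

variable (F : Type*) {D : Type*} [Field F] [CommRing D] [Algebra F D]

/-- degree of an ideal -/
noncomputable def dg (E : Ideal D) : ℕ := Module.finrank F (D ⧸ E)

/-- finite quotients -/
def FQ (D : Type*) [CommRing D] [Algebra F D] : Prop :=
  ∀ E : Ideal D, E ≠ ⊥ → Module.Finite F (D ⧸ E)

/-- ideals of degree n -/
def JJ (D : Type*) [CommRing D] [Algebra F D] (n : ℕ) : Set (Ideal D) := {E | E ≠ ⊥ ∧ dg F E = n}

variable {F}
variable [Finite F] (hF : FQ F D)
include hF

lemma card_dg {E : Ideal D} (hE : E ≠ ⊥) : Submodule.cardQuot E = Nat.card F ^ dg F E := by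
  have := hF E hE
  rw [Submodule.cardQuot_apply, dg]
  exact Module.natCard_eq_pow_finrank

lemma dg_pos {E : Ideal D} (hE : E ≠ ⊥) (hE1 : E ≠ ⊤) : 1 ≤ dg F E := by
  have := hF E hE
  have : Nontrivial (D ⧸ E) := Ideal.Quotient.nontrivial_iff.mpr hE1
  exact Module.finrank_pos

omit [Finite F] hF in
lemma dg_top : dg F (⊤ : Ideal D) = 0 := by
  have : Subsingleton (D ⧸ (⊤ : Ideal D)) := Ideal.Quotient.subsingleton_iff.mpr rfl
  exact Module.finrank_zero_of_subsingleton

variable [IsDedekindDomain D] [Infinite D]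

lemma dg_mul {E E' : Ideal D} (hE : E ≠ ⊥) (hE' : E' ≠ ⊥) : dg F (E * E') = dg F E + dg F E' := by
  have hq : 1 < Nat.card F := Finite.one_lt_card
  apply Nat.pow_right_injective hq
  simp only
  rw [pow_add, ← card_dg hF hE, ← card_dg hF hE', ← cardQuot_mul', card_dg hF]
  exact mul_ne_zero hE hE'

lemma dg_pow {E : Ideal D} (hE : E ≠ ⊥) (k : ℕ) : dg F (E ^ k) = k * dg F E := by
  induction k with
  | zero => simp [dg_top]
  | succ k ih => rw [pow_succ, dg_mul hF (pow_ne_zero k hE) hE, ih]; ring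

lemma JJ_finite (n : ℕ) : (JJ F D n).Finite := by
  classical
  obtain ⟨s, hs⟩ := Infinite.exists_subset_card_eq D (Nat.card F ^ n + 1)
  set t := ∏ p ∈ s.offDiag, (p.1 - p.2) with ht
  have ht0 : t ≠ 0 := by
    rw [ht, Finset.prod_ne_zero_iff]
    intro p hp
    rw [Finset.mem_offDiag] at hp
    exact sub_ne_zero.mpr hp.2.2
  have hsub : JJ F D n ⊆ {E | t ∈ E} := by
    rintro E ⟨hE, hEn⟩
    have := hF E hE
    have hfin : Finite (D ⧸ E) := Module.finite_of_finite F
    have hc : Nat.card (D ⧸ E) = Nat.card F ^ n := by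
      rw [← hEn, ← card_dg hF hE]; rfl
    have : Fintype (D ⧸ E) := Fintype.ofFinite _
    obtain ⟨a, ha, b, hb, hab, h⟩ := Finset.exists_ne_map_eq_of_card_lt_of_maps_to
      (s := s) (t := (Finset.univ : Finset (D ⧸ E))) (by
        rw [Finset.card_univ, ← Nat.card_eq_fintype_card, hc, hs]; omega)
      (f := Ideal.Quotient.mk E) (fun _ _ => Finset.mem_univ _)
    have h1 : a - b ∈ E := Ideal.Quotient.eq.mp h
    have h2 : (a - b) ∣ t := Finset.dvd_prod_of_mem (fun p : D × D => p.1 - p.2)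
      (Finset.mem_offDiag.mpr ⟨ha, hb, hab⟩ : (a, b) ∈ s.offDiag)
    exact Ideal.mem_of_dvd E h2 h1
  refine Set.Finite.subset ?_ hsub
  have hne : Ideal.span {t} ≠ ⊥ := by simpa using ht0
  have := UniqueFactorizationMonoid.fintypeSubtypeDvd (Ideal.span {t}) hne
  have hfin : Finite {E : Ideal D // E ∣ Ideal.span {t}} := Finite.of_fintype _
  apply Set.Finite.subset (Set.finite_coe_iff.mp hfin : {E : Ideal D | E ∣ Ideal.span {t}}.Finite)
  intro E hE
  exact Ideal.dvd_span_singleton.mpr hE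

/-- number of ideals of degree n -/
noncomputable def AA (F D : Type*) [Field F] [CommRing D] [Algebra F D] (n : ℕ) : ℕ :=
  (JJ F D n).ncard

lemma AA_zero : AA F D 0 = 1 := by
  rw [AA, Set.ncard_eq_one]
  refine ⟨⊤, ?_⟩
  ext E
  simp only [JJ, Set.mem_ofPred_eq, Set.mem_singleton_iff]
  constructor
  · rintro ⟨h1, h2⟩
    by_contra h3
    have := dg_pos hF h1 h3
    omega
  · rintro rfl
    exact ⟨top_ne_bot, dg_top⟩

/-- symmetry from counting -/
lemma symm_count (q w e N : ℕ) (hq : q = Nat.card F) (M : Finset D) 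
    (hM : ∀ t ∈ M, t ≠ 0 ∧ dg F (Ideal.span {t}) = N) (m : ℕ) (hN : e + m = N)
    (he : ∀ E ∈ JJ F D e, ∀ s : Finset D, (∀ t, t ∈ s ↔ t ∈ M ∧ t ∈ E) → s.card * q ^ e = q ^ w)
    (hm : ∀ E ∈ JJ F D m, ∀ s : Finset D, (∀ t, t ∈ s ↔ t ∈ M ∧ t ∈ E) → s.card * q ^ m = q ^ w) :
    (AA F D e : ℝ) / q ^ e = AA F D m / q ^ m := by
  classical
  have hq1 : 1 < q := by rw [hq]; exact Finite.one_lt_card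
  have hq0 : (q : ℝ) ≠ 0 := by exact_mod_cast (by omega : q ≠ 0)
  have key : ∀ e, (∀ E ∈ JJ F D e, ∀ s : Finset D, (∀ t, t ∈ s ↔ t ∈ M ∧ t ∈ E) →
      s.card * q ^ e = q ^ w) → (AA F D e : ℝ) / q ^ e * q ^ w =
      ∑ t ∈ M, (((JJ_finite hF e).toFinset.filter (fun E => t ∈ E)).card : ℝ) := by
    intro e he
    have h1 : ∀ E ∈ (JJ_finite hF e).toFinset, ((M.filter (fun t => t ∈ E)).card : ℝ) =
        q ^ w / q ^ e := by
      intro E hE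
      rw [eq_div_iff (pow_ne_zero _ hq0)]
      have := he E (by simpa using hE) (M.filter (fun t => t ∈ E)) (by simp)
      exact_mod_cast this
    have h2 : ∑ t ∈ M, ((JJ_finite hF e).toFinset.filter (fun E => t ∈ E)).card =
        ∑ E ∈ (JJ_finite hF e).toFinset, (M.filter (fun t => t ∈ E)).card :=
      Finset.sum_card_bipartiteAbove_eq_sum_card_bipartiteBelow (fun (t : D) (E : Ideal D) => t ∈ E)
    have h3 : ∑ t ∈ M, (((JJ_finite hF e).toFinset.filter (fun E => t ∈ E)).card : ℝ) =
        ∑ E ∈ (JJ_finite hF e).toFinset, ((M.filter (fun t => t ∈ E)).card : ℝ) := by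
      exact_mod_cast h2
    rw [h3, Finset.sum_congr rfl h1, Finset.sum_const, AA, Set.ncard_eq_toFinset_card _ (JJ_finite hF e)]
    rw [nsmul_eq_mul]
    ring
  have hw : (q : ℝ) ^ w ≠ 0 := pow_ne_zero _ hq0
  apply mul_right_cancel₀ hw
  rw [key e he, key m hm]
  apply Finset.sum_congr rfl
  intro t ht
  obtain ⟨ht0, htN⟩ := hM t ht
  have hspan : Ideal.span {t} ≠ ⊥ := by simpa using ht0
  congr 1
  have hle : ∀ e m, e + m = N → ((JJ_finite hF e).toFinset.filter (fun E => t ∈ E)).card ≤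
      ((JJ_finite hF m).toFinset.filter (fun E => t ∈ E)).card := by
    intro e m hN
    have hex : ∀ E : Ideal D, t ∈ E → ∃ E', E * E' = Ideal.span {t} := by
      intro E hE
      obtain ⟨E', h⟩ := Ideal.dvd_span_singleton.mpr hE
      exact ⟨E', h.symm⟩
    choose! g hg using hex
    apply Finset.card_le_card_of_injOn g
    · intro E hE
      simp only [Finset.coe_filter, Set.Finite.mem_toFinset, Set.mem_ofPred_eq, JJ] at hE ⊢
      have h1 := hg E hE.2
      have h2 : E ≠ ⊥ := hE.1.1
      have h3 : g E ≠ ⊥ := by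
        intro h; rw [h, Ideal.mul_bot] at h1; exact hspan h1.symm
      refine ⟨⟨h3, ?_⟩, ?_⟩
      · have := dg_mul hF h2 h3
        rw [h1, htN, hE.1.2] at this
        omega
      · rw [← Ideal.dvd_span_singleton, ← h1]
        exact dvd_mul_left _ _
    · intro E hE E' hE' h
      simp only [Finset.coe_filter, Set.Finite.mem_toFinset, Set.mem_ofPred_eq, JJ] at hE hE'
      have h1 := hg E hE.2
      have h2 := hg E' hE'.2
      have h3 : g E ≠ 0 := by
        intro h; rw [h, mul_zero] at h1; exact hspan h1.symm
      rw [← h] at h2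
      exact mul_right_cancel₀ h3 (h1.trans h2.symm)
  exact le_antisymm (hle e m hN) (hle m e (by omega))
end PC
end HW

namespace HW
open Polynomial
section PC2
variable {F : Type*} {D : Type*} [Field F] [CommRing D] [Algebra F D]
variable [Finite F] (hF : FQ F D) [IsDedekindDomain D] [Infinite D]

/-- primes of degree at most n -/
def PS (F D : Type*) [Field F] [CommRing D] [Algebra F D] (n : ℕ) : Set (Ideal D) :=
  {P | P ≠ ⊥ ∧ P.IsPrime ∧ dg F P ≤ n}

include hF

lemma PS_finite (n : ℕ) : (PS F D n).Finite := by
  apply Set.Finite.subset ((Set.finite_Iic n).biUnion (fun i _ => JJ_finite hF i))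
  rintro P ⟨h1, h2, h3⟩
  simp only [Set.mem_iUnion]
  exact ⟨dg F P, h3, h1, rfl⟩

/-- point count through primes -/
noncomputable def NN (hF : FQ F D) (j : ℕ) : ℕ :=
  ∑ P ∈ (PS_finite hF j).toFinset, if dg F P ∣ j then dg F P else 0

lemma NN_eq {j n : ℕ} (hj : 1 ≤ j) (hn : j ≤ n) :
    NN hF j = ∑ P ∈ (PS_finite hF n).toFinset, if dg F P ∣ j then dg F P else 0 := by
  rw [NN]
  apply Finset.sum_subset
  · intro P
    simp only [Set.Finite.mem_toFinset, PS, Set.mem_ofPred_eq]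
    rintro ⟨h1, h2, h3⟩
    exact ⟨h1, h2, h3.trans hn⟩
  · intro P hP hP'
    simp only [Set.Finite.mem_toFinset, PS, Set.mem_ofPred_eq] at hP hP'
    rw [if_neg]
    intro h
    exact hP' ⟨hP.1, hP.2.1, Nat.le_of_dvd hj h⟩

lemma dg_prod (s : Multiset (Ideal D)) (hs : ∀ P ∈ s, P ≠ ⊥) :
    s.prod ≠ ⊥ ∧ dg F s.prod = (s.map (dg F)).sum := by
  induction s using Multiset.induction with
  | empty => simp [dg_top]
  | cons a s ih =>
    have h1 := hs a (Multiset.mem_cons_self a s)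
    have h2 := ih (fun P hP => hs P (Multiset.mem_cons_of_mem hP))
    rw [Multiset.prod_cons, Multiset.map_cons, Multiset.sum_cons, dg_mul hF h1 h2.1, h2.2]
    exact ⟨mul_ne_zero h1 h2.1, rfl⟩

open UniqueFactorizationMonoid Classical in
lemma dg_eq_sum {n : ℕ} {I : Ideal D} (hI : I ∈ JJ F D n) :
    n = ∑ P ∈ (PS_finite hF n).toFinset, dg F P *
      ((Finset.Icc 1 n).filter (fun k => P ^ k ∣ I)).card := by
  obtain ⟨h0, hn⟩ := hI
  have hnf : (normalizedFactors I).prod = I := by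
    have := prod_normalizedFactors h0
    exact associated_iff_eq.mp this
  have hdvd : ∀ E : Ideal D, E ∣ I → E ≠ ⊥ ∧ dg F E ≤ n := by
    rintro E ⟨E', h⟩
    have h1 : E ≠ ⊥ := by rintro rfl; rw [Ideal.bot_mul] at h; exact h0 h
    have h2 : E' ≠ ⊥ := by rintro rfl; rw [Ideal.mul_bot] at h; exact h0 h
    refine ⟨h1, ?_⟩
    rw [h, dg_mul hF h1 h2] at hn
    omega
  have h1 := (dg_prod hF (normalizedFactors I) (fun P hP => (hdvd P (dvd_of_mem_normalizedFactors hP)).1)).2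
  rw [hnf, hn, Finset.sum_multiset_map_count] at h1
  refine h1.trans ?_
  rw [Finset.sum_subset (s₂ := (PS_finite hF n).toFinset)]
  · apply Finset.sum_congr rfl
    intro P hP
    simp only [Set.Finite.mem_toFinset, PS, Set.mem_ofPred_eq] at hP
    have hPp : Prime P := Ideal.prime_of_isPrime hP.1 hP.2.1
    rw [smul_eq_mul, mul_comm]
    congr 1
    have hiff : ∀ k, P ^ k ∣ I ↔ k ≤ Multiset.count P (normalizedFactors I) := by
      intro k
      rw [pow_dvd_iff_le_emultiplicity, emultiplicity_eq_count_normalizedFactors hPp.irreducible h0,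
        normalize_eq]
      simp
    have hle : Multiset.count P (normalizedFactors I) ≤ n := by
      have := (hdvd _ ((hiff _).mpr le_rfl)).2
      rw [dg_pow hF hP.1] at this
      have h3 := dg_pos hF hP.1 hP.2.1.ne_top
      nlinarith
    have : (Finset.Icc 1 n).filter (fun k => P ^ k ∣ I) =
        Finset.Icc 1 (Multiset.count P (normalizedFactors I)) := by
      ext k
      simp only [Finset.mem_filter, Finset.mem_Icc, hiff]
      omega
    rw [this, Nat.card_Icc]
    omega
  · intro P hP
    rw [Multiset.mem_toFinset] at hP
    simp only [Set.Finite.mem_toFinset, PS, Set.mem_ofPred_eq]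
    have := hdvd P (dvd_of_mem_normalizedFactors hP)
    exact ⟨this.1, Ideal.isPrime_of_prime (prime_of_normalized_factor P hP), this.2⟩
  · intro P _ hP
    rw [Multiset.mem_toFinset] at hP
    rw [Multiset.count_eq_zero_of_notMem hP, zero_smul]

open Classical in
lemma card_dvd {n : ℕ} {E : Ideal D} (hE : E ≠ ⊥) :
    ((JJ_finite hF n).toFinset.filter (fun I => E ∣ I)).card =
      if dg F E ≤ n then AA F D (n - dg F E) else 0 := by
  split_ifs with h
  · rw [AA, Set.ncard_eq_toFinset_card _ (JJ_finite hF (n - dg F E))]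
    symm
    apply Finset.card_bij (fun I _ => E * I)
    · intro I hI
      simp only [Set.Finite.mem_toFinset, JJ, Set.mem_ofPred_eq, Finset.mem_filter] at hI ⊢
      refine ⟨⟨mul_ne_zero hE hI.1, ?_⟩, dvd_mul_right _ _⟩
      rw [dg_mul hF hE hI.1]
      omega
    · intro I _ J _ hIJ
      exact mul_left_cancel₀ hE hIJ
    · intro I hI
      simp only [Set.Finite.mem_toFinset, JJ, Set.mem_ofPred_eq, Finset.mem_filter] at hI ⊢
      obtain ⟨⟨h1, h2⟩, J, h3⟩ := hI
      have hJ : J ≠ ⊥ := by rintro rfl; rw [Ideal.mul_bot] at h3; exact h1 h3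
      refine ⟨J, (Set.Finite.mem_toFinset _).mpr ⟨hJ, ?_⟩, h3.symm⟩
      rw [h3, dg_mul hF hE hJ] at h2
      omega
  · rw [Finset.card_eq_zero, Finset.filter_eq_empty_iff]
    rintro I hI ⟨J, h3⟩
    simp only [Set.Finite.mem_toFinset, JJ, Set.mem_ofPred_eq] at hI
    have hJ : J ≠ ⊥ := by rintro rfl; rw [Ideal.mul_bot] at h3; exact hI.1 h3
    have h2 := hI.2
    rw [h3, dg_mul hF hE hJ] at h2
    omega

lemma recur' (n : ℕ) : n * AA F D n = ∑ j ∈ Finset.Icc 1 n, AA F D (n - j) * NN hF j := by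
  classical
  have h1 : n * AA F D n = ∑ I ∈ (JJ_finite hF n).toFinset, ∑ P ∈ (PS_finite hF n).toFinset,
      dg F P * ((Finset.Icc 1 n).filter (fun k => P ^ k ∣ I)).card := by
    rw [← Finset.sum_congr rfl (fun I hI => dg_eq_sum hF ((Set.Finite.mem_toFinset _).mp hI)),
      Finset.sum_const, smul_eq_mul, mul_comm, AA, Set.ncard_eq_toFinset_card _ (JJ_finite hF n)]
  have h2 : ∀ j ∈ Finset.Icc 1 n, AA F D (n - j) * NN hF j =
      ∑ P ∈ (PS_finite hF n).toFinset, dg F P * (if dg F P ∣ j then AA F D (n - j) else 0) := by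
    intro j hj
    rw [Finset.mem_Icc] at hj
    rw [NN_eq hF hj.1 hj.2, Finset.mul_sum]
    apply Finset.sum_congr rfl
    intro P _
    split_ifs <;> ring
  rw [h1, Finset.sum_congr rfl h2, Finset.sum_comm, Finset.sum_comm (s := Finset.Icc 1 n)]
  apply Finset.sum_congr rfl
  intro P hP
  simp only [Set.Finite.mem_toFinset, PS, Set.mem_ofPred_eq] at hP
  have hpos := dg_pos hF hP.1 hP.2.1.ne_top
  rw [← Finset.mul_sum, ← Finset.mul_sum]
  congr 1
  have h4 := Finset.sum_card_bipartiteAbove_eq_sum_card_bipartiteBelow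
    (s := (JJ_finite hF n).toFinset) (t := Finset.Icc 1 n) (fun (I : Ideal D) (k : ℕ) => P ^ k ∣ I)
  refine Eq.trans (Finset.sum_congr rfl (fun I _ => ?_)) (h4.trans ?_)
  · rw [Finset.bipartiteAbove]
  rw [← Finset.sum_filter]
  have h3 : ∀ k ∈ Finset.Icc 1 n, (Finset.bipartiteBelow (fun (I : Ideal D) (k : ℕ) => P ^ k ∣ I)
      (JJ_finite hF n).toFinset k).card = if k * dg F P ≤ n then AA F D (n - k * dg F P) else 0 := by
    intro k _
    rw [← dg_pow hF hP.1, ← card_dvd hF (pow_ne_zero k hP.1)]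
    congr 1
  rw [Finset.sum_congr rfl h3, ← Finset.sum_filter]
  apply Finset.sum_bij (fun k _ => k * dg F P)
  · intro k hk
    simp only [Finset.mem_filter, Finset.mem_Icc] at hk ⊢
    refine ⟨⟨?_, hk.2⟩, dvd_mul_left _ _⟩
    nlinarith
  · intro a _ b _ h
    exact Nat.eq_of_mul_eq_mul_right hpos h
  · intro j hj
    simp only [Finset.mem_filter, Finset.mem_Icc] at hj
    obtain ⟨⟨ha, hb⟩, k, hk⟩ := hj
    refine ⟨k, ?_, by rw [hk, mul_comm]⟩
    simp only [Finset.mem_filter, Finset.mem_Icc]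
    have : 1 ≤ k := by
      rcases Nat.eq_zero_or_pos k with h | h
      · subst h; omega
      · exact h
    refine ⟨⟨this, ?_⟩, by rw [mul_comm, ← hk]; exact hb⟩
    nlinarith
  · intro k _
    rfl

lemma recur (n : ℕ) : ((n + 1 : ℕ) : ℝ) * (AA F D (n + 1) : ℝ) =
    ∑ ij ∈ Finset.HasAntidiagonal.antidiagonal n, (AA F D ij.1 : ℝ) * (NN hF (ij.2 + 1) : ℝ) := by
  have h := recur' hF (n + 1)
  have h2 : ∑ j ∈ Finset.Icc 1 (n + 1), AA F D (n + 1 - j) * NN hF j =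
      ∑ ij ∈ Finset.HasAntidiagonal.antidiagonal n, AA F D ij.1 * NN hF (ij.2 + 1) := by
    symm
    apply Finset.sum_bij (fun ij _ => ij.2 + 1)
    · intro ij hij
      rw [Finset.HasAntidiagonal.mem_antidiagonal] at hij
      rw [Finset.mem_Icc]; omega
    · intro a ha b hb hab
      rw [Finset.HasAntidiagonal.mem_antidiagonal] at ha hb
      ext <;> omega
    · intro j hj
      rw [Finset.mem_Icc] at hj
      exact ⟨(n + 1 - j, j - 1), by rw [Finset.HasAntidiagonal.mem_antidiagonal]; dsimp only; omega, by dsimp only; omega⟩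
    · intro ij hij
      rw [Finset.HasAntidiagonal.mem_antidiagonal] at hij
      congr 2
      omega
  rw [h2] at h
  exact_mod_cast h
end PC2
end HW

namespace HW
open Polynomial
section PC3
variable {F : Type*} {D : Type*} [Field F] [CommRing D] [Algebra F D]
variable [Finite F] (hF : FQ F D) [IsDedekindDomain D] [Infinite D]
variable (K : Type*) [Field K] [Algebra F K] [IsAlgClosed K]
include hF

omit [Infinite D] [Finite F] in
lemma ker_card [Finite F] {P : Ideal D} (hP : P ≠ ⊥) (hP' : P.IsPrime) :
    {φ : D →ₐ[F] K | RingHom.ker φ = P}.Finite ∧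
    {φ : D →ₐ[F] K | RingHom.ker φ = P}.ncard = dg F P := by
  have := hF P hP
  have hmax : P.IsMaximal := hP'.isMaximal hP
  let := Ideal.Quotient.field P
  have e : (D ⧸ P →ₐ[F] K) ≃ {φ : D →ₐ[F] K | RingHom.ker φ = P} :=
    { toFun := fun ψ => ⟨ψ.comp (Ideal.Quotient.mkₐ F P), by
        rw [Set.mem_ofPred_eq]
        ext z
        rw [RingHom.mem_ker, AlgHom.comp_apply, map_eq_zero_iff ψ ψ.injective]
        exact Ideal.Quotient.eq_zero_iff_mem⟩
      invFun := fun φ => Ideal.Quotient.liftₐ P φ.1 (fun a ha => by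
        have h := φ.2
        rw [Set.mem_ofPred_eq] at h
        rw [← h] at ha
        exact ha)
      left_inv := fun ψ => by
        apply Ideal.Quotient.algHom_ext
        ext z
        rfl
      right_inv := fun φ => by
        ext z
        rfl }
  have hfin : Finite {φ : D →ₐ[F] K | RingHom.ker φ = P} := Finite.of_equiv _ e
  refine ⟨Set.finite_coe_iff.mp hfin, ?_⟩
  rw [← Nat.card_coe_set_eq, ← Nat.card_congr e, Nat.card_eq_fintype_card, AlgHom.card, dg]

omit [Infinite D] [Finite F] in
lemma pow_iff [Finite F] {P : Ideal D} (hP : P ≠ ⊥) (hP' : P.IsPrime) (j : ℕ) :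
    (∀ z : D ⧸ P, z ^ (Nat.card F ^ j) = z) ↔ dg F P ∣ j := by
  have := hF P hP
  have hmax : P.IsMaximal := hP'.isMaximal hP
  let := Ideal.Quotient.field P
  let : Fintype F := Fintype.ofFinite F
  have hfin : Finite (D ⧸ P) := Module.finite_of_finite F
  rw [dg, ← FiniteField.orderOf_frobeniusAlgHom F (D ⧸ P), orderOf_dvd_iff_pow_eq_one]
  rw [AlgHom.ext_iff]
  apply forall_congr'
  intro z
  rw [AlgHom.coe_pow, FiniteField.coe_frobeniusAlgHom, pow_iterate, AlgHom.one_apply,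
    Nat.card_eq_fintype_card]

lemma NN_hom (j : ℕ) (hj : 1 ≤ j) :
    {φ : D →ₐ[F] K | ∀ z, φ z ^ (Nat.card F ^ j) = φ z}.ncard = NN hF j := by
  classical
  have hq1 : 1 < Nat.card F ^ j := Nat.one_lt_pow (by omega) Finite.one_lt_card
  set S := (PS_finite hF j).toFinset.filter (fun P => dg F P ∣ j) with hS
  have hSm : ∀ P, P ∈ S ↔ (P ≠ ⊥ ∧ P.IsPrime) ∧ dg F P ∣ j := by
    intro P
    rw [hS, Finset.mem_filter, Set.Finite.mem_toFinset]
    constructor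
    · rintro ⟨⟨h1, h2, h3⟩, h4⟩; exact ⟨⟨h1, h2⟩, h4⟩
    · rintro ⟨⟨h1, h2⟩, h4⟩; exact ⟨⟨h1, h2, Nat.le_of_dvd hj h4⟩, h4⟩
  have hker : ∀ φ : D →ₐ[F] K, ∀ j, (∀ z, φ z ^ (Nat.card F ^ j) = φ z) ↔
      (∀ z : D ⧸ RingHom.ker φ, z ^ (Nat.card F ^ j) = z) := by
    intro φ j
    rw [Ideal.Quotient.mk_surjective.forall]
    apply forall_congr'
    intro z
    rw [← map_pow, ← map_pow, Ideal.Quotient.eq, RingHom.mem_ker, map_sub, sub_eq_zero]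
  have hkp : ∀ φ : D →ₐ[F] K, (RingHom.ker φ).IsPrime := fun φ => RingHom.ker_isPrime φ
  have hmem : ∀ φ : D →ₐ[F] K, (∀ z, φ z ^ (Nat.card F ^ j) = φ z) ↔ RingHom.ker φ ∈ S := by
    intro φ
    rw [hSm]
    constructor
    · intro h
      have hb : RingHom.ker φ ≠ ⊥ := by
        intro hb
        have hinj : Function.Injective φ := (RingHom.injective_iff_ker_eq_bot φ).mpr hb
        have hfin : (Set.range φ).Finite := by
          apply Set.Finite.subset ((X ^ (Nat.card F ^ j) - X : K[X]).roots.toFinset.finite_toSet)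
          rintro _ ⟨z, rfl⟩
          rw [Finset.mem_coe, Multiset.mem_toFinset,
            mem_roots (FiniteField.X_pow_card_sub_X_ne_zero K hq1)]
          simp [h z]
        exact Set.infinite_range_of_injective hinj hfin
      exact ⟨⟨hb, hkp φ⟩, (pow_iff hF hb (hkp φ) j).mp ((hker φ j).mp h)⟩
    · rintro ⟨⟨hb, hp⟩, hd⟩
      exact (hker φ j).mpr ((pow_iff hF hb hp j).mpr hd)
  have hfin : {φ : D →ₐ[F] K | ∀ z, φ z ^ (Nat.card F ^ j) = φ z}.Finite := by
    have : {φ : D →ₐ[F] K | ∀ z, φ z ^ (Nat.card F ^ j) = φ z} ⊆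
        ⋃ P ∈ S, {φ : D →ₐ[F] K | RingHom.ker φ = P} := by
      intro φ hφ
      simp only [Set.mem_iUnion]
      exact ⟨RingHom.ker φ, (hmem φ).mp hφ, rfl⟩
    refine Set.Finite.subset ?_ this
    apply Set.Finite.biUnion S.finite_toSet
    intro P hP
    have := (hSm P).mp hP
    exact (ker_card hF K this.1.1 this.1.2).1
  rw [Set.ncard_eq_toFinset_card _ hfin, NN, ← Finset.sum_filter, ← hS]
  rw [Finset.card_eq_sum_card_fiberwise (f := fun φ : D →ₐ[F] K => RingHom.ker φ) (t := S)]
  · apply Finset.sum_congr rfl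
    intro P hP
    have hP1 := (hSm P).mp hP
    obtain ⟨h1, h2⟩ := ker_card hF K hP1.1.1 hP1.1.2
    rw [← h2, Set.ncard_eq_toFinset_card _ h1]
    congr 1
    ext φ
    simp only [Finset.mem_filter, Set.Finite.mem_toFinset, Set.mem_ofPred_eq]
    constructor
    · exact fun h => h.2
    · intro h; exact ⟨(hmem φ).mpr (h ▸ hP), h⟩
  · intro φ hφ
    simp only [Set.Finite.coe_toFinset, Set.mem_ofPred_eq] at hφ
    exact (hmem φ).mp hφ

omit [IsDedekindDomain D] [Infinite D] in
lemma exists_hom_of_AA (h : AA F D 1 ≠ 0) : Nonempty (D →ₐ[F] F) := by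
  have : (JJ F D 1).Nonempty := by
    by_contra h2
    rw [Set.not_nonempty_iff_eq_empty] at h2
    rw [AA, h2, Set.ncard_empty] at h
    exact h rfl
  obtain ⟨E, hE, hE1⟩ := this
  rw [dg] at hE1
  have hb := Module.finite_of_finrank_eq_succ hE1
  have hbij : Function.Bijective (algebraMap F (D ⧸ E)) := by
    have : Nontrivial (D ⧸ E) := Module.nontrivial_of_finrank_pos (R := F) (by omega)
    exact Module.Free.bijective_algebraMap_of_finrank_eq_one hE1
  let e : F ≃ₐ[F] (D ⧸ E) := AlgEquiv.ofBijective (Algebra.ofId F (D ⧸ E)) hbij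
  exact ⟨(e.symm : (D ⧸ E) →ₐ[F] F).comp (Ideal.Quotient.mkₐ F E)⟩
end PC3
end HW

namespace HW
open Polynomial
section PB
set_option linter.unusedSectionVars false

lemma local_gen {F κ₀ A κ : Type*} [Field F] [Field κ₀] [CommRing A] [Field κ] [Algebra F A]
    [Algebra κ₀ A] [Algebra F κ₀] [IsScalarTower F κ₀ A] (π : A →+* κ) (a₀ : κ₀) (x y : A)
    (hx : algebraMap κ₀ A a₀ = x) (f : F[X]) (c : F)
    (hrel : aeval x f * aeval y f = algebraMap F A c)
    (hne : π (aeval x f * aeval y (derivative f)) ≠ 0) :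
    ∃ u : A, π u ≠ 0 ∧ ∀ g : κ₀[X], π (aeval y g) = 0 → u * aeval y g = 0 := by
  set θ' : κ₀[X] →+* κ := π.comp (aeval y : κ₀[X] →ₐ[κ₀] A).toRingHom with hθ'
  have hθ'' : ∀ g, θ' g = π (aeval y g) := fun g => rfl
  set G : κ₀[X] := C (aeval a₀ f) * f.map (algebraMap F κ₀) - C (algebraMap F κ₀ c) with hG
  have hfx : algebraMap κ₀ A (aeval a₀ f) = aeval x f := by
    rw [← hx, aeval_algebraMap_apply]
  have hGy : aeval y G = 0 := by
    rw [hG, map_sub, map_mul, aeval_C, aeval_C, aeval_map_algebraMap, hfx, hrel,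
      ← IsScalarTower.algebraMap_apply, sub_self]
  have hGd : aeval y (derivative G) = aeval x f * aeval y (derivative f) := by
    rw [hG, derivative_sub, derivative_C, sub_zero, derivative_C_mul, derivative_map, map_mul,
      aeval_C, aeval_map_algebraMap, hfx]
  obtain ⟨m, hm⟩ : ∃ m, RingHom.ker θ' = Ideal.span {m} :=
    ⟨_, (Submodule.IsPrincipal.span_singleton_generator (RingHom.ker θ')).symm⟩
  have hmem : ∀ g, π (aeval y g) = 0 → m ∣ g := by
    intro g hg
    rw [← Ideal.mem_span_singleton, ← hm, RingHom.mem_ker]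
    exact hg
  have hm0 : π (aeval y m) = 0 := by
    have : m ∈ RingHom.ker θ' := by rw [hm]; exact Ideal.mem_span_singleton_self m
    exact this
  obtain ⟨h, hh⟩ := hmem G (by rw [hGy, map_zero])
  refine ⟨aeval y h, ?_, ?_⟩
  · intro h0
    obtain ⟨k, hk⟩ := hmem h h0
    apply hne
    rw [← hGd, hh, hk, derivative_mul, map_add, map_mul, map_mul, map_mul, derivative_mul]
    simp only [map_add, map_mul, hm0]
    ring
  · intro g hg
    obtain ⟨k, hk⟩ := hmem g hg
    rw [hk, ← map_mul, show h * (m * k) = G * k by rw [hh]; ring, map_mul, hGy, zero_mul]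

variable {F R D : Type*} [Field F] [CommRing R] [CommRing D] [Algebra F R] [Algebra F D]
  [Algebra R D] [IsScalarTower F R D] {f : F[X]} {c : F} {x y : R}

lemma delta_ne (H : Crv f c x y) (hs : f.Separable) : aeval y (derivative f) ≠ 0 := by
  apply H.aeval_y_ne
  intro h
  rw [Polynomial.Separable, h, isCoprime_zero_right] at hs
  have := natDegree_eq_zero_of_isUnit hs
  have := H.dpos
  omega

lemma Crv.noeth (H : Crv f c x y) : IsNoetherianRing R := by
  have : Algebra.adjoin F {x, y} = ⊤ := by
    rw [eq_top_iff]
    intro r _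
    have hr : r ∈ WW F x y Set.univ := by rw [H.gen]; trivial
    have hle : WW F x y Set.univ ≤ Subalgebra.toSubmodule (Algebra.adjoin F {x, y}) := by
      rw [WW, Submodule.span_le]
      rintro _ ⟨p, _, rfl⟩
      rw [mon, SetLike.mem_coe, Subalgebra.mem_toSubmodule]
      exact mul_mem (pow_mem (Algebra.subset_adjoin (by simp)) _)
        (pow_mem (Algebra.subset_adjoin (by simp)) _)
    exact hle hr
  have hft : Algebra.FiniteType F R := Subalgebra.fg_def.mpr ⟨{x, y}, by simp, this⟩ |> fun h => ⟨h⟩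
  exact Algebra.FiniteType.isNoetherianRing F R

lemma Crv.fin_quot [IsDomain R] (H : Crv f c x y) {I : Ideal R} (hI : I ≠ ⊥) :
    Module.Finite F (R ⧸ I) := by
  obtain ⟨g, hg, hg0⟩ := Submodule.exists_mem_ne_zero_of_ne_bot hI
  obtain ⟨n, hn⟩ := H.exists_V g
  have h1 := (H.quot_finite hg0 (hn (n + 1) (by omega))).1
  have hle : Ideal.span {g} ≤ I := (Ideal.span_singleton_le_iff_mem I).mpr hg
  exact Module.Finite.of_surjective (Ideal.Quotient.factorₐ F hle).toLinearMap
    (Ideal.Quotient.factor_surjective hle)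

lemma Crv.inf (H : Crv f c x y) : Infinite R := by
  by_contra h
  have hfin : Finite R := not_infinite_iff_finite.mp h
  have : Module.Finite F R := Module.Finite.of_finite
  have h2 : Finite (TT f.natDegree) := Module.Finite.finite_basis H.bas
  have hi : Function.Injective (fun n : ℕ => (⟨(n, 0), mem_TT.mpr (Or.inr H.dpos)⟩ : TT f.natDegree)) := by
    intro a b hab
    simpa using hab
  exact not_injective_infinite_finite _ hi

variable (δ : R) (hδ : δ ≠ 0) [IsLocalization.Away δ D] [IsDomain R]
include hδ

lemma D_dom : IsDomain D :=
  IsLocalization.isDomain_of_le_nonZeroDivisors (M := Submonoid.powers δ) D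
    (powers_le_nonZeroDivisors_of_noZeroDivisors hδ)

lemma D_inj : Function.Injective (algebraMap R D) :=
  IsLocalization.injective D (powers_le_nonZeroDivisors_of_noZeroDivisors hδ)

omit hδ [IsDomain R] in
lemma D_unit : IsUnit (algebraMap R D δ) := IsLocalization.Away.algebraMap_isUnit δ

omit hδ [IsDomain R] in
lemma D_surj (z : D) : ∃ n r, z * algebraMap R D δ ^ n = algebraMap R D r := by
  obtain ⟨⟨r, s⟩, h⟩ := IsLocalization.surj (Submonoid.powers δ) z
  obtain ⟨n, hn⟩ := s.2
  refine ⟨n, r, ?_⟩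
  rw [← h, ← map_pow, ← hn]

lemma D_inf (H : Crv f c x y) : Infinite D := by
  have := H.inf
  exact Infinite.of_injective _ (D_inj (D := D) δ hδ)

lemma D_comap_ne {E : Ideal D} (hE : E ≠ ⊥) : E.comap (algebraMap R D) ≠ ⊥ := by
  intro h
  apply hE
  rw [← IsLocalization.map_under (Submonoid.powers δ) D E]
  exact (congrArg (Ideal.map (algebraMap R D)) h).trans Ideal.map_bot

lemma D_inv (H : Crv f c x y) {E : Ideal D} (hE : E ≠ ⊥) :
    ∃ s, δ * s - 1 ∈ E.comap (algebraMap R D) := by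
  set I := E.comap (algebraMap R D) with hI
  have hfin := H.fin_quot (D_comap_ne δ hδ hE)
  let μ : (R ⧸ I) →ₗ[F] (R ⧸ I) := LinearMap.mulLeft F (Ideal.Quotient.mk I δ)
  have hinj : Function.Injective μ := by
    rw [injective_iff_map_eq_zero]
    intro a ha
    obtain ⟨r, rfl⟩ := Ideal.Quotient.mk_surjective a
    rw [LinearMap.mulLeft_apply, ← map_mul, Ideal.Quotient.eq_zero_iff_mem, hI, Ideal.mem_comap,
      map_mul] at ha
    rw [Ideal.Quotient.eq_zero_iff_mem, hI, Ideal.mem_comap]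
    exact (Ideal.unit_mul_mem_iff_mem E (D_unit δ)).mp ha
  have hsurj := LinearMap.injective_iff_surjective.mp hinj
  obtain ⟨a, ha⟩ := hsurj 1
  obtain ⟨s, rfl⟩ := Ideal.Quotient.mk_surjective a
  refine ⟨s, ?_⟩
  rw [← Ideal.Quotient.eq, map_mul, map_one]
  exact ha

lemma D_quot (H : Crv f c x y) {E : Ideal D} (hE : E ≠ ⊥) (z : D) :
    ∃ r : R, z - algebraMap R D r ∈ E := by
  obtain ⟨s, hs⟩ := D_inv δ hδ H hE
  obtain ⟨n, r, h⟩ := D_surj δ z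
  refine ⟨s ^ n * r, ?_⟩
  rw [Ideal.mem_comap] at hs
  rw [← Ideal.Quotient.eq, map_mul, ← h] 
  have h1 : Ideal.Quotient.mk E (algebraMap R D δ) * Ideal.Quotient.mk E (algebraMap R D s) = 1 := by
    rw [← map_mul, ← map_one (Ideal.Quotient.mk E), Ideal.Quotient.eq]
    simpa using hs
  rw [map_pow, map_mul, map_mul, map_pow, map_pow]
  calc _ = Ideal.Quotient.mk E z * (Ideal.Quotient.mk E (algebraMap R D δ) * Ideal.Quotient.mk E (algebraMap R D s)) ^ n := by
        rw [h1]; simp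
    _ = _ := by ring

lemma D_equiv (H : Crv f c x y) {E : Ideal D} (hE : E ≠ ⊥) :
    Nonempty ((R ⧸ E.comap (algebraMap R D)) ≃ₗ[F] (D ⧸ E)) := by
  let φ : (R ⧸ E.comap (algebraMap R D)) →ₐ[F] (D ⧸ E) :=
    Ideal.quotientMapₐ E (IsScalarTower.toAlgHom F R D) le_rfl
  refine ⟨LinearEquiv.ofBijective φ.toLinearMap ⟨?_, ?_⟩⟩
  · exact Ideal.quotientMap_injective
  · intro z
    obtain ⟨z, rfl⟩ := Ideal.Quotient.mk_surjective z
    obtain ⟨r, hr⟩ := D_quot δ hδ H hE z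
    refine ⟨Ideal.Quotient.mk _ r, ?_⟩
    exact (Ideal.Quotient.eq.mpr hr).symm

lemma D_FQ (H : Crv f c x y) : FQ F D := by
  intro E hE
  obtain ⟨e⟩ := D_equiv δ hδ H hE
  have := H.fin_quot (D_comap_ne δ hδ hE)
  exact Module.Finite.equiv e

lemma D_dg (H : Crv f c x y) {E : Ideal D} (hE : E ≠ ⊥) :
    dg F E = Module.finrank F (R ⧸ E.comap (algebraMap R D)) := by
  obtain ⟨e⟩ := D_equiv δ hδ H hE
  exact e.finrank_eq.symm
end PB
end HW

namespace HW
open Polynomial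
section PB2
set_option linter.unusedSectionVars false
variable {F R D : Type*} [Field F] [CommRing R] [CommRing D] [Algebra F R] [Algebra F D]
  [Algebra R D] [IsScalarTower F R D] {f : F[X]} {c : F} {x y : R}
variable (δ : R) (hδ : δ ≠ 0) [IsLocalization.Away δ D] [IsDomain R]
include hδ

lemma local_unif [Finite F] (H : Crv f c x y) (hδd : δ = aeval y (derivative f)) {P : Ideal D}
    (hP : P ≠ ⊥) (hP' : P.IsPrime) :
    ∃ t ∈ P, ∃ u, u ∉ P ∧ ∀ p ∈ P, t ∣ u * p := by
  have hfd : Module.Finite F (D ⧸ P) := D_FQ δ hδ H P hP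
  have hfin : Finite (D ⧸ P) := Module.finite_of_finite F
  have hmax : P.IsMaximal := Ideal.Quotient.maximal_of_isField P (Finite.isField_of_domain _)
  let := Ideal.Quotient.field P
  set X0 : D := algebraMap R D x with hX0
  set Y0 : D := algebraMap R D y with hY0
  set xb : D ⧸ P := Ideal.Quotient.mk P X0 with hxb
  have hintg : IsIntegral F xb := Algebra.IsIntegral.isIntegral xb
  set m := minpoly F xb with hm
  have hirr : Irreducible m := minpoly.irreducible hintg
  have : Fact (Irreducible m) := ⟨hirr⟩
  set t : D := aeval X0 m with ht
  have hmkF : ∀ (I : Ideal D) (g : F[X]) (z : D), Ideal.Quotient.mk I (aeval z g) = aeval (Ideal.Quotient.mk I z) g := by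
    intro I g z
    exact (aeval_algHom_apply (Ideal.Quotient.mkₐ F I) z g).symm
  have htP : t ∈ P := by
    rw [← Ideal.Quotient.eq_zero_iff_mem, ht, hmkF]
    exact minpoly.aeval F xb
  refine ⟨t, htP, ?_⟩
  set T := Ideal.span {t} with hT
  have hTP : T ≤ P := (Ideal.span_singleton_le_iff_mem P).mpr htP
  let π : D ⧸ T →+* D ⧸ P := Ideal.Quotient.factor hTP
  have hπ : ∀ z, π (Ideal.Quotient.mk T z) = Ideal.Quotient.mk P z := fun z => Ideal.Quotient.factor_mk hTP z
  set xt : D ⧸ T := Ideal.Quotient.mk T X0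
  set yt : D ⧸ T := Ideal.Quotient.mk T Y0
  have hxt : aeval xt m = 0 := by
    rw [← hmkF, Ideal.Quotient.eq_zero_iff_mem]
    exact Ideal.mem_span_singleton_self t
  let i : AdjoinRoot m →ₐ[F] (D ⧸ T) := AdjoinRoot.liftAlgHom m (Algebra.ofId F (D ⧸ T)) xt hxt
  let : Algebra (AdjoinRoot m) (D ⧸ T) := i.toRingHom.toAlgebra
  have hst : IsScalarTower F (AdjoinRoot m) (D ⧸ T) :=
    IsScalarTower.of_algebraMap_eq (fun a => (i.commutes a).symm)
  have hrt : algebraMap (AdjoinRoot m) (D ⧸ T) (AdjoinRoot.root m) = xt :=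
    AdjoinRoot.liftAlgHom_root m _ xt hxt
  have hRD : ∀ (r : R) (g : F[X]), aeval (algebraMap R D r) g = algebraMap R D (aeval r g) :=
    fun r g => aeval_algebraMap_apply D r g
  have hrel : aeval xt f * aeval yt f = algebraMap F (D ⧸ T) c := by
    rw [← hmkF, ← hmkF, ← map_mul, hRD, hRD, ← map_mul, H.rel, ← IsScalarTower.algebraMap_apply]
    rfl
  have hne : π (aeval xt f * aeval yt (derivative f)) ≠ 0 := by
    rw [← hmkF, ← hmkF, ← map_mul, hRD, hRD, ← map_mul, hπ, ← hδd]
    have hu : IsUnit (algebraMap R D (aeval x f * δ)) := by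
      rw [map_mul]
      refine IsUnit.mul ?_ (D_unit δ)
      have h1 : IsUnit (algebraMap R D (aeval x f * aeval y f)) := by
        rw [H.rel, ← IsScalarTower.algebraMap_apply]
        exact (isUnit_iff_ne_zero.mpr H.c0).map _
      rw [map_mul] at h1
      exact isUnit_of_mul_isUnit_left h1
    exact (hu.map (Ideal.Quotient.mk P)).ne_zero
  obtain ⟨u', hu', hmul⟩ := local_gen π (AdjoinRoot.root m) xt yt hrt f c hrel hne
  obtain ⟨u, rfl⟩ := Ideal.Quotient.mk_surjective u'
  refine ⟨u, ?_, ?_⟩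
  · rw [hπ] at hu'
    intro h
    exact hu' (Ideal.Quotient.eq_zero_iff_mem.mpr h)
  have hrange : ∀ r : R, ∃ g : (AdjoinRoot m)[X], aeval yt g = Ideal.Quotient.mk T (algebraMap R D r) := by
    intro r
    have hr : r ∈ WW F x y Set.univ := by rw [H.gen]; trivial
    rw [WW] at hr
    induction hr using Submodule.span_induction with
    | mem z hz =>
      obtain ⟨p, _, rfl⟩ := hz
      refine ⟨C (AdjoinRoot.root m) ^ p.1 * X ^ p.2, ?_⟩
      rw [mon, map_mul, map_pow, map_pow, aeval_C, aeval_X, hrt]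
      simp [map_mul, map_pow, xt, yt, hX0, hY0]
    | zero => exact ⟨0, by simp⟩
    | add a b _ _ ha hb =>
      obtain ⟨g1, h1⟩ := ha
      obtain ⟨g2, h2⟩ := hb
      exact ⟨g1 + g2, by rw [map_add, h1, h2, map_add, map_add]⟩
    | smul a b _ hb =>
      obtain ⟨g1, h1⟩ := hb
      refine ⟨C (algebraMap F (AdjoinRoot m) a) * g1, ?_⟩
      rw [map_mul, h1, aeval_C, ← IsScalarTower.algebraMap_apply, Algebra.smul_def, map_mul, map_mul,
        ← IsScalarTower.algebraMap_apply]
      rfl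
  intro p hp
  obtain ⟨n, r, hr⟩ := D_surj δ p
  obtain ⟨g, hg⟩ := hrange r
  have h1 := hmul g (by
    rw [hg, hπ, Ideal.Quotient.eq_zero_iff_mem, ← hr]
    exact Ideal.mul_mem_right _ _ hp)
  rw [hg, ← map_mul, Ideal.Quotient.eq_zero_iff_mem, ← hr, ← mul_assoc, mul_comm,
    Ideal.unit_mul_mem_iff_mem T ((D_unit δ).pow n), hT, Ideal.mem_span_singleton] at h1
  exact h1

lemma D_dedekind [Finite F] (H : Crv f c x y) (hδd : δ = aeval y (derivative f)) :
    IsDedekindDomain D := by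
  have hdom : IsDomain D := D_dom δ hδ
  have hR := H.noeth
  have hnoe : IsNoetherianRing D := IsLocalization.isNoetherianRing (Submonoid.powers δ) D hR
  have : IsDedekindDomainDvr D := 
    { hnoe with
      is_dvr_at_nonzero_prime := by
        intro P hP hP'
        have hnf := IsLocalization.AtPrime.not_isField D hP (Localization.AtPrime P)
        have hN : IsNoetherianRing (Localization.AtPrime P) :=
          IsLocalization.isNoetherianRing P.primeCompl (Localization.AtPrime P) hnoe
        have tf := IsDiscreteValuationRing.TFAE (Localization.AtPrime P) hnf
        refine (tf.out 0 4 : IsDiscreteValuationRing (Localization.AtPrime P) ↔ Submodule.IsPrincipal (IsLocalRing.maximalIdeal (Localization.AtPrime P))).mpr ?_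
        obtain ⟨t, ht, u, hu, h⟩ := local_unif δ hδ H hδd hP hP'
        refine ⟨algebraMap D (Localization.AtPrime P) t, ?_⟩
        rw [← Localization.AtPrime.map_eq_maximalIdeal]
        apply le_antisymm
        · rw [Ideal.map_le_iff_le_comap]
          intro p hp
          obtain ⟨w, hw⟩ := h p hp
          rw [Ideal.mem_comap]
          have hun : IsUnit (algebraMap D (Localization.AtPrime P) u) :=
            IsLocalization.map_units (Localization.AtPrime P) (⟨u, hu⟩ : P.primeCompl)
          rw [← Ideal.unit_mul_mem_iff_mem _ hun, ← map_mul, hw, map_mul]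
          exact Ideal.mul_mem_right _ _ (Ideal.mem_span_singleton_self _)
        · exact (Ideal.span_singleton_le_iff_mem _).mpr (Ideal.mem_map_of_mem _ ht) }
  exact IsDedekindDomainDvr.isDedekindDomain D
end PB2
end HW

namespace HW
open Polynomial
section PB3
set_option linter.unusedSectionVars false
variable {F R D : Type*} [Field F] [CommRing R] [CommRing D] [Algebra F R] [Algebra F D]
  [Algebra R D] [IsScalarTower F R D] {f : F[X]} {c : F} {x y : R}
variable (δ : R) (hδ : δ ≠ 0) [IsLocalization.Away δ D] [IsDomain R]

/-- the counting set -/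
def MR (F : Type*) {R : Type*} [Field F] [CommRing R] [Algebra F R] (x y δ : R) (k : ℕ) : Set R :=
  {t | IsM F x y k t ∧ t - 1 ∈ Ideal.span {δ}}

lemma MR_finite [Finite F] (k : ℕ) : (MR F x y δ k).Finite := by
  have hfin : Finite (WW F x y (box k k)) := Module.finite_of_finite F
  have h1 : ((WW F x y (box k k) : Set R)).Finite := Set.finite_coe_iff.mp hfin
  apply Set.Finite.subset (h1.image (fun v => v + (x ^ k + y ^ k)))
  rintro t ⟨ht, _⟩
  exact ⟨t - (x ^ k + y ^ k), ht, by simp⟩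

include hδ
lemma count_fiber [Finite F] (H : Crv f c x y) {I : Ideal R} (hI : I ≠ ⊥) (s : R) (hs : δ * s - 1 ∈ I)
    {k : ℕ} (hk : f.natDegree ≤ k)
    (hdim : Module.finrank F (R ⧸ I) + Module.finrank F (R ⧸ Ideal.span {δ}) <
      Module.finrank F (WW F x y (box (k + 1 - f.natDegree) k))) :
    (MR F x y δ k ∩ I).ncard * Nat.card F ^ (Module.finrank F (R ⧸ I) +
      Module.finrank F (R ⧸ Ideal.span {δ})) = Nat.card F ^ Module.finrank F (WW F x y (box k k)) := by
  have hfI := H.fin_quot hI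
  have hfδ := H.fin_quot (I := Ideal.span {δ}) (by simpa using hδ)
  let Λ : R →ₗ[F] ((R ⧸ I) × (R ⧸ Ideal.span {δ})) :=
    (Ideal.Quotient.mkₐ F I).toLinearMap.prod (Ideal.Quotient.mkₐ F (Ideal.span {δ})).toLinearMap
  have hΛ : ∀ r, Λ r = (Ideal.Quotient.mk I r, Ideal.Quotient.mk (Ideal.span {δ}) r) := fun r => rfl
  obtain ⟨g, hgV, hg0, hgΛ⟩ : ∃ g ∈ WW F x y (box (k + 1 - f.natDegree) k), g ≠ 0 ∧ Λ g = 0 := by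
    have := LinearMap.ker_ne_bot_of_finrank_lt
      (f := Λ.comp (WW F x y (box (k + 1 - f.natDegree) k)).subtype) (by
        rw [Module.finrank_prod]; exact hdim)
    obtain ⟨v, hv, hv0⟩ := Submodule.exists_mem_ne_zero_of_ne_bot this
    exact ⟨v, v.2, by simpa using hv0, hv⟩
  let L : WW F x y (box k k) →ₗ[F] ((R ⧸ I) × (R ⧸ Ideal.span {δ})) :=
    Λ.comp (WW F x y (box k k)).subtype
  have hLΛ : ∀ v, L v = Λ v := fun v => rfl
  have hsurj : Function.Surjective L := by
    rintro ⟨a, b⟩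
    obtain ⟨a, rfl⟩ := Ideal.Quotient.mk_surjective a
    obtain ⟨b, rfl⟩ := Ideal.Quotient.mk_surjective b
    obtain ⟨z, hz⟩ := H.key hk hg0 hgV (a * (δ * s) + b * (1 - δ * s))
    refine ⟨⟨_, hz⟩, ?_⟩
    rw [hΛ, Prod.mk_eq_zero, Ideal.Quotient.eq_zero_iff_mem, Ideal.Quotient.eq_zero_iff_mem] at hgΛ
    rw [hLΛ, hΛ, Prod.mk.injEq, Ideal.Quotient.eq, Ideal.Quotient.eq]
    constructor
    · have : a * (δ * s) + b * (1 - δ * s) - g * z - a = (a - b) * (δ * s - 1) - z * g := by ring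
      rw [this]
      exact sub_mem (Ideal.mul_mem_left _ _ hs) (Ideal.mul_mem_left _ _ hgΛ.1)
    · have : a * (δ * s) + b * (1 - δ * s) - g * z - b = (a * s - b * s) * δ - z * g := by ring
      rw [this]
      exact sub_mem (Ideal.mul_mem_left _ _ (Ideal.mem_span_singleton_self δ))
        (Ideal.mul_mem_left _ _ hgΛ.2)
  obtain ⟨v₀, hv₀⟩ := hsurj (Ideal.Quotient.mk I (-(x ^ k + y ^ k)),
    Ideal.Quotient.mk (Ideal.span {δ}) (1 - (x ^ k + y ^ k)))
  rw [hLΛ, hΛ, Prod.mk.injEq, Ideal.Quotient.eq, Ideal.Quotient.eq] at hv₀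
  have himg : MR F x y δ k ∩ I = (fun v : LinearMap.ker L => (v.1 : R) + (v₀ + (x ^ k + y ^ k))) '' Set.univ := by
    ext t
    simp only [Set.mem_inter_iff, Set.mem_image, Set.mem_univ, true_and, SetLike.mem_coe]
    constructor
    · rintro ⟨⟨h1, h2⟩, h3⟩
      refine ⟨⟨⟨t - (x ^ k + y ^ k) - v₀, sub_mem h1 v₀.2⟩, ?_⟩, by dsimp only; ring⟩
      rw [LinearMap.mem_ker, hLΛ, hΛ, Prod.mk_eq_zero, Ideal.Quotient.eq_zero_iff_mem,
        Ideal.Quotient.eq_zero_iff_mem]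
      constructor
      · convert sub_mem h3 hv₀.1 using 1
        ring
      · convert sub_mem h2 hv₀.2 using 1
        ring
    · rintro ⟨⟨v, hv⟩, rfl⟩
      rw [LinearMap.mem_ker, hLΛ, hΛ, Prod.mk_eq_zero, Ideal.Quotient.eq_zero_iff_mem,
        Ideal.Quotient.eq_zero_iff_mem] at hv
      refine ⟨⟨?_, ?_⟩, ?_⟩
      · rw [IsM]
        convert add_mem v.2 v₀.2 using 1
        ring
      · convert add_mem hv.2 hv₀.2 using 1
        ring
      · convert add_mem hv.1 hv₀.1 using 1
        ring
  rw [himg, Set.ncard_image_of_injective _ (by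
    intro a b hab
    have h : (a.1 : R) = b.1 := add_right_cancel hab
    exact Subtype.ext (Subtype.ext h)), Set.ncard_univ, Module.natCard_eq_pow_finrank (K := F),
    ← pow_add]
  congr 1
  have h1 := LinearMap.finrank_range_add_finrank_ker L
  rw [LinearMap.range_eq_top.mpr hsurj, finrank_top, Module.finrank_prod] at h1
  omega

lemma comap_M (H : Crv f c x y) {t : R} (ht1 : t - 1 ∈ Ideal.span {δ}) :
    (Ideal.span {algebraMap R D t}).comap (algebraMap R D) = Ideal.span {t} := by
  apply le_antisymm
  · intro r hr
    rw [Ideal.mem_comap, Ideal.mem_span_singleton] at hr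
    obtain ⟨z, hz⟩ := hr
    obtain ⟨n, z', hz'⟩ := D_surj δ z
    have h1 : r * δ ^ n = t * z' := by
      apply D_inj (D := D) δ hδ
      rw [map_mul, map_mul, map_pow, hz, mul_assoc, hz']
    rw [Ideal.mem_span_singleton]
    obtain ⟨w, hw⟩ := Ideal.mem_span_singleton.mp ht1
    have hcop : IsCoprime t (δ ^ n) := by
      apply IsCoprime.pow_right
      exact ⟨1, -w, by linear_combination hw⟩
    exact hcop.dvd_of_dvd_mul_right (Dvd.intro _ h1.symm)
  · rw [Ideal.span_singleton_le_iff_mem, Ideal.mem_comap]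
    exact Ideal.mem_span_singleton_self _

lemma D_symm [Finite F] (H : Crv f c x y) (hδd : δ = aeval y (derivative f)) (k : ℕ)
    (hk : 2 * f.natDegree ≤ k) (n m : ℕ) (hnm : n + m = 2 * f.natDegree * k)
    (hn : 3 * f.natDegree ^ 2 + 1 ≤ n + 2 * f.natDegree)
    (hm : 3 * f.natDegree ^ 2 + 1 ≤ m + 2 * f.natDegree) :
    (AA F D n : ℝ) / (Nat.card F : ℝ) ^ n = AA F D m / (Nat.card F : ℝ) ^ m := by
  classical
  have hded : IsDedekindDomain D := D_dedekind δ hδ H hδd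
  have hinf : Infinite D := D_inf (F := F) (f := f) (c := c) (x := x) (y := y) δ hδ H
  have hFQ : FQ F D := D_FQ δ hδ H
  have hinj := D_inj (D := D) δ hδ
  have hd := H.dpos
  have hφ : Module.finrank F (R ⧸ Ideal.span {δ}) ≤ f.natDegree * (0 + (f.natDegree - 1)) := by
    refine (H.quot_finite hδ (a := 0) (b := f.natDegree - 1) ?_).2
    rw [hδd, aeval_eq_sum_range]
    apply Submodule.sum_mem
    intro i hi
    apply Submodule.smul_mem
    rw [Finset.mem_range] at hi
    have hdd : (derivative f).natDegree < f.natDegree := natDegree_derivative_lt (by omega)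
    have := mon_mem (K := F) (x := x) (y := y) (p := (0, i)) (S := box (0 + 1) (f.natDegree - 1 + 1))
      ⟨by simp, by dsimp only; omega⟩
    simpa [mon] using this
  have hV := H.finrank_V (a := k + 1 - f.natDegree) (b := k) (by omega) (by omega)
  have hVk := H.finrank_V (a := k) (b := k) (by omega) (by omega)
  set φ0 := Module.finrank F (R ⧸ Ideal.span {δ}) with hφ0
  obtain ⟨d', hd'⟩ : ∃ d', f.natDegree = d' + 1 := ⟨f.natDegree - 1, by omega⟩
  obtain ⟨k', hk'⟩ : ∃ k', k = k' + f.natDegree := ⟨k - f.natDegree, by omega⟩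
  have hle : φ0 ≤ Module.finrank F (WW F x y (box k k)) := by
    rw [hd'] at hφ hVk hk
    simp only [Nat.add_sub_cancel, zero_add] at hφ
    nlinarith
  have hrel : ∀ e : ℕ, ∀ e', e + e' = 2 * f.natDegree * k → 3 * f.natDegree ^ 2 + 1 ≤ e' + 2 * f.natDegree →
      ∀ E ∈ JJ F D e, ∀ s : Finset D, (∀ t, t ∈ s ↔ t ∈ ((MR_finite (F := F) (x := x) (y := y) δ k).toFinset.image (algebraMap R D)) ∧ t ∈ E) →
      s.card * Nat.card F ^ e = Nat.card F ^ (Module.finrank F (WW F x y (box k k)) - φ0) := by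
    rintro e e' hee he' E ⟨hE, hEe⟩ s hs
    obtain ⟨z, hz⟩ := D_inv (F := F) (f := f) (c := c) (x := x) (y := y) δ hδ H hE
    rw [D_dg δ hδ H hE] at hEe
    have h1 := count_fiber δ hδ H (D_comap_ne δ hδ hE) z hz (k := k) (by omega) (by
      rw [hEe, ← hφ0]
      have h3 : k + 1 - f.natDegree = k' + 1 := by omega
      rw [h3] at hV ⊢
      rw [hk', hd'] at hV hee
      rw [hd'] at hφ he'
      rw [hk', hd']
      simp only [Nat.add_sub_cancel, zero_add] at hφ
      nlinarith)
    have hsc : s.card = (MR F x y δ k ∩ (E.comap (algebraMap R D))).ncard := by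
      rw [← Set.ncard_image_of_injective _ hinj, ← Set.ncard_coe_finset]
      congr 1
      ext t
      rw [Finset.mem_coe, hs, Finset.mem_image]
      simp only [Set.Finite.mem_toFinset, Set.mem_image, Set.mem_inter_iff, SetLike.mem_coe,
        Ideal.mem_comap]
      constructor
      · rintro ⟨⟨a, h1, rfl⟩, h2⟩; exact ⟨a, ⟨h1, h2⟩, rfl⟩
      · rintro ⟨a, ⟨h1, h2⟩, rfl⟩; exact ⟨⟨a, h1, rfl⟩, h2⟩
    rw [← hsc, hEe, ← hφ0, pow_add, ← mul_assoc] at h1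
    have hq : 0 < Nat.card F := Nat.card_pos
    apply Nat.eq_of_mul_eq_mul_right (pow_pos hq φ0)
    rw [h1, ← pow_add, Nat.sub_add_cancel hle]
  refine symm_count hFQ (Nat.card F) (Module.finrank F (WW F x y (box k k)) - φ0) n
    (2 * f.natDegree * k) rfl
    ((MR_finite (F := F) (x := x) (y := y) δ k).toFinset.image (algebraMap R D)) ?_ m hnm
    (hrel n m hnm hm) (hrel m n (by omega) hn)
  intro t ht
  rw [Finset.mem_image] at ht
  obtain ⟨t, ht, rfl⟩ := ht
  rw [Set.Finite.mem_toFinset] at ht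
  obtain ⟨h1, h2⟩ := ht
  have h3 := H.IsM_ne_zero (by omega) h1
  have h4 : algebraMap R D t ≠ 0 := by rwa [Ne, map_eq_zero_iff _ hinj]
  refine ⟨h4, ?_⟩
  rw [D_dg δ hδ H (by simpa using h4), comap_M δ hδ H h2]
  exact (H.finrank_M (by omega) h1).2
end PB3
end HW

namespace HW
open Polynomial
section PF
set_option linter.unusedSectionVars false

lemma D_hom_ext {F R D S : Type*} [Field F] [CommRing R] [CommRing D] [Algebra F R] [Algebra F D]
    [Algebra R D] [IsScalarTower F R D] {f : F[X]} {c : F} {x y : R} (δ : R)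
    [IsLocalization.Away δ D] [CommRing S] [Algebra F S] (H : Crv f c x y) {φ ψ : D →ₐ[F] S}
    (h1 : φ (algebraMap R D x) = ψ (algebraMap R D x))
    (h2 : φ (algebraMap R D y) = ψ (algebraMap R D y)) : φ = ψ := by
  apply IsLocalization.algHom_ext (A := R) (Submonoid.powers δ)
  exact H.hom_ext h1 h2

lemma frob_alg {F K : Type*} [Field F] [Finite F] [Field K] [Algebra F K] (j : ℕ) :
    ∃ Φ : K →ₐ[F] K, ∀ z, Φ z = z ^ (Nat.card F ^ j) := by
  let : Fintype F := Fintype.ofFinite F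
  refine ⟨FiniteField.frobeniusAlgHom F K ^ j, fun z => ?_⟩
  rw [AlgHom.coe_pow, FiniteField.coe_frobeniusAlgHom, pow_iterate, Nat.card_eq_fintype_card]

lemma hom_points {F K D : Type*} [Field F] [Finite F] [Field K] [Algebra F K] [CommRing D]
    [Algebra F D] (f : F[X]) (c : F) [Algebra (CR f c) D] [IsScalarTower F (CR f c) D]
    [IsLocalization.Away (aeval (cy f c) (derivative f)) D]
    (hd : 1 ≤ f.natDegree) (hc : c ≠ 0) (j : ℕ) :
    {φ : D →ₐ[F] K | ∀ z, φ z ^ (Nat.card F ^ j) = φ z}.ncard =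
      (PT (f.map (algebraMap F K)) (algebraMap F K c) (Nat.card F ^ j)).ncard := by
  have H := cr_crv hd hc
  set δ := aeval (cy f c) (derivative f) with hδ
  obtain ⟨Φ, hΦ⟩ := frob_alg (F := F) (K := K) j
  set X0 : D := algebraMap (CR f c) D (cx f c) with hX0
  set Y0 : D := algebraMap (CR f c) D (cy f c) with hY0
  have hev : ∀ (g : F[X]) (φ : D →ₐ[F] K) (r : CR f c), φ (algebraMap _ D (aeval r g)) =
      eval (φ (algebraMap _ D r)) (g.map (algebraMap F K)) := by
    intro g φ r
    rw [eval_map_algebraMap, aeval_algHom_apply, aeval_algebraMap_apply]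
  apply Set.ncard_congr (fun φ _ => (φ X0, φ Y0))
  · intro φ hφ
    refine ⟨hφ _, hφ _, ?_, ?_⟩
    · dsimp only
      rw [← hev, ← hev, ← map_mul, ← map_mul, H.rel, ← IsScalarTower.algebraMap_apply, AlgHom.commutes]
    · dsimp only
      rw [derivative_map, ← hev, ← hδ]
      exact ((D_unit δ).map φ).ne_zero
  · intro φ ψ _ _ h
    rw [Prod.mk.injEq] at h
    exact D_hom_ext δ H h.1 h.2
  · rintro ⟨a, b⟩ ⟨h1, h2, h3, h4⟩
    dsimp only at h1 h2 h3 h4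
    rw [eval_map_algebraMap, eval_map_algebraMap] at h3
    rw [derivative_map, eval_map_algebraMap] at h4
    obtain ⟨φ, hφ1, hφ2⟩ := cr_lift a b h3
    have hu : ∀ w : Submonoid.powers δ, IsUnit (φ w) := by
      rintro ⟨_, n, rfl⟩
      dsimp only
      rw [map_pow]
      apply IsUnit.pow
      rw [isUnit_iff_ne_zero, hδ, ← aeval_algHom_apply, hφ2]
      exact h4
    let ψ : D →ₐ[F] K := IsLocalization.liftAlgHom (M := Submonoid.powers δ) (f := φ) hu
    have hψ : ∀ r, ψ (algebraMap _ D r) = φ r := fun r => by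
      rw [IsLocalization.liftAlgHom_apply]
      exact IsLocalization.lift_eq _ r
    refine ⟨ψ, ?_, by rw [hψ, hψ, hφ1, hφ2]⟩
    have : Φ.comp ψ = ψ := by
      apply D_hom_ext δ H
      · rw [AlgHom.comp_apply, hψ, hφ1, hΦ, h1]
      · rw [AlgHom.comp_apply, hψ, hφ2, hΦ, h2]
    intro z
    rw [← hΦ]
    exact DFunLike.congr_fun this z

lemma sqrt_pow' (q : ℝ) (h : 0 ≤ q) (n : ℕ) : Real.sqrt (q ^ n) = Real.sqrt q ^ n := by
  rw [Real.sqrt_eq_iff_mul_self_eq (pow_nonneg h n) (pow_nonneg (Real.sqrt_nonneg q) n), ← mul_pow,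
    Real.mul_self_sqrt h]

theorem main {F : Type*} [Field F] [Finite F] (f : F[X]) (c : F) (hc : c ≠ 0) (hs : f.Separable)
    (d : ℕ) (hdd : f.natDegree = d) (hd : 2 ≤ d) (hcard : (2 * d - 1) ^ 4 < Nat.card F) :
    ∃ x y : F, f.eval x * f.eval y = c := by
  have hd1 : 1 ≤ f.natDegree := by omega
  have H := cr_crv hd1 hc
  have hdom := cr_domain hd1 hc hs
  have hδ := delta_ne H hs
  set δ := aeval (cy f c) (derivative f) with hδd
  let D := Localization.Away δ
  let K := AlgebraicClosure F
  have hded : IsDedekindDomain D := D_dedekind δ hδ H hδd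
  have hinf : Infinite D := D_inf (F := F) δ hδ H
  have hFQ : FQ F D := D_FQ δ hδ H
  have hq1 : 1 < Nat.card F := Finite.one_lt_card
  have hA : 0 < (AA F D 1 : ℝ) := by
    obtain ⟨p, hp, a, hpp, hqa⟩ : ∃ p, CharP F p ∧ ∃ a : ℕ+, Nat.Prime p ∧ Nat.card F = p ^ (a : ℕ) := by
      let : Fintype F := Fintype.ofFinite F
      rw [Nat.card_eq_fintype_card]
      exact FiniteField.card' F
    have : Fact p.Prime := ⟨hpp⟩
    have : CharP K p := charP_of_injective_algebraMap (algebraMap F K).injective p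
    refine analytic_main (Nat.card F : ℝ) (by exact_mod_cast hq1) (fun n => AA F D n)
      (fun n => NN hFQ n) (3 * d ^ 2 + 1 - 2 * d) (5 * d ^ 2 * p ^ (d + 1) + d ^ 3) ?_ ?_ ?_ ?_ ?_
    · rw [AA_zero hFQ]; simp
    · intro n
      exact recur hFQ n
    · intro j
      rw [← NN_hom hFQ K (j + 1) (by omega), hom_points f c hd1 hc (j + 1)]
      obtain ⟨Φ, hΦ⟩ := frob_alg (F := F) (K := K) (j + 1)
      have := point_count (K := K) (f := f.map (algebraMap F K)) (c := algebraMap F K c) p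
        (by simpa using hc) hs.map d (by rw [natDegree_map, hdd]) hd (a * (j + 1))
        (Nat.card F ^ (j + 1)) (Nat.mul_pos a.pos (by omega)) (by rw [hqa, pow_mul])
        (by rw [← hΦ, AlgHom.commutes])
        (by
          intro z
          rw [← hΦ, ← hΦ, eval_map_algebraMap, eval_map_algebraMap, aeval_algHom_apply])
      rw [Nat.cast_pow, sqrt_pow' _ (Nat.cast_nonneg _)] at this
      exact this
    · intro N
      refine ⟨2 * d * (N + 2 * d), by nlinarith, ?_⟩
      intro n m hnm hn hm
      have := D_symm (D := D) δ hδ H hδd (N + 2 * d) (by omega) n m (by rw [hdd, hnm])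
        (by rw [hdd]; omega) (by rw [hdd]; omega)
      exact this
    · have h1 : ((2 * (d : ℝ) - 1) ^ 2) ^ 2 < Nat.card F := by
        have : (((2 * d - 1 : ℕ) ^ 4 : ℕ) : ℝ) < Nat.card F := by exact_mod_cast hcard
        rw [Nat.cast_pow, Nat.cast_sub (by omega)] at this
        push_cast at this
        calc _ = (2 * (d : ℝ) - 1) ^ 4 := by ring
          _ < _ := this
      have h2 : (2 * (d : ℝ) - 1) ^ 2 < Real.sqrt (Nat.card F) := Real.lt_sqrt_of_sq_lt h1
      have h3 : ((3 * d ^ 2 + 1 - 2 * d : ℕ) : ℝ) ≤ (2 * (d : ℝ) - 1) ^ 2 := by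
        rw [Nat.cast_sub (by nlinarith)]
        push_cast
        have : (2 : ℝ) ≤ d := by exact_mod_cast hd
        nlinarith
      have h4 : 0 < Real.sqrt (Nat.card F) := Real.sqrt_pos.mpr (by exact_mod_cast (by omega))
      calc _ < Real.sqrt (Nat.card F) * Real.sqrt (Nat.card F) :=
            mul_lt_mul_of_pos_right (h3.trans_lt h2) h4
        _ = _ := Real.mul_self_sqrt (Nat.cast_nonneg _)
  obtain ⟨φ⟩ := exists_hom_of_AA hFQ (fun h => by rw [h] at hA; simp at hA)
  refine ⟨φ (algebraMap _ D (cx f c)), φ (algebraMap _ D (cy f c)), ?_⟩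
  have h := congrArg (fun r => φ (algebraMap _ D r)) H.rel
  rw [← IsScalarTower.algebraMap_apply, AlgHom.commutes, map_mul, map_mul, ← aeval_algebraMap_apply,
    ← aeval_algebraMap_apply, ← aeval_algHom_apply, ← aeval_algHom_apply] at h
  simpa [coe_aeval_eq_eval] using h
end PF
end HW

theorem statement11 (F : Type*) [Field F] [Finite F]
    (f : Polynomial F) (d : ℕ) (hd : f.natDegree = d) (hdeg : 0 < f.degree)
    (hcard : (2 * d - 1) ^ 4 < Nat.card F)
    (hsf : Squarefree (f.map (algebraMap F (AlgebraicClosure F)))) :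
    ∀ c : F, c ≠ 0 → ∃ x y : F, Polynomial.eval x f * Polynomial.eval y f = c := by
  intro c hc
  have hs : f.Separable := by
    rw [← Polynomial.separable_map (algebraMap F (AlgebraicClosure F))]
    exact PerfectField.separable_iff_squarefree.mpr hsf
  have hd1 : 1 ≤ d := by
    rw [← hd]; exact Polynomial.natDegree_pos_iff_degree_pos.mpr hdeg
  rcases Nat.lt_or_ge d 2 with h | h
  · have hd2 : f.natDegree = 1 := by omega
    obtain ⟨a, ha, b, hf⟩ := Polynomial.natDegree_eq_one.mp hd2
    refine ⟨(1 - b) / a, (c - b) / a, ?_⟩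
    rw [← hf]
    simp only [Polynomial.eval_add, Polynomial.eval_mul, Polynomial.eval_C, Polynomial.eval_X]
    field_simp
    ring
  · exact HW.main f c hc hs d hd h hcard
end
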